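/- Let n ≥ 3 and 1 ≤ k ≤ m. A tuple (φ⁰, φ¹, …, φ^k) ∈ (𝒮(T𝕊^{n−1}))^{k+1} belongs to the range of the operator 𝓘^k on 𝒮(S^m) if and only if: (1) φ^ℓ(x,−ξ) = (−1)^{m−ℓ} φ^ℓ(x,ξ) for ℓ = 0,1,…,k; and (2) the function ψ^k ∈ C^∞(ℝⁿ×(ℝⁿ∖{0})) defined by ψ^k(x,ξ) = |ξ|^{m−2k−1} Σ_{r=0}^k (−1)^{k−r} C(k,r) |ξ|^r ⟨ξ,x⟩^{k−r} φ^r(x − (⟨x,ξ⟩/|ξ|²)ξ, ξ/|ξ|) satisfies the iterated John equations (∂²/∂x^{i₁}∂ξ^{j₁} − ∂²/∂x^{j₁}∂ξ^{i₁}) ⋯ (∂²/∂x^{i_{m+1}}∂ξ^{j_{m+1}} − ∂²/∂x^{j_{m+1}}∂ξ^{i_{m+1}}) ψ^k = 0 for all indices 1 ≤ i₁,j₁,…,i_{m+1},j_{m+1} ≤ n. -/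

import Mathlib

noncomputable section

open MeasureTheory Filter
open scoped RealInnerProductSpace BigOperators

/-- `ℝⁿ` with the Euclidean structure. -/
abbrev En (n : ℕ) := EuclideanSpace ℝ (Fin n)

/-- A symmetric `m`-tensor on `ℝⁿ` (pointwise): a family of reals indexed by
`(i₁,…,i_m)`, invariant under permutations of the indices. -/
def IsSymTensor {n m : ℕ} (F : (Fin m → Fin n) → ℝ) : Prop :=
  ∀ (π : Equiv.Perm (Fin m)) (i : Fin m → Fin n), F (i ∘ π) = F i

/-- A symmetric `m`-tensor field on `ℝⁿ`. -/
def IsSymField {n m : ℕ} (f : (Fin m → Fin n) → En n → ℝ) : Prop :=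
  ∀ (π : Equiv.Perm (Fin m)) (i : Fin m → Fin n), f (i ∘ π) = f i

/-- All components of the field are Schwartz functions. -/
def IsSchwartzField {n m : ℕ} (f : (Fin m → Fin n) → En n → ℝ) : Prop :=
  ∀ i, ∃ φ : SchwartzMap (En n) ℝ, ⇑φ = f i

/-- Symmetrization `σ` of a tensor: average over all permutations of the indices. -/
def symz {n m : ℕ} {α : Type*} [AddCommMonoid α] [Module ℝ α]
    (F : (Fin m → Fin n) → α) : (Fin m → Fin n) → α :=
  fun i => ((m.factorial : ℝ))⁻¹ • ∑ π : Equiv.Perm (Fin m), F (i ∘ π)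

/-- The `q`-th momentum ray transform
`(J^q f)(x,ξ) = ∫ t^q f_{i₁…i_m}(x+tξ) ξ^{i₁}⋯ξ^{i_m} dt`, as a function on all of
`ℝⁿ × ℝⁿ`; its restriction to `TSⁿ⁻¹ = {|ξ|=1, ⟨x,ξ⟩=0}` is `I^q f`. -/
def momRT {n m : ℕ} (q : ℕ) (f : (Fin m → Fin n) → En n → ℝ) (x ξ : En n) : ℝ :=
  ∫ t : ℝ, t ^ q * ∑ i : Fin m → Fin n, f i (x + t • ξ) * ∏ r, ξ (i r)

/-- Coordinate partial derivative `∂/∂x^j`. -/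
def pd {n : ℕ} (j : Fin n) (u : En n → ℝ) : En n → ℝ :=
  fun x => fderiv ℝ u x (EuclideanSpace.single j 1)

/-- Inner differentiation (symmetrized derivative) `d`. -/
def dsym {n m : ℕ} (u : (Fin m → Fin n) → En n → ℝ) :
    (Fin (m + 1) → Fin n) → En n → ℝ :=
  symz (fun i => pd (i (Fin.last m)) (u (fun s => i s.castSucc)))

/-- Iterated inner differentiation `d^k`. -/
def dpow {n m : ℕ} : (k : ℕ) → ((Fin m → Fin n) → En n → ℝ) →
    (Fin (m + k) → Fin n) → En n → ℝ
  | 0, u => u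
  | k + 1, u => dsym (dpow k u)

/-- Divergence `δ`. -/
def divg {n m : ℕ} (u : (Fin (m + 1) → Fin n) → En n → ℝ) :
    (Fin m → Fin n) → En n → ℝ :=
  fun i x => ∑ j : Fin n, pd j (u (Fin.snoc i j)) x

/-- Iterated divergence `δ^k`. -/
def divpow {n : ℕ} : (k : ℕ) → {p : ℕ} → ((Fin (p + k) → Fin n) → En n → ℝ) →
    (Fin p → Fin n) → En n → ℝ
  | 0, _, u => u
  | k + 1, _, u => divpow k (divg u)

/-- Partial derivative `∂/∂x^j` in the first slot of a function of `(x, ξ)`. -/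
def pdx {n : ℕ} (j : Fin n) (F : En n → En n → ℝ) : En n → En n → ℝ :=
  fun x ξ => fderiv ℝ (fun x' => F x' ξ) x (EuclideanSpace.single j 1)

/-- Partial derivative `∂/∂ξ^j` in the second slot of a function of `(x, ξ)`. -/
def pdxi {n : ℕ} (j : Fin n) (F : En n → En n → ℝ) : En n → En n → ℝ :=
  fun x ξ => fderiv ℝ (fun ξ' => F x ξ') ξ (EuclideanSpace.single j 1)

/-- Iterated `∂x` derivatives along a list of indices. -/
def pdxList {n : ℕ} (l : List (Fin n)) (F : En n → En n → ℝ) : En n → En n → ℝ :=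
  l.foldr pdx F

/-- Iterated `∂ξ` derivatives along a list of indices. -/
def pdxiList {n : ℕ} (l : List (Fin n)) (F : En n → En n → ℝ) : En n → En n → ℝ :=
  l.foldr pdxi F

/-- The John operator `J_{ij} = ∂²/∂x^i∂ξ^j − ∂²/∂x^j∂ξ^i`. -/
def johnOp {n : ℕ} (i j : Fin n) (F : En n → En n → ℝ) : En n → En n → ℝ :=
  fun x ξ => pdx i (pdxi j F) x ξ - pdx j (pdxi i F) x ξ

/-- Iterated John operators `J_{i₁j₁} ⋯ J_{i_r j_r}`. -/
def johnIter {n : ℕ} (l : List (Fin n × Fin n)) (F : En n → En n → ℝ) : En n → En n → ℝ :=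
  l.foldr (fun ij G => johnOp ij.1 ij.2 G) F

/-- Sharafutdinov's Schwartz space `𝒮(TSⁿ⁻¹)`: a function on
`TSⁿ⁻¹ = {(x,ξ) : |ξ|=1, ⟨x,ξ⟩=0}` is Schwartz iff it is the restriction of a
Schwartz function on `ℝⁿ × ℝⁿ`. -/
def IsSchwartzOnTS {n : ℕ} (φ : En n → En n → ℝ) : Prop :=
  ∃ Φ : SchwartzMap (En n × En n) ℝ, ∀ x ξ : En n, ‖ξ‖ = 1 → ⟪x, ξ⟫ = 0 → φ x ξ = Φ (x, ξ)

/-- Symmetric multiplication `i_{x^{⊗k}} : S^m → S^{m+k}`. -/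
def iPowTens {n m k : ℕ} (x : En n) (V : (Fin m → Fin n) → ℝ) :
    (Fin (m + k) → Fin n) → ℝ :=
  symz (fun i => (∏ r : Fin k, x (i (Fin.natAdd m r))) * V (fun s => i (Fin.castAdd k s)))

/-- Convolution (contraction) `j_{x^{⊗k}} : S^{m+k} → S^m`. -/
def jPowTens {n m k : ℕ} (x : En n) (F : (Fin (m + k) → Fin n) → ℝ) :
    (Fin m → Fin n) → ℝ :=
  fun i => ∑ j : Fin k → Fin n, (∏ r, x (j r)) * F (Fin.append i j)

section
open scoped SchwartzMap FourierTransform ContDiff Topology LineDeriv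

/-- Tensor product of two Schwartz functions. -/
theorem exists_tensor {V W : Type*} [NormedAddCommGroup V] [NormedSpace ℝ V]
    [NormedAddCommGroup W] [NormedSpace ℝ W] (f : 𝓢(V, ℝ)) (g : 𝓢(W, ℝ)) :
    ∃ h : 𝓢(V × W, ℝ), ∀ a b, h (a, b) = f a * g b := by
  have hf : ContDiff ℝ ∞ (fun p : V × W => f p.1) := (f.smooth ⊤).comp contDiff_fst
  have hg : ContDiff ℝ ∞ (fun p : V × W => g p.2) := (g.smooth ⊤).comp contDiff_snd
  refine ⟨⟨fun p => f p.1 * g p.2, hf.mul hg, ?_⟩, fun a b => rfl⟩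
  intro k N
  choose C hC using fun (a b : ℕ) => f.decay a b
  choose D hD using fun (a b : ℕ) => g.decay a b
  refine ⟨∑ i ∈ Finset.range (N + 1), (N.choose i : ℝ) *
    (C k i * D 0 (N - i) + C 0 i * D k (N - i)), ?_⟩
  rintro ⟨a, b⟩
  have h1 := norm_iteratedFDeriv_mul_le (𝕜 := ℝ) hf hg (a, b) (n := N) (mod_cast le_top)
  have hfst : ∀ i, ‖iteratedFDeriv ℝ i (fun p : V × W => f p.1) (a, b)‖ ≤
      ‖iteratedFDeriv ℝ i f a‖ := by
    intro i
    have h := (ContinuousLinearMap.fst ℝ V W).iteratedFDeriv_comp_right (f.smooth ⊤) (a, b)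
      (i := i) (mod_cast le_top)
    change ‖iteratedFDeriv ℝ i (⇑f ∘ ⇑(ContinuousLinearMap.fst ℝ V W)) (a, b)‖ ≤ _
    rw [h]
    refine (ContinuousMultilinearMap.norm_compContinuousLinearMap_le _ _).trans ?_
    refine mul_le_of_le_one_right (norm_nonneg _) ?_
    exact Finset.prod_le_one (fun _ _ => norm_nonneg _)
      (fun _ _ => ContinuousLinearMap.norm_fst_le ..)
  have hsnd : ∀ i, ‖iteratedFDeriv ℝ i (fun p : V × W => g p.2) (a, b)‖ ≤
      ‖iteratedFDeriv ℝ i g b‖ := by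
    intro i
    have h := (ContinuousLinearMap.snd ℝ V W).iteratedFDeriv_comp_right (g.smooth ⊤) (a, b)
      (i := i) (mod_cast le_top)
    change ‖iteratedFDeriv ℝ i (⇑g ∘ ⇑(ContinuousLinearMap.snd ℝ V W)) (a, b)‖ ≤ _
    rw [h]
    refine (ContinuousMultilinearMap.norm_compContinuousLinearMap_le _ _).trans ?_
    refine mul_le_of_le_one_right (norm_nonneg _) ?_
    exact Finset.prod_le_one (fun _ _ => norm_nonneg _)
      (fun _ _ => ContinuousLinearMap.norm_snd_le ..)
  have hk : ‖((a, b) : V × W)‖ ^ k ≤ ‖a‖ ^ k + ‖b‖ ^ k := by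
    rw [Prod.norm_mk]
    rcases max_cases ‖a‖ ‖b‖ with h | h <;> rw [h.1] <;> simp
  calc ‖((a, b) : V × W)‖ ^ k * _ ≤ (‖a‖ ^ k + ‖b‖ ^ k) * ∑ i ∈ Finset.range (N + 1),
        (N.choose i : ℝ) * ‖iteratedFDeriv ℝ i f a‖ * ‖iteratedFDeriv ℝ (N - i) g b‖ := by
        refine mul_le_mul hk (h1.trans ?_) (norm_nonneg _) (by positivity)
        gcongr with i hi
        · exact hfst i
        · exact hsnd _
    _ = ∑ i ∈ Finset.range (N + 1), (N.choose i : ℝ) *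
        ((‖a‖ ^ k * ‖iteratedFDeriv ℝ i f a‖) * (‖b‖ ^ 0 * ‖iteratedFDeriv ℝ (N - i) g b‖) +
        (‖a‖ ^ 0 * ‖iteratedFDeriv ℝ i f a‖) * (‖b‖ ^ k * ‖iteratedFDeriv ℝ (N - i) g b‖)) := by
        rw [Finset.mul_sum]
        refine Finset.sum_congr rfl fun i _ => ?_
        ring
    _ ≤ _ := by
        gcongr with i hi
        · exact (hC k i).1.le
        · exact (hC _ _).2 _
        · exact (hD _ _).2 _
        · exact (hC 0 i).1.le
        · exact (hC _ _).2 _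
        · exact (hD _ _).2 _

theorem clm_eq_sum {n : ℕ} {F : Type*} [NormedAddCommGroup F] [NormedSpace ℝ F]
    (L : En n →L[ℝ] F) (v : En n) :
    L v = ∑ j, v j • L (EuclideanSpace.single j 1) := by
  conv_lhs => rw [← (EuclideanSpace.basisFun (Fin n) ℝ).sum_repr v]
  simp

/-- Principle A: coinductive regularity. -/
theorem principleA {n : ℕ} {F : Type*} [NormedAddCommGroup F] [NormedSpace ℝ F]
    (C : Set (En n → F))
    (h1 : ∀ g ∈ C, ∃ g' : En n → (En n →L[ℝ] F), (∀ y, HasFDerivAt g (g' y) y) ∧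
      ∀ j, (fun y => g' y (EuclideanSpace.single j 1)) ∈ C) (p : ℕ)
    (h2 : ∀ g ∈ C, ∃ K : ℝ, ∀ y, ‖y‖ ^ p * ‖g y‖ ≤ K) (N : ℕ) :
    ∀ g ∈ C, ContDiff ℝ N g ∧ ∃ K : ℝ, ∀ y, ‖y‖ ^ p * ‖iteratedFDeriv ℝ N g y‖ ≤ K := by
  induction N with
  | zero =>
    intro g hg
    obtain ⟨g', hg', -⟩ := h1 g hg
    refine ⟨?_, ?_⟩
    · rw [Nat.cast_zero, contDiff_zero]
      exact continuous_iff_continuousAt.2 fun y => (hg' y).continuousAt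
    · simpa using h2 g hg
  | succ N ih =>
    intro g hg
    obtain ⟨g', hg', hC⟩ := h1 g hg
    have hfd : fderiv ℝ g = fun y => ∑ j, (ContinuousLinearMap.smulRightL ℝ (En n) F
        (EuclideanSpace.proj j : En n →L[ℝ] ℝ)) (g' y (EuclideanSpace.single j 1)) := by
      funext y
      rw [(hg' y).fderiv]
      ext v
      rw [clm_eq_sum (g' y) v]
      simp
    have hcd : ∀ j, ContDiff ℝ N (fun y => (ContinuousLinearMap.smulRightL ℝ (En n) F
        (EuclideanSpace.proj j : En n →L[ℝ] ℝ)) (g' y (EuclideanSpace.single j 1))) := fun j =>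
      (ContinuousLinearMap.contDiff _).comp (ih _ (hC j)).1
    refine ⟨?_, ?_⟩
    · rw [show ((N + 1 : ℕ) : WithTop ℕ∞) = (N : WithTop ℕ∞) + 1 by push_cast; rfl,
        contDiff_succ_iff_fderiv]
      refine ⟨fun y => (hg' y).differentiableAt, by simp, ?_⟩
      rw [hfd]
      exact ContDiff.sum fun j _ => hcd j
    · choose K hK using fun j => (ih _ (hC j)).2
      refine ⟨∑ j, ‖ContinuousLinearMap.smulRightL ℝ (En n) F
        (EuclideanSpace.proj j : En n →L[ℝ] ℝ)‖ * K j, fun y => ?_⟩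
      rw [← norm_iteratedFDeriv_fderiv, hfd, iteratedFDeriv_fun_sum_apply
        (fun j _ => (hcd j).contDiffAt)]
      refine (mul_le_mul_of_nonneg_left (norm_sum_le _ _) (by positivity)).trans ?_
      rw [Finset.mul_sum]
      refine Finset.sum_le_sum fun j _ => ?_
      have := (ContinuousLinearMap.smulRightL ℝ (En n) F
        (EuclideanSpace.proj j : En n →L[ℝ] ℝ)).norm_iteratedFDeriv_comp_left
        ((ih _ (hC j)).1.contDiffAt (x := y)) (n := N) le_rfl
      refine (mul_le_mul_of_nonneg_left this (by positivity)).trans ?_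
      rw [mul_left_comm]
      exact mul_le_mul_of_nonneg_left (hK j y) (norm_nonneg _)

/-- Locally (in `ξ ≠ 0`) Schwartz functions. -/
def LS {n : ℕ} (u : En n → En n → ℝ) : Prop :=
  ∀ ξ0 : En n, ξ0 ≠ 0 → ∃ U : 𝓢(En n × En n, ℝ), ∀ᶠ ξ in 𝓝 ξ0, ∀ x, u x ξ = U (x, ξ)

/-- Locally (in `ξ ≠ 0`) of temperate growth. -/
def LTemp {n : ℕ} (g : En n → En n → ℝ) : Prop :=
  ∀ ξ0 : En n, ξ0 ≠ 0 → ∃ G : En n × En n → ℝ, G.HasTemperateGrowth ∧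
    ∀ᶠ ξ in 𝓝 ξ0, ∀ x, g x ξ = G (x, ξ)

section
variable {n : ℕ}

theorem LS.add {u v : En n → En n → ℝ} (hu : LS u) (hv : LS v) :
    LS (fun x ξ => u x ξ + v x ξ) := by
  intro ξ0 h0
  obtain ⟨U, hU⟩ := hu ξ0 h0
  obtain ⟨V, hV⟩ := hv ξ0 h0
  refine ⟨U + V, ?_⟩
  filter_upwards [hU, hV] with ξ h1 h2 x
  simp [h1, h2]

theorem LS.sub {u v : En n → En n → ℝ} (hu : LS u) (hv : LS v) :
    LS (fun x ξ => u x ξ - v x ξ) := by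
  intro ξ0 h0
  obtain ⟨U, hU⟩ := hu ξ0 h0
  obtain ⟨V, hV⟩ := hv ξ0 h0
  refine ⟨U - V, ?_⟩
  filter_upwards [hU, hV] with ξ h1 h2 x
  simp [h1, h2]

theorem LS.mulLTemp {g u : En n → En n → ℝ} (hg : LTemp g) (hu : LS u) :
    LS (fun x ξ => g x ξ * u x ξ) := by
  intro ξ0 h0
  obtain ⟨U, hU⟩ := hu ξ0 h0
  obtain ⟨G, hG, hG'⟩ := hg ξ0 h0
  refine ⟨SchwartzMap.smulLeftCLM ℝ G U, ?_⟩
  filter_upwards [hU, hG'] with ξ h1 h2 x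
  rw [SchwartzMap.smulLeftCLM_apply_apply hG, h1, h2, smul_eq_mul]

theorem LTemp.mul {g u : En n → En n → ℝ} (hg : LTemp g) (hu : LTemp u) :
    LTemp (fun x ξ => g x ξ * u x ξ) := by
  intro ξ0 h0
  obtain ⟨U, hU, hU'⟩ := hu ξ0 h0
  obtain ⟨G, hG, hG'⟩ := hg ξ0 h0
  refine ⟨_, hG.mul hU, ?_⟩
  filter_upwards [hU', hG'] with ξ h1 h2 x
  simp [h1, h2]

theorem LTemp.pow {g : En n → En n → ℝ} (hg : LTemp g) (k : ℕ) :
    LTemp (fun x ξ => g x ξ ^ k) := by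
  intro ξ0 h0
  obtain ⟨G, hG, hG'⟩ := hg ξ0 h0
  refine ⟨_, hG.pow k, ?_⟩
  filter_upwards [hG'] with ξ h2 x
  simp [h2]

theorem LTemp.of_global {G : En n × En n → ℝ} (hG : G.HasTemperateGrowth) :
    LTemp (fun x ξ => G (x, ξ)) := fun _ _ => ⟨G, hG, Eventually.of_forall fun _ _ => rfl⟩

theorem LTemp.const (c : ℝ) : LTemp (fun _ _ : En n => c) := LTemp.of_global (.const c)

theorem LS.const_mul {u : En n → En n → ℝ} (hu : LS u) (c : ℝ) :
    LS (fun x ξ => c * u x ξ) := LS.mulLTemp (LTemp.const c) hu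

theorem LTemp.xi (j : Fin n) : LTemp (fun _ ξ : En n => ξ j) :=
  LTemp.of_global (G := fun p => ((EuclideanSpace.proj j : En n →L[ℝ] ℝ).comp
    (ContinuousLinearMap.snd ℝ (En n) (En n))) p) (ContinuousLinearMap.hasTemperateGrowth _)

theorem LTemp.inner_const (v : En n) : LTemp (fun x _ : En n => (⟪x, v⟫ : ℝ)) :=
  LTemp.of_global (G := fun p => (⟪p.1, v⟫ : ℝ)) ((Function.hasTemperateGrowth_inner_left v).comp
    (ContinuousLinearMap.fst ℝ (En n) (En n)).hasTemperateGrowth)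

theorem LTemp.inner : LTemp (fun x ξ : En n => (⟪x, ξ⟫ : ℝ)) := by
  refine LTemp.of_global (G := fun p => (⟪p.1, p.2⟫ : ℝ)) ?_
  exact (innerSL ℝ (E := En n)).bilinear_hasTemperateGrowth
    (ContinuousLinearMap.fst ℝ (En n) (En n)).hasTemperateGrowth
    (ContinuousLinearMap.snd ℝ (En n) (En n)).hasTemperateGrowth

/-- A bump near `ξ0 ≠ 0` vanishing near zero. -/
theorem exists_bump (ξ0 : En n) (h0 : ξ0 ≠ 0) : ∃ β : En n → ℝ, ContDiff ℝ ∞ β ∧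
    HasCompactSupport β ∧ (∀ ξ, 0 ≤ β ξ) ∧ (∀ ξ, β ξ ≤ 1) ∧ (∀ᶠ ξ in 𝓝 ξ0, β ξ = 1) ∧
    (∀ᶠ ξ in 𝓝 0, β ξ = 0) := by
  have hp : 0 < ‖ξ0‖ := norm_pos_iff.2 h0
  let b : ContDiffBump ξ0 := ⟨‖ξ0‖ / 4, ‖ξ0‖ / 2, by positivity, by linarith⟩
  refine ⟨b, b.contDiff, b.hasCompactSupport, fun _ => b.nonneg, fun _ => b.le_one,
    b.eventuallyEq_one, ?_⟩
  have : (0 : En n) ∉ tsupport b := by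
    rw [b.tsupport_eq, Metric.mem_closedBall, dist_eq_norm]
    simp only [zero_sub, norm_neg, not_le, b]
    linarith
  exact notMem_tsupport_iff_eventuallyEq.1 this

theorem bump_mul_contDiff {F : Type*} [NormedAddCommGroup F] [NormedSpace ℝ F]
    {β : En n → ℝ} (hβ : ContDiff ℝ ∞ β) (hβ0 : ∀ᶠ ξ in 𝓝 0, β ξ = 0)
    {h : En n → F} (hh : ∀ ξ, ξ ≠ 0 → ContDiffAt ℝ ∞ h ξ) :
    ContDiff ℝ ∞ (fun ξ => β ξ • h ξ) := by
  rw [contDiff_iff_contDiffAt]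
  intro ξ
  by_cases hξ : ξ = 0
  · subst hξ
    refine (contDiffAt_const (c := (0 : F))).congr_of_eventuallyEq ?_
    filter_upwards [hβ0] with ξ h
    simp [h]
  · exact hβ.contDiffAt.smul (hh ξ hξ)

theorem LTemp.of_xi {h : En n → ℝ} (hh : ∀ ξ, ξ ≠ 0 → ContDiffAt ℝ ∞ h ξ) :
    LTemp (fun _ ξ => h ξ) := by
  intro ξ0 h0
  obtain ⟨β, hβ, hc, -, -, h1, hz⟩ := exists_bump ξ0 h0
  have hs := bump_mul_contDiff hβ hz hh
  have hcs : HasCompactSupport (fun ξ => β ξ • h ξ) := hc.smul_right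
  refine ⟨fun p => β p.2 • h p.2, (hcs.hasTemperateGrowth hs).comp
    (ContinuousLinearMap.snd ℝ (En n) (En n)).hasTemperateGrowth, ?_⟩
  filter_upwards [h1] with ξ h x
  simp [h]

theorem LTemp.norm_zpow (d : ℤ) : LTemp (fun _ ξ : En n => ‖ξ‖ ^ d) := by
  refine LTemp.of_xi fun ξ hξ => ?_
  have h := contDiffAt_norm ℝ hξ (n := ∞)
  rcases d with d | d
  · simpa using h.pow d
  · simp only [zpow_negSucc]
    exact (h.pow (d + 1)).inv (by simpa using hξ)

theorem LS.slice {u : En n → En n → ℝ} (hu : LS u) {ξ : En n} (hξ : ξ ≠ 0) :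
    ∃ s : 𝓢(En n, ℝ), ∀ x, s x = u x ξ := by
  obtain ⟨U, hU⟩ := hu ξ hξ
  have hg : (fun x : En n => (x, ξ)).HasTemperateGrowth := by
    have := (ContinuousLinearMap.inl ℝ (En n) (En n)).hasTemperateGrowth.add
      (Function.HasTemperateGrowth.const ((0, ξ) : En n × En n))
    convert this using 2
    simp
  refine ⟨SchwartzMap.compCLM ℝ hg ⟨1, 1, fun x => ?_⟩ U, fun x => ?_⟩
  · have : ‖x‖ ≤ ‖((x, ξ) : En n × En n)‖ := le_max_left _ _
    simp only [pow_one, one_mul]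
    linarith
  · rw [hU.self_of_nhds x]; rfl

theorem hasFDerivAt_left (U : 𝓢(En n × En n, ℝ)) (x ξ : En n) :
    HasFDerivAt (fun x' => U (x', ξ))
      ((fderiv ℝ U (x, ξ)).comp (ContinuousLinearMap.inl ℝ (En n) (En n))) x :=
  (U.differentiableAt.hasFDerivAt).comp x (hasFDerivAt_prodMk_left x ξ)

theorem hasFDerivAt_right (U : 𝓢(En n × En n, ℝ)) (x ξ : En n) :
    HasFDerivAt (fun ξ' => U (x, ξ'))
      ((fderiv ℝ U (x, ξ)).comp (ContinuousLinearMap.inr ℝ (En n) (En n))) ξ :=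
  (U.differentiableAt.hasFDerivAt).comp ξ (hasFDerivAt_prodMk_right x ξ)

theorem pdx_eq {u : En n → En n → ℝ} {U : 𝓢(En n × En n, ℝ)} {ξ : En n}
    (h : ∀ x, u x ξ = U (x, ξ)) (j : Fin n) (x : En n) :
    pdx j u x ξ = (∂_{((EuclideanSpace.single j 1, 0) : En n × En n)} U) (x, ξ) := by
  unfold pdx
  rw [show (fun x' => u x' ξ) = fun x' => U (x', ξ) from funext h,
    (hasFDerivAt_left U x ξ).fderiv, SchwartzMap.lineDerivOp_apply_eq_fderiv]
  simp

theorem pdxi_eq {u : En n → En n → ℝ} {U : 𝓢(En n × En n, ℝ)} {ξ : En n}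
    (h : ∀ᶠ ξ' in 𝓝 ξ, ∀ x, u x ξ' = U (x, ξ')) (j : Fin n) (x : En n) :
    pdxi j u x ξ = (∂_{((0, EuclideanSpace.single j 1) : En n × En n)} U) (x, ξ) := by
  unfold pdxi
  have : (fun ξ' => u x ξ') =ᶠ[𝓝 ξ] fun ξ' => U (x, ξ') := h.mono fun ξ' h' => h' x
  rw [this.fderiv_eq, (hasFDerivAt_right U x ξ).fderiv, SchwartzMap.lineDerivOp_apply_eq_fderiv]
  simp

theorem LS.pdx {u : En n → En n → ℝ} (hu : LS u) (j : Fin n) : LS (pdx j u) := by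
  intro ξ0 h0
  obtain ⟨U, hU⟩ := hu ξ0 h0
  refine ⟨∂_{((EuclideanSpace.single j 1, 0) : En n × En n)} U, ?_⟩
  · filter_upwards [hU] with ξ h x
    exact pdx_eq h j x

theorem LS.pdxi {u : En n → En n → ℝ} (hu : LS u) (j : Fin n) : LS (pdxi j u) := by
  intro ξ0 h0
  obtain ⟨U, hU⟩ := hu ξ0 h0
  refine ⟨∂_{((0, EuclideanSpace.single j 1) : En n × En n)} U, ?_⟩
  · filter_upwards [hU.eventually_nhds] with ξ h x
    exact pdxi_eq h j x

theorem LS.john {u : En n → En n → ℝ} (hu : LS u) (i j : Fin n) : LS (johnOp i j u) :=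
  LS.sub ((hu.pdxi j).pdx i) ((hu.pdxi i).pdx j)

theorem LS.johnIter {u : En n → En n → ℝ} (hu : LS u) (l : List (Fin n × Fin n)) :
    LS (johnIter l u) := by
  induction l with
  | nil => exact hu
  | cons a l ih => exact ih.john a.1 a.2

theorem LS.diff_left {u : En n → En n → ℝ} (hu : LS u) {ξ : En n} (hξ : ξ ≠ 0) (x : En n) :
    DifferentiableAt ℝ (fun x' => u x' ξ) x := by
  obtain ⟨s, hs⟩ := hu.slice hξ
  rw [show (fun x' => u x' ξ) = s from funext fun x => (hs x).symm]
  exact s.differentiableAt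

theorem LS.diff_right {u : En n → En n → ℝ} (hu : LS u) {ξ : En n} (hξ : ξ ≠ 0) (x : En n) :
    DifferentiableAt ℝ (fun ξ' => u x ξ') ξ := by
  obtain ⟨U, hU⟩ := hu ξ hξ
  exact (hasFDerivAt_right U x ξ).differentiableAt.congr_of_eventuallyEq
    (hU.mono fun ξ' h' => h' x)

theorem pdx_slice {u : En n → En n → ℝ} {ξ : En n} {s : 𝓢(En n, ℝ)} (hs : ∀ x, s x = u x ξ)
    (i : Fin n) (x : En n) :
    pdx i u x ξ = (∂_{(EuclideanSpace.single i 1 : En n)} s) x := by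
  unfold pdx
  rw [show (fun x' => u x' ξ) = s from funext fun x => (hs x).symm,
      SchwartzMap.lineDerivOp_apply_eq_fderiv]

theorem schwartz_deriv_comm {F : Type*} [NormedAddCommGroup F] [NormedSpace ℝ F]
    (s : 𝓢(En n, F)) (v w x : En n) : (∂_{v} (∂_{w} s)) x = (∂_{w} (∂_{v} s)) x := by
  have h : ∀ v w : En n, (∂_{v} (∂_{w} s)) x = fderiv ℝ (fderiv ℝ s) x v w := by
    intro v w
    rw [SchwartzMap.lineDerivOp_apply_eq_fderiv]
    have h1 : (⇑(∂_{w} s : 𝓢(En n, F)) : En n → F) = fun x => fderiv ℝ s x w :=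
      funext fun x => SchwartzMap.lineDerivOp_apply_eq_fderiv ..
    have h2 : DifferentiableAt ℝ (fderiv ℝ s) x :=
      ((s.smooth 2).fderiv_right (m := 1) (by norm_num)).differentiable (by simp) x
    rw [h1, fderiv_clm_apply h2 (differentiableAt_const w)]
    simp
  rw [h, h]
  exact (s.smooth 2).contDiffAt.isSymmSndFDerivAt (by simp) v w

theorem pdx_pdx_comm {u : En n → En n → ℝ} (hu : LS u) {ξ : En n} (hξ : ξ ≠ 0) (i j : Fin n)
    (x : En n) : pdx i (pdx j u) x ξ = pdx j (pdx i u) x ξ := by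
  obtain ⟨s, hs⟩ := hu.slice hξ
  rw [pdx_slice (fun x => (pdx_slice hs j x).symm), pdx_slice (fun x => (pdx_slice hs i x).symm),
    schwartz_deriv_comm]

end

/-- Moment ray transform of a general function of `(x, ξ)`. -/
def Jt {n : ℕ} (q : ℕ) (u : En n → En n → ℝ) (x ξ : En n) : ℝ :=
  ∫ t : ℝ, t ^ q * u (x + t • ξ) ξ

section
variable {n : ℕ}

theorem schwartz_bound {V F : Type*} [NormedAddCommGroup V] [NormedSpace ℝ V]
    [NormedAddCommGroup F] [NormedSpace ℝ F] (g : 𝓢(V, F)) (k : ℕ) :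
    ∃ C : ℝ, 0 ≤ C ∧ ∀ z, (1 + ‖z‖) ^ k * ‖g z‖ ≤ C := by
  refine ⟨2 ^ k * ((Finset.Iic (k, 0)).sup fun m => SchwartzMap.seminorm ℝ m.1 m.2) g,
    by positivity, fun z => ?_⟩
  simpa using SchwartzMap.one_add_le_sup_seminorm_apply (𝕜 := ℝ) (m := (k, 0)) le_rfl le_rfl g z

theorem line_bound {x ξ : En n} {R δ : ℝ} (hδ : 0 < δ) (hx : ‖x‖ ≤ R) (hξ : δ ≤ ‖ξ‖) (t : ℝ) :
    1 + |t| ≤ (1 + (1 + R) / δ) * (1 + ‖x + t • ξ‖) := by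
  have hR : 0 ≤ R := (norm_nonneg _).trans hx
  have h1 : |t| * ‖ξ‖ ≤ ‖x + t • ξ‖ + ‖x‖ := by
    have := norm_sub_le (x + t • ξ) x
    simpa [norm_smul] using this
  have h2 : |t| * δ ≤ ‖x + t • ξ‖ + R :=
    (mul_le_mul_of_nonneg_left hξ (abs_nonneg t)).trans (h1.trans (by linarith))
  have h3 : |t| ≤ (‖x + t • ξ‖ + R) / δ := by rwa [le_div_iff₀ hδ]
  have h4 : (‖x + t • ξ‖ + R) / δ ≤ (1 + R) / δ * (1 + ‖x + t • ξ‖) := by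
    rw [div_mul_eq_mul_div]
    gcongr
    nlinarith [norm_nonneg (x + t • ξ)]
  nlinarith [norm_nonneg (x + t • ξ)]

/-- Restriction of a Schwartz function to a line. -/
theorem exists_line {F : Type*} [NormedAddCommGroup F] [NormedSpace ℝ F] (s : 𝓢(En n, F))
    (x : En n) {ξ : En n} (hξ : ξ ≠ 0) : ∃ r : 𝓢(ℝ, F), ∀ t, r t = s (x + t • ξ) := by
  have hg : (fun t : ℝ => x + t • ξ).HasTemperateGrowth :=
    (Function.HasTemperateGrowth.const x).add
      (ContinuousLinearMap.toSpanSingleton ℝ ξ).hasTemperateGrowth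
  refine ⟨SchwartzMap.compCLM ℝ hg ⟨1, 1 + (1 + ‖x‖) / ‖ξ‖, fun t => ?_⟩ s, fun t => rfl⟩
  have := line_bound (norm_pos_iff.2 hξ) (le_refl ‖x‖) (le_refl ‖ξ‖) t
  rw [pow_one, Real.norm_eq_abs]
  linarith

theorem tg_pow (q : ℕ) : (fun t : ℝ => t ^ q).HasTemperateGrowth :=
  Function.HasTemperateGrowth.id'.pow q

theorem integrable_line (s : 𝓢(En n, ℝ)) (q : ℕ)
    (x : En n) {ξ : En n} (hξ : ξ ≠ 0) : Integrable (fun t : ℝ => t ^ q * s (x + t • ξ)) := by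
  obtain ⟨r, hr⟩ := exists_line s x hξ
  have := (SchwartzMap.smulLeftCLM ℝ (fun t : ℝ => t ^ q) r).integrable (μ := volume)
  refine this.congr (Eventually.of_forall fun t => ?_)
  simp only
  rw [SchwartzMap.smulLeftCLM_apply_apply (tg_pow q), hr, smul_eq_mul]

theorem LS.integrable {u : En n → En n → ℝ} (hu : LS u) (q : ℕ)
    (x : En n) {ξ : En n} (hξ : ξ ≠ 0) : Integrable (fun t : ℝ => t ^ q * u (x + t • ξ) ξ) := by
  obtain ⟨s, hs⟩ := hu.slice hξ
  simpa [hs] using integrable_line s q x hξ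

theorem integrable_inv_sq : Integrable (fun t : ℝ => ((1 + |t|) ^ 2)⁻¹) := by
  have := integrable_one_add_norm (E := ℝ) (μ := volume) (r := 2) (by simp)
  refine this.congr (Eventually.of_forall fun t => ?_)
  simp only [Real.norm_eq_abs]
  rw [Real.rpow_neg (by positivity)]
  norm_cast

/-- the map `p ↦ (p.1 + t p.2, p.2)` -/
def Lmap (n : ℕ) (t : ℝ) : En n × En n →L[ℝ] En n × En n :=
  (ContinuousLinearMap.fst ℝ (En n) (En n) + t • ContinuousLinearMap.snd ℝ (En n) (En n)).prod
    (ContinuousLinearMap.snd ℝ (En n) (En n))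

theorem Lmap_apply (t : ℝ) (p : En n × En n) : Lmap n t p = (p.1 + t • p.2, p.2) := rfl

theorem norm_Lmap (t : ℝ) : ‖Lmap n t‖ ≤ 1 + |t| := by
  refine ContinuousLinearMap.opNorm_le_bound _ (by positivity) fun p => ?_
  rw [Lmap_apply, Prod.norm_mk]
  have h1 : ‖p.1‖ ≤ ‖p‖ := norm_fst_le p
  have h2 : ‖p.2‖ ≤ ‖p‖ := norm_snd_le p
  refine max_le ?_ ?_
  · refine (norm_add_le _ _).trans ?_
    rw [norm_smul, Real.norm_eq_abs]
    nlinarith [abs_nonneg t]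
  · nlinarith [abs_nonneg t, norm_nonneg p]

theorem continuous_Lmap : Continuous (fun t : ℝ => Lmap n t) := by
  have : (fun t : ℝ => Lmap n t) = fun t => Lmap n 0 + t •
      ((ContinuousLinearMap.snd ℝ (En n) (En n)).prod (0 : En n × En n →L[ℝ] En n)) := by
    funext t
    ext p <;> simp [Lmap]
  rw [this]
  fun_prop

theorem J_key (U : 𝓢(En n × En n, ℝ)) (q : ℕ) (x0 : En n) {ξ0 : En n} (h0 : ξ0 ≠ 0) :
    Integrable (fun t : ℝ => t ^ q • (fderiv ℝ U (Lmap n t (x0, ξ0))).comp (Lmap n t)) ∧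
    HasFDerivAt (fun p : En n × En n => ∫ t : ℝ, t ^ q * U (Lmap n t p))
      (∫ t : ℝ, t ^ q • (fderiv ℝ U (Lmap n t (x0, ξ0))).comp (Lmap n t)) (x0, ξ0) := by
  have hδ : 0 < ‖ξ0‖ / 2 := by have := norm_pos_iff.2 h0; positivity
  set K := 1 + (1 + (‖x0‖ + ‖ξ0‖ / 2)) / (‖ξ0‖ / 2) with hK
  have hK0 : 0 ≤ K := by positivity
  obtain ⟨C, hC0, hC⟩ := schwartz_bound (SchwartzMap.fderivCLM ℝ _ _ U) (q + 3)
  have hcf : Continuous (fderiv ℝ U) := (U.smooth 1).continuous_fderiv (by simp)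
  have hcl : ∀ p : En n × En n, Continuous fun t : ℝ => Lmap n t p := fun p =>
    continuous_Lmap.clm_apply continuous_const
  have hbd : ∀ t : ℝ, ∀ p ∈ Metric.ball (x0, ξ0) (‖ξ0‖ / 2),
      ‖t ^ q • (fderiv ℝ U (Lmap n t p)).comp (Lmap n t)‖ ≤
        C * K ^ (q + 3) * ((1 + |t|) ^ 2)⁻¹ := by
    intro t p hp
    rw [Metric.mem_ball, dist_eq_norm] at hp
    have hp1 : ‖p.1 - x0‖ < ‖ξ0‖ / 2 := (norm_fst_le (p - (x0, ξ0))).trans_lt hp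
    have hp2 : ‖p.2 - ξ0‖ < ‖ξ0‖ / 2 := (norm_snd_le (p - (x0, ξ0))).trans_lt hp
    have hx : ‖p.1‖ ≤ ‖x0‖ + ‖ξ0‖ / 2 := by
      have := norm_add_le (p.1 - x0) x0
      rw [sub_add_cancel] at this; linarith
    have hξ : ‖ξ0‖ / 2 ≤ ‖p.2‖ := by
      have := norm_sub_norm_le ξ0 p.2
      rw [norm_sub_rev] at this; linarith
    have h1 := line_bound hδ hx hξ t
    have h2 : 1 + |t| ≤ K * (1 + ‖Lmap n t p‖) := by
      refine h1.trans ?_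
      gcongr
      exact norm_fst_le (Lmap n t p)
    have h3 := hC (Lmap n t p)
    rw [SchwartzMap.fderivCLM_apply] at h3
    have h4 : (1 + |t|) ^ (q + 3) * ‖fderiv ℝ U (Lmap n t p)‖ ≤ C * K ^ (q + 3) := by
      calc (1 + |t|) ^ (q + 3) * ‖fderiv ℝ U (Lmap n t p)‖
          ≤ (K * (1 + ‖Lmap n t p‖)) ^ (q + 3) * ‖fderiv ℝ U (Lmap n t p)‖ := by gcongr
        _ = K ^ (q + 3) * ((1 + ‖Lmap n t p‖) ^ (q + 3) * ‖fderiv ℝ U (Lmap n t p)‖) := by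
            rw [mul_pow]; ring
        _ ≤ K ^ (q + 3) * C := by gcongr
        _ = _ := by ring
    rw [← div_eq_mul_inv, le_div_iff₀ (by positivity)]
    refine le_trans ?_ h4
    rw [norm_smul, norm_pow, Real.norm_eq_abs]
    calc |t| ^ q * ‖(fderiv ℝ U (Lmap n t p)).comp (Lmap n t)‖ * (1 + |t|) ^ 2
        ≤ (1 + |t|) ^ q * (‖fderiv ℝ U (Lmap n t p)‖ * (1 + |t|)) * (1 + |t|) ^ 2 := by
          gcongr
          · linarith
          · exact (ContinuousLinearMap.opNorm_comp_le _ _).trans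
              (mul_le_mul_of_nonneg_left (norm_Lmap t) (norm_nonneg _))
      _ = _ := by ring
  have hmeas : AEStronglyMeasurable
      (fun t : ℝ => t ^ q • (fderiv ℝ U (Lmap n t (x0, ξ0))).comp (Lmap n t)) volume := by
    refine Continuous.aestronglyMeasurable ?_
    exact (continuous_pow q).smul ((hcf.comp (hcl _)).clm_comp continuous_Lmap)
  have hIntg : Integrable fun t : ℝ => C * K ^ (q + 3) * ((1 + |t|) ^ 2)⁻¹ :=
    integrable_inv_sq.const_mul _
  have hmem : (x0, ξ0) ∈ Metric.ball (x0, ξ0) (‖ξ0‖ / 2) := Metric.mem_ball_self hδ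
  refine ⟨hIntg.mono' hmeas (Eventually.of_forall fun t => hbd t _ hmem), ?_⟩
  refine hasFDerivAt_integral_of_dominated_of_fderiv_le (𝕜 := ℝ)
    (s := Metric.ball (x0, ξ0) (‖ξ0‖ / 2))
    (bound := fun t => C * K ^ (q + 3) * ((1 + |t|) ^ 2)⁻¹)
    (F' := fun p t => t ^ q • (fderiv ℝ U (Lmap n t p)).comp (Lmap n t))
    (Metric.ball_mem_nhds _ hδ) ?_ ?_ hmeas
    (Eventually.of_forall hbd) hIntg ?_
  · refine Eventually.of_forall fun p => Continuous.aestronglyMeasurable ?_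
    exact (continuous_pow q).mul (U.continuous.comp (hcl p))
  · have hu : LS (fun x ξ => U (x, ξ)) := fun _ _ => ⟨U, Eventually.of_forall fun _ _ => rfl⟩
    exact hu.integrable q x0 h0
  · refine Eventually.of_forall fun t p _ => ?_
    exact ((U.differentiableAt.hasFDerivAt).comp p (Lmap n t).hasFDerivAt).const_smul (t ^ q)

theorem J_hasFDeriv_left {u : En n → En n → ℝ} (hu : LS u) (q : ℕ) (x : En n) {ξ : En n}
    (hξ : ξ ≠ 0) : DifferentiableAt ℝ (fun x' => Jt q u x' ξ) x ∧
      ∀ j, pdx j (Jt q u) x ξ = Jt q (pdx j u) x ξ := by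
  obtain ⟨U, hU⟩ := hu ξ hξ
  have hU0 := hU.self_of_nhds
  obtain ⟨hi, hd⟩ := J_key U q x hξ
  have h1 := HasFDerivAt.comp (f := fun e : En n => (e, ξ)) x hd
    (hasFDerivAt_prodMk_left (𝕜 := ℝ) x ξ)
  have h2 : ((fun p : En n × En n => ∫ t : ℝ, t ^ q * U (Lmap n t p)) ∘ fun e => (e, ξ)) =
      fun x' => Jt q u x' ξ := by
    funext x'
    simp [Jt, Lmap_apply, hU0]
  rw [h2] at h1
  refine ⟨h1.differentiableAt, fun j => ?_⟩
  rw [pdx, h1.fderiv, ContinuousLinearMap.comp_apply, ContinuousLinearMap.integral_apply hi, Jt]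
  refine integral_congr_ae (Eventually.of_forall fun t => ?_)
  simp only
  rw [pdx_eq hU0, SchwartzMap.lineDerivOp_apply_eq_fderiv]
  simp [Lmap_apply]

theorem J_hasFDeriv_right {u : En n → En n → ℝ} (hu : LS u) (q : ℕ) (x : En n) {ξ : En n}
    (hξ : ξ ≠ 0) (j : Fin n) :
    pdxi j (Jt q u) x ξ = Jt q (pdxi j u) x ξ + Jt (q + 1) (pdx j u) x ξ := by
  obtain ⟨U, hU⟩ := hu ξ hξ
  have hU0 := hU.self_of_nhds
  obtain ⟨hi, hd⟩ := J_key U q x hξ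
  have h1 := hd.comp ξ (hasFDerivAt_prodMk_right x ξ)
  have h2 : (fun ξ' => Jt q u x ξ') =ᶠ[𝓝 ξ]
      ((fun p : En n × En n => ∫ t : ℝ, t ^ q * U (Lmap n t p)) ∘ fun e => (x, e)) := by
    filter_upwards [hU] with ξ' h
    simp [Jt, Lmap_apply, h]
  rw [pdxi, h2.fderiv_eq, h1.fderiv, ContinuousLinearMap.comp_apply,
    ContinuousLinearMap.integral_apply hi, Jt, Jt, ← integral_add ((hu.pdxi j).integrable q x hξ)
    ((hu.pdx j).integrable (q + 1) x hξ)]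
  refine integral_congr_ae (Eventually.of_forall fun t => ?_)
  simp only
  rw [pdx_eq hU0, pdxi_eq hU, SchwartzMap.lineDerivOp_apply_eq_fderiv,
    SchwartzMap.lineDerivOp_apply_eq_fderiv]
  have : Lmap n t ((0 : En n), EuclideanSpace.single j (1 : ℝ)) =
      (0, EuclideanSpace.single j (1 : ℝ)) + t • (EuclideanSpace.single j (1 : ℝ), 0) := by
    simp [Lmap_apply]
  simp only [FunLike.coe_smul, Pi.smul_apply, ContinuousLinearMap.comp_apply,
    ContinuousLinearMap.inr_apply, this, map_add, map_smul, Lmap_apply, smul_eq_mul]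
  ring

theorem john_J {u : En n → En n → ℝ} (hu : LS u) (q : ℕ) (x : En n) {ξ : En n}
    (hξ : ξ ≠ 0) (i j : Fin n) : johnOp i j (Jt q u) x ξ = Jt q (johnOp i j u) x ξ := by
  have key : ∀ i j, pdx i (pdxi j (Jt q u)) x ξ =
      Jt q (pdx i (pdxi j u)) x ξ + Jt (q + 1) (pdx i (pdx j u)) x ξ := by
    intro i j
    conv_lhs => unfold pdx
    rw [show (fun x' => pdxi j (Jt q u) x' ξ) =
      fun x' => Jt q (pdxi j u) x' ξ + Jt (q + 1) (pdx j u) x' ξ from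
      funext fun x' => J_hasFDeriv_right hu q x' hξ j]
    have h1 := J_hasFDeriv_left (hu.pdxi j) q x hξ
    have h2 := J_hasFDeriv_left (hu.pdx j) (q + 1) x hξ
    rw [fderiv_fun_add h1.1 h2.1, add_apply, ← h1.2 i, ← h2.2 i]
    rfl
  rw [johnOp, key, key]
  have h3 : Jt (q + 1) (pdx i (pdx j u)) x ξ = Jt (q + 1) (pdx j (pdx i u)) x ξ := by
    unfold Jt
    simp_rw [pdx_pdx_comm hu hξ i j]
  have h4 : Jt q (johnOp i j u) x ξ =
      Jt q (pdx i (pdxi j u)) x ξ - Jt q (pdx j (pdxi i u)) x ξ := by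
    unfold Jt
    rw [← integral_sub (((hu.pdxi j).pdx i).integrable q x hξ)
      (((hu.pdxi i).pdx j).integrable q x hξ)]
    simp [johnOp, mul_sub]
  rw [h3, h4]
  ring

theorem johnOp_congr {G H : En n → En n → ℝ} (h : ∀ x ξ, ξ ≠ 0 → G x ξ = H x ξ) (i j : Fin n)
    (x : En n) {ξ : En n} (hξ : ξ ≠ 0) : johnOp i j G x ξ = johnOp i j H x ξ := by
  have h1 : ∀ j x, pdxi j G x ξ = pdxi j H x ξ := by
    intro j x
    unfold pdxi
    have : (fun ξ' => G x ξ') =ᶠ[𝓝 ξ] (fun ξ' => H x ξ') := by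
      filter_upwards [isOpen_ne.mem_nhds hξ] with ξ' h'
      exact h x ξ' h'
    rw [this.fderiv_eq]
  unfold johnOp pdx
  simp_rw [h1]

theorem johnIter_congr {G H : En n → En n → ℝ} (h : ∀ x ξ, ξ ≠ 0 → G x ξ = H x ξ)
    (l : List (Fin n × Fin n)) :
    ∀ (x : En n) (ξ : En n), ξ ≠ 0 → johnIter l G x ξ = johnIter l H x ξ := by
  induction l with
  | nil => exact h
  | cons a l ih => exact fun x ξ hξ => johnOp_congr ih a.1 a.2 x hξ

theorem johnIter_J {u : En n → En n → ℝ} (hu : LS u) (q : ℕ) (l : List (Fin n × Fin n)) :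
    ∀ (x : En n) (ξ : En n), ξ ≠ 0 → johnIter l (Jt q u) x ξ = Jt q (johnIter l u) x ξ := by
  induction l with
  | nil => exact fun x ξ _ => rfl
  | cons a l ih =>
    intro x ξ hξ
    exact (johnOp_congr ih a.1 a.2 x hξ).trans (john_J (hu.johnIter l) q x hξ a.1 a.2)

/-- derivative along `ξ` -/
def Dx (u : En n → En n → ℝ) : En n → En n → ℝ := fun x ξ => ∑ j, ξ j * pdx j u x ξ

theorem LS.sum {ι : Type*} (s : Finset ι) {u : ι → En n → En n → ℝ} (hu : ∀ i, LS (u i)) :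
    LS (fun x ξ => ∑ i ∈ s, u i x ξ) := by
  classical
  induction s using Finset.induction_on with
  | empty => exact fun ξ0 _ => ⟨0, by simp⟩
  | insert a s ha ih =>
    simp_rw [Finset.sum_insert ha]
    exact (hu a).add ih

theorem LS.Dx {u : En n → En n → ℝ} (hu : LS u) : LS (Dx u) :=
  LS.sum _ fun j => LS.mulLTemp (LTemp.xi j) (hu.pdx j)

theorem Dx_slice {u : En n → En n → ℝ} {ξ : En n} {s : 𝓢(En n, ℝ)} (hs : ∀ x, s x = u x ξ)
    (x : En n) : Dx u x ξ = fderiv ℝ s x ξ := by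
  rw [clm_eq_sum (fderiv ℝ s x) ξ]
  unfold Dx pdx
  rw [show (fun x' => u x' ξ) = s from funext fun x => (hs x).symm]
  simp

theorem J_Dx {u : En n → En n → ℝ} (hu : LS u) (q : ℕ) (x : En n) {ξ : En n}
    (hξ : ξ ≠ 0) : Jt q (Dx u) x ξ = - (q * Jt (q - 1) u x ξ) := by
  obtain ⟨s, hs⟩ := hu.slice hξ
  have hD : ∀ t : ℝ, HasDerivAt (fun t : ℝ => u (x + t • ξ) ξ) (Dx u (x + t • ξ) ξ) t := by
    intro t
    rw [Dx_slice hs]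
    simp_rw [← hs]
    have h1 : HasDerivAt (fun t : ℝ => x + t • ξ) ξ t := by
      simpa using ((hasDerivAt_id t).smul_const ξ).const_add x
    exact (s.differentiableAt.hasFDerivAt).comp_hasDerivAt t h1
  have hp : ∀ t : ℝ, HasDerivAt (fun t : ℝ => t ^ q) (q * t ^ (q - 1)) t := fun t =>
    hasDerivAt_pow q t
  have := integral_mul_deriv_eq_deriv_mul_of_integrable (fun t _ => hp t) (fun t _ => hD t)
    (hu.Dx.integrable q x hξ) ?_ (hu.integrable q x hξ)
  · unfold Jt
    rw [this, ← integral_const_mul]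
    simp_rw [mul_assoc]
  · have := (hu.integrable (q - 1) x hξ).const_mul (q : ℝ)
    refine this.congr (Eventually.of_forall fun t => ?_)
    simp only [Pi.mul_apply]
    ring

theorem J_zero_descend {v : En n → En n → ℝ} (hv : LS v) (q : ℕ)
    (h : ∀ x ξ, ξ ≠ 0 → Jt q v x ξ = 0) : ∀ r ≤ q, ∀ x ξ, ξ ≠ 0 → Jt r v x ξ = 0 := by
  have step : ∀ q, (∀ x ξ, ξ ≠ 0 → Jt (q + 1) v x ξ = 0) → ∀ x ξ, ξ ≠ 0 → Jt q v x ξ = 0 := by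
    intro q h x ξ hξ
    have h1 := J_Dx hv (q + 1) x hξ
    have h2 : Jt (q + 1) (Dx v) x ξ = 0 := by
      have : ∀ j, Jt (q + 1) (pdx j v) x ξ = 0 := by
        intro j
        rw [← (J_hasFDeriv_left hv (q + 1) x hξ).2 j, pdx,
          show (fun x' => Jt (q + 1) v x' ξ) = fun _ => 0 from funext fun x' => h x' ξ hξ]
        simp
      have e : Jt (q + 1) (Dx v) x ξ = ∑ j, ξ j * Jt (q + 1) (pdx j v) x ξ := by
        unfold Jt Dx
        simp_rw [← integral_const_mul]
        rw [← integral_finsetSum]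
        · refine integral_congr_ae (Eventually.of_forall fun t => ?_)
          simp only [Finset.mul_sum]
          exact Finset.sum_congr rfl fun j _ => by ring
        · exact fun j _ => ((hv.pdx j).integrable (q + 1) x hξ).const_mul _
      rw [e]
      simp [this]
    rw [h2] at h1
    have : ((q + 1 : ℕ) : ℝ) ≠ 0 := by positivity
    simp only [Nat.add_sub_cancel] at h1
    have h3 : ((q + 1 : ℕ) : ℝ) * Jt q v x ξ = 0 := by linarith
    exact (mul_eq_zero.1 h3).resolve_left this
  induction q with
  | zero => intro r hr; obtain rfl : r = 0 := by omega
            exact h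
  | succ q ih =>
    intro r hr
    rcases Nat.lt_or_ge r (q + 1) with h1 | h1
    · exact ih (step q h) r (by omega)
    · obtain rfl : r = q + 1 := by omega
      exact h

end

/-- Homogeneous polynomials of degree `d` in `ξ` with Schwartz coefficients. -/
inductive PolF {n : ℕ} {F : Type} [NormedAddCommGroup F] [NormedSpace ℝ F] :
    ℕ → (En n → 𝓢(En n, F)) → Prop
  | base (f : 𝓢(En n, F)) : PolF 0 (fun _ => f)
  | zero (d : ℕ) : PolF d (fun _ => 0)
  | mul (j : Fin n) {d : ℕ} {s : En n → 𝓢(En n, F)} : PolF d s → PolF (d + 1) (fun ξ => ξ j • s ξ)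
  | add {d : ℕ} {s t : En n → 𝓢(En n, F)} : PolF d s → PolF d t → PolF d (fun ξ => s ξ + t ξ)

/-- Positive homogeneity in `ξ`. -/
def Hom {n : ℕ} (d : ℤ) (u : En n → En n → ℝ) : Prop :=
  ∀ x ξ (c : ℝ), 0 < c → ξ ≠ 0 → u x (c • ξ) = c ^ d * u x ξ

/-- The function attached to a family of Schwartz functions. -/
def ev {n : ℕ} (s : En n → 𝓢(En n, ℝ)) : En n → En n → ℝ := fun x ξ => s ξ x

section
variable {n : ℕ} {F G : Type} [NormedAddCommGroup F] [NormedSpace ℝ F]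
  [NormedAddCommGroup G] [NormedSpace ℝ G]

theorem PolF.map (T : 𝓢(En n, F) →ₗ[ℝ] 𝓢(En n, G)) {d : ℕ} {s : En n → 𝓢(En n, F)}
    (h : PolF d s) : PolF d (fun ξ => T (s ξ)) := by
  induction h with
  | base f => exact .base _
  | zero d => simpa using PolF.zero d
  | mul j h ih => simpa using ih.mul j
  | add h1 h2 ih1 ih2 => simpa using ih1.add ih2

theorem PolF.smul (c : ℝ) {d : ℕ} {s : En n → 𝓢(En n, F)}
    (h : PolF d s) : PolF d (fun ξ => c • s ξ) :=
  h.map (c • LinearMap.id)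

theorem PolF.sub {d : ℕ} {s t : En n → 𝓢(En n, F)}
    (h : PolF d s) (h' : PolF d t) : PolF d (fun ξ => s ξ - t ξ) := by
  simpa [sub_eq_add_neg] using h.add (h'.smul (-1))

theorem PolF.sum {ι : Type*} (S : Finset ι) {d : ℕ} {s : ι → En n → 𝓢(En n, F)}
    (h : ∀ i, PolF d (s i)) : PolF d (fun ξ => ∑ i ∈ S, s i ξ) := by
  classical
  induction S using Finset.induction_on with
  | empty => simpa using PolF.zero d
  | insert a S ha ih =>
    simp_rw [Finset.sum_insert ha]
    exact (h a).add ih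

/-- partial derivative on Schwartz functions as a linear map -/
def dS (F : Type) [NormedAddCommGroup F] [NormedSpace ℝ F] (v : En n) :
    𝓢(En n, F) →ₗ[ℝ] 𝓢(En n, F) := LineDeriv.lineDerivOpCLM ℝ 𝓢(En n, F) v

theorem dS_apply (v : En n) (s : 𝓢(En n, F)) : dS F v s = ∂_{v} s := rfl

theorem dS_fderiv (v : En n) (s : 𝓢(En n, F)) (x : En n) : dS F v s x = fderiv ℝ s x v :=
  SchwartzMap.lineDerivOp_apply_eq_fderiv ..

theorem pdx_ev (s : En n → 𝓢(En n, ℝ)) (j : Fin n) :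
    pdx j (ev s) = ev (fun ξ => dS ℝ (EuclideanSpace.single j 1) (s ξ)) := by
  funext x ξ
  exact pdx_slice (u := ev s) (s := s ξ) (fun _ => rfl) j x

theorem Dx_ev (s : En n → 𝓢(En n, ℝ)) :
    Dx (ev s) = ev (fun ξ => ∑ j, ξ j • dS ℝ (EuclideanSpace.single j 1) (s ξ)) := by
  funext x ξ
  unfold Dx
  simp [pdx_ev, ev]

theorem PolF.Dx {d : ℕ} {s : En n → 𝓢(En n, ℝ)} (h : PolF d s) :
    PolF (d + 1) (fun ξ => ∑ j, ξ j • dS ℝ (EuclideanSpace.single j 1) (s ξ)) :=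
  PolF.sum _ fun j => (h.map _).mul j

theorem PolF.Dx_iter {d : ℕ} {s : En n → 𝓢(En n, ℝ)} (h : PolF d s) (l : ℕ) :
    ∃ s', PolF (d + l) s' ∧ _root_.Dx^[l] (ev s) = ev s' := by
  induction l with
  | zero => exact ⟨s, h, rfl⟩
  | succ l ih =>
    obtain ⟨s', h', e⟩ := ih
    exact ⟨_, h'.Dx, by rw [Function.iterate_succ_apply', e, Dx_ev]⟩

theorem PolF.diff_xi {d : ℕ} {s : En n → 𝓢(En n, ℝ)} (h : PolF d s) (x ξ : En n) :
    DifferentiableAt ℝ (fun ξ => ev s x ξ) ξ := by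
  unfold ev
  induction h with
  | base f => simp
  | zero d => simp
  | mul j h ih =>
    simp only [smul_apply, smul_eq_mul]
    exact DifferentiableAt.mul (EuclideanSpace.proj j : En n →L[ℝ] ℝ).differentiableAt ih
  | add h1 h2 ih1 ih2 => exact ih1.add ih2

theorem PolF.pdxi {d : ℕ} {s : En n → 𝓢(En n, ℝ)} (h : PolF d s) (j : Fin n) :
    ∃ s', PolF (d - 1) s' ∧ pdxi j (ev s) = ev s' ∧ (d = 0 → s' = fun _ => 0) := by
  induction h with
  | base f =>
    refine ⟨fun _ => 0, .zero _, ?_, fun _ => rfl⟩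
    funext x ξ; simp [_root_.pdxi, ev]
  | zero d =>
    refine ⟨fun _ => 0, .zero _, ?_, fun _ => rfl⟩
    funext x ξ; simp [_root_.pdxi, ev]
  | @mul k d s h ih =>
    obtain ⟨s', h', e, hz⟩ := ih
    refine ⟨fun ξ => (EuclideanSpace.single j (1 : ℝ) : En n) k • s ξ + ξ k • s' ξ, ?_, ?_, by simp⟩
    · refine (h.smul _).add ?_
      rcases d with _ | d
      · simpa [hz rfl] using PolF.zero 0
      · exact h'.mul k
    · funext x ξ
      have e' := congrFun (congrFun e x) ξ
      unfold _root_.pdxi at e' ⊢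
      have h1 : HasFDerivAt (fun ξ : En n => ξ k) (EuclideanSpace.proj k : En n →L[ℝ] ℝ) ξ :=
        (EuclideanSpace.proj k : En n →L[ℝ] ℝ).hasFDerivAt
      have h2 := h1.mul (h.diff_xi x ξ).hasFDerivAt
      have h3 : (fun ξ' => ev (fun ξ => ξ k • s ξ) x ξ') = ((fun ξ : En n => ξ k) * fun ξ => ev s x ξ) := by
        funext ξ'; simp [ev]
      rw [h3, h2.fderiv]
      change ξ k * fderiv ℝ (fun ξ' => ev s x ξ') ξ _ + ev s x ξ * (EuclideanSpace.single j (1 : ℝ) : En n) k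
        = (EuclideanSpace.single j (1 : ℝ) : En n) k * ev s x ξ + ξ k * ev s' x ξ
      rw [e']
      ring
  | add h1 h2 ih1 ih2 =>
    obtain ⟨s1, h1', e1, z1⟩ := ih1
    obtain ⟨s2, h2', e2, z2⟩ := ih2
    refine ⟨_, h1'.add h2', ?_, fun hd => by simp [z1 hd, z2 hd]⟩
    funext x ξ
    have e1' := congrFun (congrFun e1 x) ξ
    have e2' := congrFun (congrFun e2 x) ξ
    unfold _root_.pdxi at *
    rename_i d s t
    rw [show (fun ξ' => ev (fun ξ => s ξ + t ξ) x ξ') = fun ξ' => ev s x ξ' + ev t x ξ' from rfl,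
      fderiv_fun_add (h1.diff_xi x ξ) (h2.diff_xi x ξ), add_apply, e1', e2']
    rfl

theorem PolF.john {d : ℕ} {s : En n → 𝓢(En n, ℝ)} (h : PolF d s) (i j : Fin n) :
    ∃ s', PolF (d - 1) s' ∧ johnOp i j (ev s) = ev s' ∧ (d = 0 → s' = fun _ => 0) := by
  obtain ⟨s1, h1, e1, z1⟩ := h.pdxi i
  obtain ⟨s2, h2, e2, z2⟩ := h.pdxi j
  refine ⟨_, (h2.map (dS ℝ (EuclideanSpace.single i 1))).sub
    (h1.map (dS ℝ (EuclideanSpace.single j 1))), ?_, ?_⟩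
  · unfold johnOp
    rw [e1, e2, pdx_ev, pdx_ev]
    rfl
  · intro hd
    simp [z1 hd, z2 hd]

theorem johnIter_append (l : List (Fin n × Fin n)) (a : Fin n × Fin n) (u : En n → En n → ℝ) :
    johnIter (l ++ [a]) u = johnIter l (johnOp a.1 a.2 u) := by
  simp [johnIter]

theorem johnOp_zero (i j : Fin n) : johnOp i j (fun _ _ => 0) = fun _ _ => 0 := by
  funext x ξ; simp [johnOp, pdx, pdxi]

theorem johnIter_zero (l : List (Fin n × Fin n)) : johnIter l (fun _ _ => 0) = fun _ _ => 0 := by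
  induction l with
  | nil => rfl
  | cons a l ih =>
    change johnOp a.1 a.2 (johnIter l _) = _
    rw [ih, johnOp_zero]

theorem PolF.johnIter {d : ℕ} {s : En n → 𝓢(En n, ℝ)} (h : PolF d s)
    (l : List (Fin n × Fin n)) (hl : d < l.length) : johnIter l (ev s) = fun _ _ => 0 := by
  induction l using List.reverseRecOn generalizing d s with
  | nil => simp at hl
  | append_singleton l a ih =>
    rw [johnIter_append]
    obtain ⟨s', h', e, z⟩ := h.john a.1 a.2
    rw [e]
    rcases d with _ | d
    · rw [z rfl]
      exact johnIter_zero l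
    · refine ih h' ?_
      simp at hl ⊢
      omega

theorem PolF.LS {d : ℕ} {s : En n → 𝓢(En n, ℝ)} (h : PolF d s) : LS (ev s) := by
  unfold ev
  induction h with
  | base f =>
    intro ξ0 h0
    obtain ⟨β, hβ, hc, -, -, h1, -⟩ := exists_bump ξ0 h0
    obtain ⟨U, hU⟩ := exists_tensor f (hc.toSchwartzMap hβ)
    refine ⟨U, ?_⟩
    filter_upwards [h1] with ξ h x
    rw [hU]
    change _ = _ * β ξ
    rw [h, mul_one]
  | zero d => exact fun _ _ => ⟨0, by simp⟩
  | mul j h ih => exact LS.mulLTemp (LTemp.xi j) ih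
  | add h1 h2 ih1 ih2 => exact ih1.add ih2

theorem PolF.Hom {d : ℕ} {s : En n → 𝓢(En n, ℝ)} (h : PolF d s) : Hom d (ev s) := by
  intro x ξ c hc hξ
  unfold ev
  rw [zpow_natCast]
  induction h with
  | base f => simp
  | zero d => simp
  | mul j h ih =>
    simp [ih, pow_succ]
    ring
  | add h1 h2 ih1 ih2 => simp [ih1, ih2, mul_add]

theorem PolF.monomial {d : ℕ} (I : Fin d → Fin n) (f : 𝓢(En n, F)) :
    PolF d (fun ξ : En n => (∏ r, ξ (I r)) • f) := by
  induction d with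
  | zero => simpa using PolF.base f
  | succ d ih =>
    simp_rw [Fin.prod_univ_succ, mul_smul]
    exact (ih (fun r => I r.succ)).mul (I 0)

theorem PolF.array {d : ℕ} {s : En n → 𝓢(En n, F)} (h : PolF d s) :
    ∃ a : (Fin d → Fin n) → 𝓢(En n, F), ∀ ξ, s ξ = ∑ I, (∏ r, ξ (I r)) • a I := by
  induction h with
  | base f => exact ⟨fun _ => f, by simp⟩
  | zero d => exact ⟨fun _ => 0, by simp⟩
  | @mul j d s h ih =>
    obtain ⟨a, ha⟩ := ih
    refine ⟨fun I => if I 0 = j then a (Fin.tail I) else 0, fun ξ => ?_⟩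
    change ξ j • s ξ = _
    rw [← (Fin.consEquiv (fun _ : Fin (d + 1) => Fin n)).sum_comp, Fintype.sum_prod_type, ha,
      Finset.sum_eq_single j]
    · simp [Fin.consEquiv, Fin.prod_univ_succ, Finset.smul_sum, mul_smul]
    · intro b _ hb
      simp [Fin.consEquiv, hb]
    · simp
  | add h1 h2 ih1 ih2 =>
    obtain ⟨a, ha⟩ := ih1
    obtain ⟨b, hb⟩ := ih2
    exact ⟨fun I => a I + b I, fun ξ => by simp [ha, hb, Finset.sum_add_distrib]⟩

theorem Hom.add {d : ℤ} {u v : En n → En n → ℝ} (hu : Hom d u) (hv : Hom d v) :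
    Hom d (fun x ξ => u x ξ + v x ξ) := by
  intro x ξ c hc hξ
  simp only [hu x ξ c hc hξ, hv x ξ c hc hξ]
  ring

theorem Hom.sub {d : ℤ} {u v : En n → En n → ℝ} (hu : Hom d u) (hv : Hom d v) :
    Hom d (fun x ξ => u x ξ - v x ξ) := by
  intro x ξ c hc hξ
  simp only [hu x ξ c hc hξ, hv x ξ c hc hξ]
  ring

theorem Hom.const_mul {d : ℤ} {u : En n → En n → ℝ} (hu : Hom d u) (a : ℝ) :
    Hom d (fun x ξ => a * u x ξ) := by
  intro x ξ c hc hξ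
  simp only [hu x ξ c hc hξ]
  ring

theorem Hom.pdx {d : ℤ} {u : En n → En n → ℝ} (hu : Hom d u) (hL : LS u) (j : Fin n) :
    Hom d (pdx j u) := by
  intro x ξ c hc hξ
  unfold _root_.pdx
  rw [show (fun x' => u x' (c • ξ)) = fun x' => c ^ d * u x' ξ from
    funext fun x' => hu x' ξ c hc hξ, fderiv_const_mul (hL.diff_left hξ x)]
  simp

theorem Hom.pdxi {d : ℤ} {u : En n → En n → ℝ} (hu : Hom d u) (hL : LS u) (j : Fin n) :
    Hom (d - 1) (pdxi j u) := by
  intro x ξ c hc hξ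
  have hcξ : c • ξ ≠ 0 := smul_ne_zero hc.ne' hξ
  unfold _root_.pdxi
  have h1 : (fun ξ' => u x (c • ξ')) =ᶠ[𝓝 ξ] fun ξ' => c ^ d * u x ξ' := by
    filter_upwards [isOpen_ne.mem_nhds hξ] with ξ' h'
    exact hu x ξ' c hc h'
  have h2 : HasFDerivAt (fun ξ' => u x (c • ξ'))
      ((fderiv ℝ (fun ξ' => u x ξ') (c • ξ)).comp (c • ContinuousLinearMap.id ℝ (En n))) ξ :=
    HasFDerivAt.comp ξ (g := fun ξ' => u x ξ') (f := fun ξ' => c • ξ')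
      (hL.diff_right hcξ x).hasFDerivAt ((hasFDerivAt_id (𝕜 := ℝ) ξ).const_smul c)
  have h3 := h1.fderiv_eq (𝕜 := ℝ)
  rw [h2.fderiv, fderiv_const_mul (hL.diff_right hξ x)] at h3
  have h4 := congrArg (fun L => L (EuclideanSpace.single j (1 : ℝ))) h3
  simp only [ContinuousLinearMap.comp_apply, smul_apply, ContinuousLinearMap.id_apply, map_smul,
    smul_eq_mul] at h4
  rw [zpow_sub_one₀ hc.ne', mul_assoc, mul_comm c⁻¹, ← mul_assoc, ← h4]
  field_simp

theorem Hom.john {d : ℤ} {u : En n → En n → ℝ} (hu : Hom d u) (hL : LS u) (i j : Fin n) :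
    Hom (d - 1) (johnOp i j u) :=
  ((hu.pdxi hL j).pdx (hL.pdxi j) i).sub ((hu.pdxi hL i).pdx (hL.pdxi i) j)

theorem Hom.Dx {d : ℤ} {u : En n → En n → ℝ} (hu : Hom d u) (hL : LS u) :
    Hom (d + 1) (Dx u) := by
  intro x ξ c hc hξ
  unfold _root_.Dx
  rw [Finset.mul_sum]
  refine Finset.sum_congr rfl fun j _ => ?_
  rw [hu.pdx hL j x ξ c hc hξ, zpow_add_one₀ hc.ne']
  simp
  ring

theorem Hom.euler {d : ℤ} {u : En n → En n → ℝ} (hu : Hom d u) (hL : LS u) (x : En n) {ξ : En n}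
    (hξ : ξ ≠ 0) : ∑ j, ξ j * _root_.pdxi j u x ξ = d * u x ξ := by
  have h1 : HasDerivAt (fun c : ℝ => u x (c • ξ)) (fderiv ℝ (fun ξ' => u x ξ') ξ ξ) 1 := by
    have h := (hL.diff_right (ξ := (1 : ℝ) • ξ) (by simpa using hξ) x).hasFDerivAt
    have h2 : HasDerivAt (fun c : ℝ => c • ξ) ξ 1 := by
      simpa using (hasDerivAt_id (1 : ℝ)).smul_const ξ
    have := h.comp_hasDerivAt (1 : ℝ) h2
    rw [one_smul] at this
    exact this
  have h2 : HasDerivAt (fun c : ℝ => u x (c • ξ)) (d * u x ξ) 1 := by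
    have h3 : HasDerivAt (fun c : ℝ => c ^ d * u x ξ) (d * u x ξ) 1 := by
      simpa using (hasDerivAt_zpow d (1 : ℝ) (by simp)).mul_const (u x ξ)
    refine h3.congr_of_eventuallyEq ?_
    filter_upwards [lt_mem_nhds (zero_lt_one (α := ℝ))] with c hc
    exact hu x ξ c hc hξ
  rw [← h1.unique h2, clm_eq_sum _ ξ]
  rfl

end

section
variable {n : ℕ}

theorem Jt_shift {u : En n → En n → ℝ} (hu : LS u) (q : ℕ) (x : En n) {ξ : En n}
    (hξ : ξ ≠ 0) (a : ℝ) : Jt q u (x + a • ξ) ξ =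
      ∑ r ∈ Finset.range (q + 1), (-a) ^ (q - r) * (q.choose r) * Jt r u x ξ := by
  unfold Jt
  have h1 : ∀ t : ℝ, t ^ q * u (x + a • ξ + t • ξ) ξ =
      (fun s : ℝ => (s + -a) ^ q * u (x + s • ξ) ξ) (t + a) := by
    intro t
    simp only [add_neg_cancel_right]
    rw [add_assoc, ← add_smul, add_comm a t]
  simp_rw [h1]
  rw [integral_add_right_eq_self (fun s : ℝ => (s + -a) ^ q * u (x + s • ξ) ξ) a]
  simp_rw [← integral_const_mul]
  rw [← integral_finsetSum]
  · refine integral_congr_ae (Eventually.of_forall fun s => ?_)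
    simp only [add_pow, Finset.sum_mul]
    exact Finset.sum_congr rfl fun r _ => by ring
  · exact fun r _ => (hu.integrable r x hξ).const_mul _

theorem Jt_scale {u : En n → En n → ℝ} {d : ℤ} (hd : Hom d u) (q : ℕ) (x : En n) {ξ : En n}
    (hξ : ξ ≠ 0) {c : ℝ} (hc : 0 < c) : Jt q u x (c • ξ) = c ^ (d - q - 1) * Jt q u x ξ := by
  unfold Jt
  have h1 : ∀ t : ℝ, t ^ q * u (x + t • c • ξ) (c • ξ) =
      (fun s : ℝ => c ^ (d - q) * (s ^ q * u (x + s • ξ) ξ)) (c * t) := by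
    intro t
    simp only []
    rw [hd _ _ c hc hξ, zpow_sub₀ hc.ne', mul_pow, smul_smul, mul_comm t c, zpow_natCast]
    field_simp
  simp_rw [h1]
  rw [Measure.integral_comp_mul_left (fun s : ℝ => c ^ (d - q) * (s ^ q * u (x + s • ξ) ξ)) c,
    integral_const_mul, abs_of_pos (inv_pos.2 hc), smul_eq_mul, zpow_sub_one₀ hc.ne']
  ring

theorem Jt_decomp {u : En n → En n → ℝ} (hu : LS u) {m : ℕ} (hd : Hom m u) (k : ℕ) (x : En n)
    {ξ : En n} (hξ : ξ ≠ 0) : Jt k u x ξ = ‖ξ‖ ^ ((m : ℤ) - 2 * k - 1) *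
      ∑ r ∈ Finset.range (k + 1),
        (-1 : ℝ) ^ (k - r) * (k.choose r) * ‖ξ‖ ^ r * (⟪ξ, x⟫ : ℝ) ^ (k - r) *
          Jt r u (x - ((⟪x, ξ⟫ : ℝ) / ‖ξ‖ ^ 2) • ξ) (‖ξ‖⁻¹ • ξ) := by
  have hp : 0 < ‖ξ‖ := norm_pos_iff.2 hξ
  have hi : 0 < ‖ξ‖⁻¹ := inv_pos.2 hp
  conv_lhs => rw [show x = (x - ((⟪x, ξ⟫ : ℝ) / ‖ξ‖ ^ 2) • ξ) + ((⟪x, ξ⟫ : ℝ) / ‖ξ‖ ^ 2) • ξ by simp,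
    Jt_shift hu k _ hξ]
  rw [Finset.mul_sum]
  refine Finset.sum_congr rfl fun r hr => ?_
  have hr' : r ≤ k := by simp at hr; omega
  rw [Jt_scale hd r _ hξ hi, real_inner_comm x ξ]
  obtain ⟨j, rfl⟩ := Nat.exists_eq_add_of_le hr'
  rw [Nat.add_sub_cancel_left, neg_pow, div_pow, inv_zpow, ← zpow_neg, ← pow_mul, ← zpow_natCast ‖ξ‖ r]
  have : ‖ξ‖ ^ ((m : ℤ) - 2 * (r + j : ℕ) - 1) * ‖ξ‖ ^ (r : ℤ) * ‖ξ‖ ^ (-((m : ℤ) - r - 1)) *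
    ‖ξ‖ ^ (2 * j) = 1 := by
    rw [← zpow_natCast, ← zpow_add₀ hp.ne', ← zpow_add₀ hp.ne', ← zpow_add₀ hp.ne']
    convert zpow_zero ‖ξ‖ using 2
    push_cast; ring
  have hh : ‖ξ‖ ^ (2 * j) ≠ 0 := by positivity
  field_simp
  linear_combination (-(⟪x, ξ⟫ : ℝ) ^ j * Jt r u (x - ((⟪x, ξ⟫ : ℝ) / ‖ξ‖ ^ 2) • ξ) ξ * ((r + j).choose r : ℝ)) * this

theorem proj_orth (x : En n) {ξ : En n} (hξ : ξ ≠ 0) :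
    (⟪x - ((⟪x, ξ⟫ : ℝ) / ‖ξ‖ ^ 2) • ξ, ‖ξ‖⁻¹ • ξ⟫ : ℝ) = 0 := by
  have hp : 0 < ‖ξ‖ := norm_pos_iff.2 hξ
  rw [inner_smul_right, inner_sub_left, inner_smul_left, real_inner_self_eq_norm_sq]
  simp
  right
  field_simp
  simp

theorem norm_unit {ξ : En n} (hξ : ξ ≠ 0) : ‖(‖ξ‖⁻¹ • ξ)‖ = 1 := by
  have hp : 0 < ‖ξ‖ := norm_pos_iff.2 hξ
  rw [norm_smul]; simp [hp.ne.symm]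

/-- the function built from the tuple is the ray transform of any lift -/
theorem psi_eq {u : En n → En n → ℝ} (hu : LS u) {m : ℕ} (hd : Hom m u) (k : ℕ)
    (φ : ℕ → En n → En n → ℝ)
    (h : ∀ r ≤ k, ∀ x ξ : En n, ‖ξ‖ = 1 → (⟪x, ξ⟫ : ℝ) = 0 → φ r x ξ = Jt r u x ξ)
    (x : En n) (ξ : En n) (hξ : ξ ≠ 0) : ‖ξ‖ ^ ((m : ℤ) - 2 * k - 1) *
      ∑ r ∈ Finset.range (k + 1),
        (-1 : ℝ) ^ (k - r) * (k.choose r) * ‖ξ‖ ^ r * (⟪ξ, x⟫ : ℝ) ^ (k - r) *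
          φ r (x - ((⟪x, ξ⟫ : ℝ) / ‖ξ‖ ^ 2) • ξ) (‖ξ‖⁻¹ • ξ) = Jt k u x ξ := by
  rw [Jt_decomp hu hd k x hξ]
  congr 1
  refine Finset.sum_congr rfl fun r hr => ?_
  rw [h r (by simp at hr; omega) _ _ (norm_unit hξ) (proj_orth x hξ)]

/-- If all moments up to `k` vanish on the sphere bundle, they vanish everywhere. -/
theorem Jt_zero_of_TS {u : En n → En n → ℝ} (hu : LS u) {m : ℕ} (hd : Hom m u) (k : ℕ)
    (h : ∀ r ≤ k, ∀ x ξ : En n, ‖ξ‖ = 1 → (⟪x, ξ⟫ : ℝ) = 0 → Jt r u x ξ = 0)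
    (x : En n) (ξ : En n) (hξ : ξ ≠ 0) : Jt k u x ξ = 0 := by
  rw [← psi_eq hu hd k (fun _ _ _ => 0) (fun r hr x ξ h1 h2 => (h r hr x ξ h1 h2).symm) x ξ hξ]
  simp

/-- the polynomial attached to a Schwartz field -/
theorem exists_PolF_of_field {m : ℕ} {f : (Fin m → Fin n) → En n → ℝ} (hf : IsSchwartzField f) :
    ∃ s, PolF m s ∧ ∀ q, momRT q f = Jt q (ev s) := by
  choose g hg using hf
  refine ⟨fun ξ => ∑ I : Fin m → Fin n, (∏ r, ξ (I r)) • g I, PolF.sum _ fun I => PolF.monomial I (g I), ?_⟩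
  intro q
  funext x ξ
  unfold momRT Jt ev
  simp [← hg, mul_comm]

theorem momRT_parity {m : ℕ} (f : (Fin m → Fin n) → En n → ℝ) {q : ℕ} (hq : q ≤ m) (x ξ : En n) :
    momRT q f x (-ξ) = (-1) ^ (m - q) * momRT q f x ξ := by
  unfold momRT
  rw [← integral_const_mul, ← integral_neg_eq_self]
  refine integral_congr_ae (Eventually.of_forall fun t => ?_)
  simp only [smul_neg, neg_smul, neg_neg, PiLp.neg_apply]
  simp_rw [Finset.prod_neg]
  simp only [Finset.card_univ, Fintype.card_fin, Finset.mul_sum]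
  refine Finset.sum_congr rfl fun i _ => ?_
  obtain ⟨j, rfl⟩ := Nat.exists_eq_add_of_le hq
  rw [Nat.add_sub_cancel_left, neg_pow, pow_add]
  have : ((-1 : ℝ) ^ q) * (-1) ^ q = 1 := by rw [← mul_pow]; simp
  linear_combination (t ^ q * f i (x + t • ξ) * (-1) ^ j * ∏ r, ξ (i r)) * this

theorem necessity {m k : ℕ} (hkm : k ≤ m) (φ : ℕ → En n → En n → ℝ)
    (f : (Fin m → Fin n) → En n → ℝ) (hf : IsSchwartzField f)
    (h : ∀ ℓ, ℓ ≤ k → ∀ x ξ : En n, ‖ξ‖ = 1 → (⟪x, ξ⟫ : ℝ) = 0 → φ ℓ x ξ = momRT ℓ f x ξ) :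
    ((∀ ℓ, ℓ ≤ k → ∀ x ξ : En n, ‖ξ‖ = 1 → ⟪x, ξ⟫ = 0 →
        φ ℓ x (-ξ) = (-1 : ℝ) ^ (m - ℓ) * φ ℓ x ξ) ∧
      (∀ idx jdx : Fin (m + 1) → Fin n, ∀ x ξ : En n, ξ ≠ 0 →
        johnIter ((List.finRange (m + 1)).map (fun s => (idx s, jdx s)))
          (fun x' ξ' => ‖ξ'‖ ^ ((m : ℤ) - 2 * k - 1) *
            ∑ r ∈ Finset.range (k + 1),
              (-1 : ℝ) ^ (k - r) * (k.choose r) * ‖ξ'‖ ^ r * (⟪ξ', x'⟫ : ℝ) ^ (k - r) *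
                φ r (x' - ((⟪x', ξ'⟫ : ℝ) / ‖ξ'‖ ^ 2) • ξ') (‖ξ'‖⁻¹ • ξ'))
          x ξ = 0)) := by
  constructor
  · intro ℓ hℓ x ξ h1 h2
    rw [h ℓ hℓ x ξ h1 h2, h ℓ hℓ x (-ξ) (by simpa using h1) (by simpa using h2),
      momRT_parity f (hℓ.trans hkm)]
  · intro idx jdx x ξ hξ
    obtain ⟨s, hs, e⟩ := exists_PolF_of_field hf
    rw [johnIter_congr (psi_eq hs.LS hs.Hom k φ (fun r hr x ξ h1 h2 => by
      rw [h r hr x ξ h1 h2, e])) _ x ξ hξ, johnIter_J hs.LS k _ x ξ hξ, hs.johnIter _ (by simp)]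
    simp [Jt]

end

section
variable {n : ℕ}

theorem tg_prodMk {D V W : Type*} [NormedAddCommGroup D] [NormedSpace ℝ D]
    [NormedAddCommGroup V] [NormedSpace ℝ V] [NormedAddCommGroup W] [NormedSpace ℝ W]
    {f : D → V} {g : D → W} (hf : f.HasTemperateGrowth) (hg : g.HasTemperateGrowth) :
    (fun x => (f x, g x)).HasTemperateGrowth := by
  have := ((ContinuousLinearMap.inl ℝ V W).hasTemperateGrowth.comp hf).add
    ((ContinuousLinearMap.inr ℝ V W).hasTemperateGrowth.comp hg)
  convert this using 2
  simp

theorem exists_weight : ∃ w : 𝓢(ℝ, ℝ), ∫ t, w t = 1 := by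
  let b : ContDiffBump (0 : ℝ) := ⟨1, 2, by norm_num, by norm_num⟩
  refine ⟨(b.hasCompactSupport_normed (μ := volume)).toSchwartzMap b.contDiff_normed, ?_⟩
  exact b.integral_normed

theorem exists_lift_zero (Φ : 𝓢(En n × En n, ℝ)) (d : ℤ) : ∃ u : En n → En n → ℝ, LS u ∧
    Hom d u ∧ ∀ x ξ : En n, ‖ξ‖ = 1 → (⟪x, ξ⟫ : ℝ) = 0 → Jt 0 u x ξ = Φ (x, ξ) := by
  obtain ⟨w, hw⟩ := exists_weight
  set om : En n → En n := fun ξ => ‖ξ‖⁻¹ • ξ with hom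
  refine ⟨fun x ξ => ‖ξ‖ ^ d * (Φ (x - (⟪x, om ξ⟫ : ℝ) • om ξ, om ξ) * w (⟪x, om ξ⟫ : ℝ)), ?_, ?_, ?_⟩
  · refine LS.mulLTemp (LTemp.norm_zpow d) (?_ : LS _)
    intro ξ0 h0
    obtain ⟨β, hβ, hc, hβ0, hβ1, h1, hz⟩ := exists_bump ξ0 h0
    set om' : En n → En n := fun ξ => β ξ • om ξ with hom'
    have hsm : ContDiff ℝ ∞ om' := bump_mul_contDiff hβ hz fun ξ hξ =>
      ((contDiffAt_norm ℝ hξ).inv (norm_ne_zero_iff.2 hξ)).smul contDiffAt_id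
    have hcs : HasCompactSupport om' := hc.smul_right
    have hle : ∀ ξ, ‖om' ξ‖ ≤ 1 := by
      intro ξ
      simp only [hom', hom]
      rw [norm_smul, Real.norm_eq_abs, abs_of_nonneg (hβ0 ξ)]
      by_cases hξ : ξ = 0
      · simp [hξ]
      · rw [norm_unit hξ]; simpa using hβ1 ξ
    have t1 : (fun p : En n × En n => p.1).HasTemperateGrowth :=
      (ContinuousLinearMap.fst ℝ (En n) (En n)).hasTemperateGrowth
    have t2 : (fun p : En n × En n => p.2).HasTemperateGrowth :=
      (ContinuousLinearMap.snd ℝ (En n) (En n)).hasTemperateGrowth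
    have t3 : (fun p : En n × En n => om' p.2).HasTemperateGrowth :=
      (hcs.hasTemperateGrowth hsm).comp t2
    have t4 : (fun p : En n × En n => (⟪p.1, om' p.2⟫ : ℝ)).HasTemperateGrowth :=
      (innerSL ℝ (E := En n)).bilinear_hasTemperateGrowth t1 t3
    have t5 := tg_prodMk (tg_prodMk (t1.sub (t4.smul t3)) t3) (tg_prodMk t4 t2)
    obtain ⟨T1, hT1⟩ := exists_tensor w (hc.toSchwartzMap hβ)
    obtain ⟨T, hT⟩ := exists_tensor Φ T1
    refine ⟨SchwartzMap.compCLM ℝ t5 ⟨1, 2, fun p => ?_⟩ T, ?_⟩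
    · obtain ⟨x, ξ⟩ := p
      simp only [pow_one, Pi.sub_apply, Pi.smul_apply', Prod.norm_mk]
      set A := ‖x - (⟪x, om' ξ⟫ : ℝ) • om' ξ‖
      have e1 : ‖x‖ ≤ A + ‖(⟪x, om' ξ⟫ : ℝ)‖ := by
        have := norm_add_le (x - (⟪x, om' ξ⟫ : ℝ) • om' ξ) ((⟪x, om' ξ⟫ : ℝ) • om' ξ)
        rw [sub_add_cancel, norm_smul] at this
        have h3 : ‖(⟪x, om' ξ⟫ : ℝ)‖ * ‖om' ξ‖ ≤ ‖(⟪x, om' ξ⟫ : ℝ)‖ :=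
          mul_le_of_le_one_right (norm_nonneg _) (hle ξ)
        linarith
      refine max_le ?_ ?_
      · have a1 := le_max_left (max A ‖om' ξ‖) (max ‖(⟪x, om' ξ⟫ : ℝ)‖ ‖ξ‖)
        have a2 := le_max_right (max A ‖om' ξ‖) (max ‖(⟪x, om' ξ⟫ : ℝ)‖ ‖ξ‖)
        have a3 := le_max_left A ‖om' ξ‖
        have a4 := le_max_left ‖(⟪x, om' ξ⟫ : ℝ)‖ ‖ξ‖
        linarith
      · have a2 := le_max_right (max A ‖om' ξ‖) (max ‖(⟪x, om' ξ⟫ : ℝ)‖ ‖ξ‖)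
        have a4 := le_max_right ‖(⟪x, om' ξ⟫ : ℝ)‖ ‖ξ‖
        have := norm_nonneg ξ
        linarith
    · filter_upwards [h1] with ξ hξ x
      change _ = T ((x - (⟪x, om' ξ⟫ : ℝ) • om' ξ, om' ξ), ((⟪x, om' ξ⟫ : ℝ), ξ))
      have e : om' ξ = om ξ := by simp [hom', hξ]
      rw [hT, hT1, e]
      change _ = _ * (_ * β ξ)
      rw [hξ, mul_one]
  · intro x ξ c hc hξ
    have e : om (c • ξ) = om ξ := by
      simp only [hom, norm_smul, Real.norm_eq_abs, abs_of_pos hc, smul_smul]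
      congr 1
      field_simp
    simp only [e, norm_smul, Real.norm_eq_abs, abs_of_pos hc, mul_zpow]
    ring
  · intro x ξ h1 h2
    have e : om ξ = ξ := by simp [hom, h1]
    have e2 : ∀ t : ℝ, (⟪x + t • ξ, ξ⟫ : ℝ) = t := by
      intro t
      rw [inner_add_left, inner_smul_left, real_inner_self_eq_norm_sq, h1, h2]
      simp
    unfold Jt
    simp only [e, h1, one_zpow, e2, add_sub_cancel_right, pow_zero, one_mul]
    rw [integral_const_mul, hw, mul_one]

theorem J_Dx_iter {p : En n → En n → ℝ} (hp : LS p) (l q : ℕ) (x : En n) {ξ : En n}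
    (hξ : ξ ≠ 0) :
    LS (Dx^[l] p) ∧ Jt q (Dx^[l] p) x ξ = (-1) ^ l * q.descFactorial l * Jt (q - l) p x ξ := by
  induction l generalizing q with
  | zero => exact ⟨hp, by simp⟩
  | succ l ih =>
    rw [Function.iterate_succ_apply']
    refine ⟨(ih 0).1.Dx, ?_⟩
    rw [J_Dx (ih 0).1 q x hξ, (ih (q - 1)).2]
    rcases q with _ | q
    · simp
    · rw [Nat.succ_descFactorial_succ]
      simp only [Nat.add_sub_cancel, Nat.add_sub_add_right]
      push_cast
      ring

theorem Hom_Dx_iter {d : ℤ} {p : En n → En n → ℝ} (hp : LS p) (hd : Hom d p) (l : ℕ) :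
    Hom (d + l) (Dx^[l] p) ∧ LS (Dx^[l] p) := by
  induction l with
  | zero => simpa using ⟨hd, hp⟩
  | succ l ih =>
    rw [Function.iterate_succ_apply']
    refine ⟨?_, ih.2.Dx⟩
    have := ih.1.Dx ih.2
    rw [add_assoc] at this
    exact_mod_cast this

/-- weight -/
def wt (l : ℕ) (g : En n → En n → ℝ) : En n → En n → ℝ :=
  fun x ξ => (⟪x, ξ⟫ : ℝ) ^ l * (‖ξ‖ ^ (-2 * l : ℤ) * g x ξ)

theorem wt_LS {g : En n → En n → ℝ} (hg : LS g) (l : ℕ) : LS (wt l g) :=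
  LS.mulLTemp (LTemp.inner.pow l) (LS.mulLTemp (LTemp.norm_zpow _) hg)

theorem wt_Hom {g : En n → En n → ℝ} {d : ℤ} (hg : Hom d g) (l : ℕ) : Hom (d - l) (wt l g) := by
  intro x ξ c hc hξ
  unfold wt
  rw [hg x ξ c hc hξ, norm_smul, Real.norm_eq_abs, abs_of_pos hc, inner_smul_right, mul_pow,
    mul_zpow]
  have : c ^ l * c ^ (-2 * l : ℤ) * c ^ d = c ^ (d - l) := by
    rw [← zpow_natCast, ← zpow_add₀ hc.ne', ← zpow_add₀ hc.ne']
    congr 1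
    ring
  rw [← this]
  ring

theorem J_wt (g : En n → En n → ℝ) (l : ℕ) (x : En n) {ξ : En n} (hξ : ξ ≠ 0) :
    Jt 0 (wt l g) x ξ = Jt l g (x + (-((⟪x, ξ⟫ : ℝ) / ‖ξ‖ ^ 2)) • ξ) ξ := by
  have hp : 0 < ‖ξ‖ := norm_pos_iff.2 hξ
  set a := (⟪x, ξ⟫ : ℝ) / ‖ξ‖ ^ 2 with ha
  unfold Jt wt
  have h1 : ∀ t : ℝ, t ^ 0 * ((⟪x + t • ξ, ξ⟫ : ℝ) ^ l * (‖ξ‖ ^ (-2 * l : ℤ) * g (x + t • ξ) ξ)) =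
      (fun s : ℝ => s ^ l * g (x + (-a) • ξ + s • ξ) ξ) (t + a) := by
    intro t
    simp only
    rw [inner_add_left, inner_smul_left, real_inner_self_eq_norm_sq]
    have e1 : x + (-a) • ξ + (t + a) • ξ = x + t • ξ := by
      rw [add_assoc, ← add_smul]; congr 2; ring
    have e2 : (⟪x, ξ⟫ : ℝ) = a * ‖ξ‖ ^ 2 := by rw [ha]; field_simp
    have e3 : (t + a) ^ l = (‖ξ‖ ^ 2 * (t + a)) ^ l * ‖ξ‖ ^ (-2 * l : ℤ) := by
      rw [mul_pow, ← pow_mul, mul_comm (‖ξ‖ ^ (2 * l)), mul_assoc, ← zpow_natCast ‖ξ‖,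
        ← zpow_add₀ hp.ne']
      simp
    rw [e1, e2, e3]
    simp
    ring
  simp_rw [h1]
  rw [integral_add_right_eq_self (fun s : ℝ => s ^ l * g (x + (-a) • ξ + s • ξ) ξ) a]

theorem Jt_add {u v : En n → En n → ℝ} (hu : LS u) (hv : LS v) (q : ℕ) (x : En n) {ξ : En n}
    (hξ : ξ ≠ 0) : Jt q (fun x ξ => u x ξ + v x ξ) x ξ = Jt q u x ξ + Jt q v x ξ := by
  unfold Jt
  rw [← integral_add (hu.integrable q x hξ) (hv.integrable q x hξ)]
  simp [mul_add]

theorem Jt_sub {u v : En n → En n → ℝ} (hu : LS u) (hv : LS v) (q : ℕ) (x : En n) {ξ : En n}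
    (hξ : ξ ≠ 0) : Jt q (fun x ξ => u x ξ - v x ξ) x ξ = Jt q u x ξ - Jt q v x ξ := by
  unfold Jt
  rw [← integral_sub (hu.integrable q x hξ) (hv.integrable q x hξ)]
  simp [mul_sub]

theorem Jt_const_mul (u : En n → En n → ℝ) (c : ℝ) (q : ℕ) (x ξ : En n) :
    Jt q (fun x ξ => c * u x ξ) x ξ = c * Jt q u x ξ := by
  unfold Jt
  rw [← integral_const_mul]
  congr 1; funext t; ring

theorem ne_zero_of_norm_one {ξ : En n} (h : ‖ξ‖ = 1) : ξ ≠ 0 := by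
  rintro rfl; simp at h

theorem exists_lift (m : ℕ) (φ : ℕ → En n → En n → ℝ) (N : ℕ)
    (hφ : ∀ ℓ, ℓ < N → IsSchwartzOnTS (φ ℓ)) : ∃ U : En n → En n → ℝ, LS U ∧ Hom m U ∧
    ∀ r < N, ∀ x ξ : En n, ‖ξ‖ = 1 → (⟪x, ξ⟫ : ℝ) = 0 → φ r x ξ = Jt r U x ξ := by
  induction N with
  | zero => exact ⟨fun _ _ => 0, fun _ _ => ⟨0, by simp⟩, fun _ _ _ _ _ => by simp, by simp⟩
  | succ l ih =>
    obtain ⟨U, hU, hUd, hUr⟩ := ih fun r hr => hφ r (by omega)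
    obtain ⟨Φ, hΦ⟩ := hφ l (by omega)
    obtain ⟨u0, hu0, hd0, h0⟩ := exists_lift_zero Φ (m - l)
    set c : ℝ := (-1) ^ l / (l.factorial : ℝ) with hc
    set p := fun x ξ => c * ((fun x ξ => u0 x ξ - wt l U x ξ) x ξ) with hp
    have hw := wt_LS hU l
    have hpL : LS p := (hu0.sub hw).const_mul c
    have hpd : Hom (m - l) p := (hd0.sub (wt_Hom hUd l)).const_mul c
    obtain ⟨hD, hDL⟩ := Hom_Dx_iter hpL hpd l
    refine ⟨fun x ξ => U x ξ + Dx^[l] p x ξ, hU.add hDL, hUd.add (by simpa using hD), ?_⟩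
    intro r hr x ξ h1 h2
    have hξ := ne_zero_of_norm_one h1
    rw [Jt_add hU hDL r x hξ, (J_Dx_iter hpL l r x hξ).2]
    rcases Nat.lt_or_ge r l with hrl | hrl
    · rw [hUr r hrl x ξ h1 h2, Nat.descFactorial_of_lt hrl]
      simp
    · obtain rfl : r = l := by omega
      rw [Nat.descFactorial_self, Nat.sub_self, hp, Jt_const_mul, Jt_sub hu0 hw 0 x hξ,
        h0 x ξ h1 h2, J_wt U r x hξ, h2, hΦ x ξ h1 h2, hc]
      have e : ((-1 : ℝ) ^ r) * (-1) ^ r = 1 := by rw [← mul_pow]; simp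
      have : (r.factorial : ℝ) ≠ 0 := by positivity
      simp only [zero_div, neg_zero, zero_smul, add_zero]
      field_simp
      linear_combination (Jt r U x ξ - Φ (x, ξ)) * e

end

/-- Fourier transform in the `x` variable -/
def FT {n : ℕ} (u : En n → En n → ℝ) (y ξ : En n) : ℂ := 𝓕 (fun x => (u x ξ : ℂ)) y

section
variable {n : ℕ}

theorem FT_eq (u : En n → En n → ℝ) (y ξ : En n) :
    FT u y ξ = ∫ x, Real.fourierChar (-(⟪x, y⟫ : ℝ)) • (u x ξ : ℂ) := Real.fourier_eq _ _

theorem LS.cslice {u : En n → En n → ℝ} (hu : LS u) {ξ : En n} (hξ : ξ ≠ 0) :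
    ∃ s : 𝓢(En n, ℂ), ∀ x, s x = (u x ξ : ℂ) := by
  obtain ⟨s, hs⟩ := hu.slice hξ
  exact ⟨SchwartzMap.postcompCLM (𝕜 := ℝ) Complex.ofRealCLM s, fun x => by
    rw [SchwartzMap.postcompCLM_apply, hs]; rfl⟩

theorem FT_slice {u : En n → En n → ℝ} {ξ : En n} {s : 𝓢(En n, ℂ)} (hs : ∀ x, s x = (u x ξ : ℂ))
    (y : En n) : FT u y ξ = (𝓕 s) y := by
  rw [SchwartzMap.fourier_coe]
  unfold FT
  rw [show (fun x => (u x ξ : ℂ)) = s from funext fun x => (hs x).symm]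

/-- The Fourier transform in `x` as a Schwartz function. -/
theorem LS.FTslice {u : En n → En n → ℝ} (hu : LS u) {ξ : En n} (hξ : ξ ≠ 0) :
    ∃ s : 𝓢(En n, ℂ), ∀ y, s y = FT u y ξ := by
  obtain ⟨s, hs⟩ := hu.cslice hξ
  exact ⟨𝓕 s, fun y => (FT_slice hs y).symm⟩

theorem LS.cintegrable {u : En n → En n → ℝ} (hu : LS u) {ξ : En n} (hξ : ξ ≠ 0) (y : En n) :
    Integrable (fun x => Real.fourierChar (-(⟪x, y⟫ : ℝ)) • (u x ξ : ℂ)) := by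
  obtain ⟨s, hs⟩ := hu.cslice hξ
  simp_rw [← hs]
  exact (Real.fourierIntegral_convergent_iff y).2 s.integrable

theorem FT_add {u v : En n → En n → ℝ} (hu : LS u) (hv : LS v) (y : En n) {ξ : En n} (hξ : ξ ≠ 0) :
    FT (fun x ξ => u x ξ + v x ξ) y ξ = FT u y ξ + FT v y ξ := by
  simp only [FT_eq]
  rw [← integral_add (hu.cintegrable hξ y) (hv.cintegrable hξ y)]
  simp [smul_add]

theorem FT_sub {u v : En n → En n → ℝ} (hu : LS u) (hv : LS v) (y : En n) {ξ : En n} (hξ : ξ ≠ 0) :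
    FT (fun x ξ => u x ξ - v x ξ) y ξ = FT u y ξ - FT v y ξ := by
  simp only [FT_eq]
  rw [← integral_sub (hu.cintegrable hξ y) (hv.cintegrable hξ y)]
  simp [smul_sub]

theorem FT_mul (a : En n → ℝ) (u : En n → En n → ℝ) (y : En n) (ξ : En n) :
    FT (fun x ξ => a ξ * u x ξ) y ξ = a ξ * FT u y ξ := by
  simp only [FT_eq]
  rw [← integral_const_mul]
  congr 1; funext x
  push_cast
  simp only [Circle.smul_def, smul_eq_mul]
  ring

theorem FT_sum {ι : Type*} (s : Finset ι) {u : ι → En n → En n → ℝ} (hu : ∀ i, LS (u i))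
    (y : En n) {ξ : En n} (hξ : ξ ≠ 0) :
    FT (fun x ξ => ∑ i ∈ s, u i x ξ) y ξ = ∑ i ∈ s, FT (u i) y ξ := by
  simp only [FT_eq]
  rw [← integral_finsetSum _ fun i _ => (hu i).cintegrable hξ y]
  simp [Finset.smul_sum]

theorem FT_Hom {u : En n → En n → ℝ} {d : ℤ} (hd : Hom d u) (y : En n) {ξ : En n} (hξ : ξ ≠ 0)
    {c : ℝ} (hc : 0 < c) : FT u y (c • ξ) = (c : ℂ) ^ d * FT u y ξ := by
  have := FT_mul (fun _ => c ^ d) u y ξ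
  push_cast at this
  rw [← this]
  unfold FT
  simp_rw [hd _ ξ c hc hξ]

theorem FT_congr {u v : En n → En n → ℝ} {ξ : En n} (h : ∀ x, u x ξ = v x ξ) (y : En n) :
    FT u y ξ = FT v y ξ := by
  unfold FT
  simp_rw [h]

theorem cslice_deriv {u : En n → En n → ℝ} {ξ : En n} (hξ : ξ ≠ 0) (hu : LS u) {s : 𝓢(En n, ℂ)}
    (hs : ∀ x, s x = (u x ξ : ℂ)) (j : Fin n) (x : En n) :
    (∂_{(EuclideanSpace.single j 1 : En n)} s) x = (pdx j u x ξ : ℂ) := by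
  rw [SchwartzMap.lineDerivOp_apply_eq_fderiv]
  have h := (hu.diff_left hξ x).hasFDerivAt
  have h2 := Complex.ofRealCLM.hasFDerivAt.comp x h
  have e : (s : En n → ℂ) = Complex.ofRealCLM ∘ fun x' => u x' ξ := funext hs
  rw [e, h2.fderiv]
  rfl

theorem FT_pdx {u : En n → En n → ℝ} (hu : LS u) (j : Fin n) (y : En n) {ξ : En n} (hξ : ξ ≠ 0) :
    FT (pdx j u) y ξ = 2 * Real.pi * Complex.I * y j * FT u y ξ := by
  obtain ⟨s, hs⟩ := hu.cslice hξ
  rw [FT_slice hs, FT_slice (fun x => cslice_deriv hξ hu hs j x), SchwartzMap.fourier_lineDerivOp_eq,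
    smul_apply, SchwartzMap.smulLeftCLM_apply_apply (Function.hasTemperateGrowth_inner_left _)]
  simp [mul_assoc, EuclideanSpace.inner_single_right]

theorem FT_deriv_y {u : En n → En n → ℝ} (hu : LS u) {s : 𝓢(En n, ℂ)} {ξ : En n} (hξ : ξ ≠ 0)
    (hs : ∀ y, s y = FT u y ξ) (v y : En n) :
    fderiv ℝ s y v = -(2 * Real.pi * Complex.I) * FT (fun x ξ => (⟪x, v⟫ : ℝ) * u x ξ) y ξ := by
  obtain ⟨r, hr⟩ := hu.cslice hξ
  have e : s = 𝓕 r := by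
    ext y; rw [hs, FT_slice hr]
  rw [← SchwartzMap.lineDerivOp_apply_eq_fderiv, e, SchwartzMap.lineDerivOp_fourier_eq,
    FourierTransform.fourier_smul, smul_apply, smul_eq_mul]
  congr 1
  rw [FT_slice (s := SchwartzMap.smulLeftCLM ℂ (inner ℝ · v) r)]
  intro x
  rw [SchwartzMap.smulLeftCLM_apply_apply (Function.hasTemperateGrowth_inner_left _), hr]
  simp

theorem schwartz_slice_bound {F : Type*} [NormedAddCommGroup F] [NormedSpace ℝ F]
    (U : 𝓢(En n × En n, F)) : ∃ b : En n → ℝ, Integrable b ∧ ∀ x ξ, ‖U (x, ξ)‖ ≤ b x := by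
  obtain ⟨C, hC0, hC⟩ := schwartz_bound U (n + 1)
  refine ⟨fun x => C * (1 + ‖x‖) ^ (-((n : ℝ) + 1)), ?_, fun x ξ => ?_⟩
  · exact (integrable_one_add_norm (by simp)).const_mul C
  · have h := hC (x, ξ)
    have h1 : ‖x‖ ≤ ‖(x, ξ)‖ := norm_fst_le (x, ξ)
    change ‖U (x, ξ)‖ ≤ C * (1 + ‖x‖) ^ (-((n : ℝ) + 1))
    rw [Real.rpow_neg (by positivity), ← div_eq_mul_inv, le_div_iff₀ (by positivity)]
    rw [show (n : ℝ) + 1 = ((n + 1 : ℕ) : ℝ) by push_cast; rfl, Real.rpow_natCast]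
    refine le_trans ?_ h
    rw [mul_comm]
    gcongr

theorem char_cont : Continuous fun p : En n × En n =>
    ((Real.fourierChar (-(⟪p.1, p.2⟫ : ℝ)) : Circle) : ℂ) := by
  refine continuous_subtype_val.comp (Real.continuous_fourierChar.comp ?_)
  fun_prop

theorem char_contL (y : En n) : Continuous fun x : En n =>
    ((Real.fourierChar (-(⟪x, y⟫ : ℝ)) : Circle) : ℂ) := by
  refine continuous_subtype_val.comp (Real.continuous_fourierChar.comp ?_)
  fun_prop

theorem char_contR (x : En n) : Continuous fun y : En n =>
    ((Real.fourierChar (-(⟪x, y⟫ : ℝ)) : Circle) : ℂ) := by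
  refine continuous_subtype_val.comp (Real.continuous_fourierChar.comp ?_)
  fun_prop

theorem slice_contL (U : 𝓢(En n × En n, ℝ)) (ξ : En n) :
    Continuous fun x : En n => ((U (x, ξ) : ℝ) : ℂ) :=
  Complex.continuous_ofReal.comp (U.continuous.comp (f := fun x : En n => (x, ξ)) (by fun_prop))

theorem slice_contR (U : 𝓢(En n × En n, ℝ)) (x : En n) :
    Continuous fun ξ : En n => ((U (x, ξ) : ℝ) : ℂ) :=
  Complex.continuous_ofReal.comp (U.continuous.comp (f := fun ξ : En n => (x, ξ)) (by fun_prop))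

theorem FT_continuousAt {u : En n → En n → ℝ} (hu : LS u) (y0 : En n) {ξ0 : En n} (h0 : ξ0 ≠ 0) :
    ContinuousAt (fun p : En n × En n => FT u p.1 p.2) (y0, ξ0) := by
  obtain ⟨U, hU⟩ := hu ξ0 h0
  obtain ⟨b, hb, hb'⟩ := schwartz_slice_bound U
  have hc : Continuous (fun p : En n × En n =>
      ∫ x, Real.fourierChar (-(⟪x, p.1⟫ : ℝ)) • (U (x, p.2) : ℂ)) := by
    refine continuous_of_dominated (bound := b) (fun p => ?_) (fun p => ?_) hb ?_
    · refine Continuous.aestronglyMeasurable ?_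
      simp only [Circle.smul_def]
      exact (char_contL p.1).smul (slice_contL U p.2)
    · refine Eventually.of_forall fun x => ?_
      rw [Circle.norm_smul, Complex.norm_real]
      exact hb' x p.2
    · refine Eventually.of_forall fun x => ?_
      simp only [Circle.smul_def]
      exact ((char_contR x).comp continuous_fst).smul ((slice_contR U x).comp continuous_snd)
  refine hc.continuousAt.congr ?_
  have : Tendsto (fun p : En n × En n => p.2) (𝓝 (y0, ξ0)) (𝓝 ξ0) := continuous_snd.tendsto _
  filter_upwards [this.eventually hU] with p hp
  rw [FT_eq]
  simp_rw [hp]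

theorem FT_deriv_xi {u : En n → En n → ℝ} (hu : LS u) (y : En n) {ξ0 : En n} (h0 : ξ0 ≠ 0) :
    ∃ L : En n →L[ℝ] ℂ, HasFDerivAt (fun ξ => FT u y ξ) L ξ0 ∧
      ∀ j, L (EuclideanSpace.single j 1) = FT (pdxi j u) y ξ0 := by
  obtain ⟨U, hU⟩ := hu ξ0 h0
  obtain ⟨b, hb, hb'⟩ := schwartz_slice_bound (SchwartzMap.fderivCLM ℝ _ _ U)
  have hcf : Continuous (fderiv ℝ U) := (U.smooth 1).continuous_fderiv (by simp)
  set c : En n → ℂ := fun x => ((Real.fourierChar (-(⟪x, y⟫ : ℝ)) : Circle) : ℂ) with hcdef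
  have hcc : Continuous c := char_contL y
  have hcn : ∀ x, ‖c x‖ = 1 := fun x => Circle.norm_coe _
  set F' : En n → En n → (En n →L[ℝ] ℂ) := fun ξ x => c x •
    (Complex.ofRealCLM.comp ((fderiv ℝ U (x, ξ)).comp (ContinuousLinearMap.inr ℝ (En n) (En n)))) with hF'
  have hF'c : Continuous (F' ξ0) := by
    refine hcc.smul ?_
    refine continuous_const.clm_comp ((hcf.comp (f := fun x : En n => (x, ξ0)) (by fun_prop)).clm_comp continuous_const)
  have hbd : ∀ x, ∀ ξ, ‖F' ξ x‖ ≤ b x := by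
    intro x ξ
    rw [hF', norm_smul, hcn, one_mul]
    refine le_trans ?_ (hb' x ξ)
    refine (ContinuousLinearMap.opNorm_comp_le _ _).trans ?_
    rw [Complex.ofRealCLM_norm, one_mul]
    refine (ContinuousLinearMap.opNorm_comp_le _ _).trans ?_
    rw [SchwartzMap.fderivCLM_apply]
    exact mul_le_of_le_one_right (norm_nonneg _) (ContinuousLinearMap.norm_inr_le_one ℝ (En n) (En n))
  have hIntg : Integrable (F' ξ0) :=
    hb.mono' hF'c.aestronglyMeasurable (Eventually.of_forall fun x => hbd x ξ0)
  have hUL : LS (fun x ξ => U (x, ξ)) := fun _ _ => ⟨U, Eventually.of_forall fun _ _ => rfl⟩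
  have key : HasFDerivAt (fun ξ => ∫ x, c x • (U (x, ξ) : ℂ)) (∫ x, F' ξ0 x) ξ0 := by
    refine hasFDerivAt_integral_of_dominated_of_fderiv_le (𝕜 := ℝ) (s := Set.univ) (bound := b)
      (F' := F') univ_mem ?_ ?_ hF'c.aestronglyMeasurable
      (Eventually.of_forall fun x ξ _ => hbd x ξ) hb ?_
    · refine Eventually.of_forall fun ξ => (hcc.smul (slice_contL U ξ)).aestronglyMeasurable
    · simpa [Circle.smul_def] using hUL.cintegrable h0 y
    · refine Eventually.of_forall fun x ξ _ => ?_
      exact (Complex.ofRealCLM.hasFDerivAt.comp ξ (hasFDerivAt_right U x ξ)).const_smul (c x)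
  refine ⟨∫ x, F' ξ0 x, key.congr_of_eventuallyEq ?_, fun j => ?_⟩
  · filter_upwards [hU] with ξ hξ
    rw [FT_eq]
    simp_rw [hξ]
    rfl
  · rw [ContinuousLinearMap.integral_apply hIntg, FT_eq]
    congr 1; funext x
    rw [pdxi_eq hU j x, SchwartzMap.lineDerivOp_apply_eq_fderiv]
    rfl

/-- Decay of the Fourier transform, uniformly on the unit sphere. -/
theorem FT_bound {u : En n → En n → ℝ} (hu : LS u) : ∃ K : ℝ, ∀ y ξ, ‖ξ‖ = 1 → ‖FT u y ξ‖ ≤ K := by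
  have hloc : ∀ ξ0 ∈ Metric.sphere (0 : En n) 1, ∃ t ∈ 𝓝[Metric.sphere (0 : En n) 1] ξ0,
      ∃ K : ℝ, ∀ ξ ∈ t, ∀ y, ‖FT u y ξ‖ ≤ K := by
    intro ξ0 h
    have h0 : ξ0 ≠ 0 := ne_zero_of_norm_one (by simpa using h)
    obtain ⟨U, hU⟩ := hu ξ0 h0
    obtain ⟨b, hb, hb'⟩ := schwartz_slice_bound U
    refine ⟨_, mem_nhdsWithin_of_mem_nhds hU, ∫ x, b x, fun ξ hξ y => ?_⟩
    rw [FT_eq]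
    refine norm_integral_le_of_norm_le hb (Eventually.of_forall fun x => ?_)
    rw [Circle.norm_smul, Complex.norm_real, hξ x]
    exact hb' x ξ
  have := IsCompact.induction_on (isCompact_sphere (0 : En n) 1)
    (p := fun s => ∃ K : ℝ, ∀ ξ ∈ s, ∀ y, ‖FT u y ξ‖ ≤ K) ⟨0, by simp⟩
    (fun s t hst ⟨K, hK⟩ => ⟨K, fun ξ hξ => hK ξ (hst hξ)⟩)
    (fun s t ⟨K, hK⟩ ⟨K', hK'⟩ => ⟨max K K', by
      rintro ξ (h | h) y
      · exact (hK ξ h y).trans (le_max_left _ _)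
      · exact (hK' ξ h y).trans (le_max_right _ _)⟩) hloc
  obtain ⟨K, hK⟩ := this
  exact ⟨K, fun y ξ h => hK ξ (by simpa using h) y⟩

theorem norm_le_sum_abs (y : En n) : ‖y‖ ≤ ∑ j, |y j| := by
  have := clm_eq_sum (ContinuousLinearMap.id ℝ (En n)) y
  simp only [ContinuousLinearMap.id_apply] at this
  conv_lhs => rw [this]
  refine (norm_sum_le _ _).trans (Finset.sum_le_sum fun j _ => ?_)
  rw [norm_smul]
  simp

theorem FT_decay (N : ℕ) : ∀ {u : En n → En n → ℝ} (_ : LS u),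
    ∃ K : ℝ, ∀ y ξ, ‖ξ‖ = 1 → ‖y‖ ^ N * ‖FT u y ξ‖ ≤ K := by
  induction N with
  | zero => intro u hu; simpa using FT_bound hu
  | succ N ih =>
    intro u hu
    choose K hK using fun j => ih (hu.pdx j)
    refine ⟨∑ j, K j, fun y ξ h => ?_⟩
    have hξ := ne_zero_of_norm_one h
    have h1 : ‖y‖ ^ (N + 1) * ‖FT u y ξ‖ ≤ ∑ j, |y j| * (‖y‖ ^ N * ‖FT u y ξ‖) := by
      rw [← Finset.sum_mul, pow_succ']
      have := mul_le_mul_of_nonneg_right (norm_le_sum_abs y)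
        (by positivity : 0 ≤ ‖y‖ ^ N * ‖FT u y ξ‖)
      linarith
    refine h1.trans (Finset.sum_le_sum fun j _ => ?_)
    refine le_trans ?_ (hK j y ξ h)
    rw [FT_pdx hu j y hξ]
    simp only [norm_mul, Complex.norm_real, Complex.norm_I, Real.norm_eq_abs]
    have : 1 ≤ 2 * Real.pi := by have := Real.pi_gt_three; linarith
    rw [abs_of_pos Real.pi_pos, Complex.norm_ofNat]
    have h3 : 0 ≤ |y j| * (‖y‖ ^ N * ‖FT u y ξ‖) := by positivity
    nlinarith

theorem FT_john {u : En n → En n → ℝ} (hu : LS u) (i j : Fin n) (y : En n) {ξ : En n} (hξ : ξ ≠ 0) :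
    FT (johnOp i j u) y ξ = 2 * Real.pi * Complex.I *
      (y i * FT (pdxi j u) y ξ - y j * FT (pdxi i u) y ξ) := by
  unfold johnOp
  rw [FT_sub ((hu.pdxi j).pdx i) ((hu.pdxi i).pdx j) y hξ, FT_pdx (hu.pdxi j) i y hξ,
    FT_pdx (hu.pdxi i) j y hξ]
  ring

theorem FT_euler {u : En n → En n → ℝ} {d : ℤ} (hu : LS u) (hd : Hom d u) (y : En n) {ξ : En n}
    (hξ : ξ ≠ 0) : ∑ j, (ξ j : ℂ) * FT (pdxi j u) y ξ = d * FT u y ξ := by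
  have h1 : FT (fun x ξ => ∑ j, ξ j * pdxi j u x ξ) y ξ = FT (fun x ξ => (d : ℝ) * u x ξ) y ξ :=
    FT_congr (fun x => hd.euler hu x hξ) y
  rw [FT_sum _ (fun j => LS.mulLTemp (LTemp.xi j) (hu.pdxi j)) y hξ, FT_mul (fun _ => (d : ℝ))] at h1
  simp_rw [fun j : Fin n => FT_mul (fun ξ => ξ j) (pdxi j u) y ξ] at h1
  simpa using h1

end

section
variable {n : ℕ}

/-- The Fourier slice identity. -/
theorem FS_key {u : En n → En n → ℝ} (hu : LS u) {ξ y : En n} (hξ : ‖ξ‖ = 1) (hy : (⟪y, ξ⟫ : ℝ) = 0)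
    {w : ℝ → ℂ} (hw : Continuous w) (hwi : Integrable w) :
    Integrable (fun x : En n => ((Real.fourierChar (-(⟪x, y⟫ : ℝ)) : Circle) : ℂ) * w ⟪x, ξ⟫ * (Jt 0 u x ξ : ℂ)) ∧
    FT u y ξ * ∫ t, w t =
      ∫ x : En n, ((Real.fourierChar (-(⟪x, y⟫ : ℝ)) : Circle) : ℂ) * w ⟪x, ξ⟫ * (Jt 0 u x ξ : ℂ) := by
  have hξ0 : ξ ≠ 0 := ne_zero_of_norm_one hξ
  obtain ⟨s, hs⟩ := hu.cslice hξ0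
  set e : En n → ℂ := fun x => ((Real.fourierChar (-(⟪x, y⟫ : ℝ)) : Circle) : ℂ) with he
  have hec : Continuous e := char_contL y
  have hen : ∀ x, ‖e x‖ = 1 := fun x => Circle.norm_coe _
  have heshift : ∀ x (t : ℝ), e (x + (-t) • ξ) = e x := by
    intro x t
    have h2 : (⟪ξ, y⟫ : ℝ) = 0 := by rw [real_inner_comm]; exact hy
    have : (⟪x + (-t) • ξ, y⟫ : ℝ) = ⟪x, y⟫ := by
      rw [inner_add_left, inner_smul_left, h2]; simp
    simp only [he, this]
  have hin : ∀ x (t : ℝ), t + (⟪x + (-t) • ξ, ξ⟫ : ℝ) = ⟪x, ξ⟫ := by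
    intro x t
    rw [inner_add_left, inner_smul_left, real_inner_self_eq_norm_sq, hξ]; simp
  set h : En n × ℝ → ℂ := fun p => (e p.1 * s p.1) * w (p.2 + ⟪p.1, ξ⟫) with hh
  set h' : En n × ℝ → ℂ := fun p => h (p.1 + (-p.2) • ξ, p.2) with hh'
  have hsc : Continuous s := s.continuous
  have hhc : Continuous h := by
    refine ((hec.comp continuous_fst).mul (hsc.comp continuous_fst)).mul (hw.comp ?_)
    fun_prop
  have hh'c : Continuous h' := hhc.comp (by fun_prop)
  have hes : Integrable (fun x => e x * s x) := by
    refine s.integrable.norm.mono' (hec.mul hsc).aestronglyMeasurable (Eventually.of_forall fun x => ?_)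
    rw [norm_mul, hen, one_mul]
  have hhi : Integrable h (volume.prod volume) := by
    rw [integrable_prod_iff hhc.aestronglyMeasurable]
    refine ⟨Eventually.of_forall fun x => ?_, ?_⟩
    · exact (hwi.comp_add_right (⟪x, ξ⟫ : ℝ)).const_mul (e x * s x)
    · have : ∀ x : En n, ∫ t, ‖h (x, t)‖ = ‖e x * s x‖ * ∫ t, ‖w t‖ := by
        intro x
        simp only [hh, norm_mul (e x * s x), integral_const_mul]
        rw [integral_add_right_eq_self (fun t => ‖w t‖)]
      simp_rw [this]
      exact hes.norm.mul_const _
  have hhi' : Integrable h' (volume.prod volume) := by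
    have h1 := (integrable_prod_iff' hhc.aestronglyMeasurable).1 hhi
    rw [integrable_prod_iff' hh'c.aestronglyMeasurable]
    refine ⟨?_, ?_⟩
    · filter_upwards [h1.1] with t ht
      exact ht.comp_add_right ((-t) • ξ)
    · refine h1.2.congr (Eventually.of_forall fun t => ?_)
      exact (integral_add_right_eq_self (fun x => ‖h (x, t)‖) ((-t) • ξ)).symm
  have hJ : ∀ x, ∫ t, h' (x, t) = e x * w ⟪x, ξ⟫ * (Jt 0 u x ξ : ℂ) := by
    intro x
    have : ∀ t : ℝ, h' (x, t) = e x * w ⟪x, ξ⟫ * (fun t : ℝ => ((u (x + t • ξ) ξ : ℝ) : ℂ)) (-t) := by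
      intro t
      simp only [hh', hh]
      rw [heshift, hin, hs]
      ring
    simp_rw [this]
    rw [integral_const_mul, integral_neg_eq_self (fun t : ℝ => ((u (x + t • ξ) ξ : ℝ) : ℂ)) volume,
      integral_complex_ofReal]
    simp [Jt]
  constructor
  · refine hhi'.integral_prod_left.congr (Eventually.of_forall fun x => ?_)
    exact hJ x
  · calc FT u y ξ * ∫ t, w t = ∫ x, ∫ t, h (x, t) := by
          have : ∀ x : En n, ∫ t, h (x, t) = (e x * s x) * ∫ t, w t := by
            intro x
            simp only [hh, integral_const_mul]
            rw [integral_add_right_eq_self w]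
          simp_rw [this]
          rw [integral_mul_const, FT_eq]
          congr 2
          funext x
          rw [hs]; rfl
      _ = ∫ t, ∫ x, h (x, t) := by
          exact integral_integral_swap (f := fun x t => h (x, t)) hhi
      _ = ∫ t, ∫ x, h' (x, t) := by
          congr 1; funext t
          exact (integral_add_right_eq_self (fun x => h (x, t)) ((-t) • ξ)).symm
      _ = ∫ x, ∫ t, h' (x, t) := by
          exact (integral_integral_swap (f := fun x t => h' (x, t)) hhi').symm
      _ = _ := by simp_rw [hJ]; rfl

theorem FS_a {u : En n → En n → ℝ} (hu : LS u) {ξ : En n} (hξ : ‖ξ‖ = 1)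
    (h : ∀ x, Jt 0 u x ξ = 0) (y : En n) (hy : (⟪y, ξ⟫ : ℝ) = 0) : FT u y ξ = 0 := by
  obtain ⟨w, hw⟩ := exists_weight
  have := (FS_key hu hξ hy (w := fun t => (w t : ℂ)) (Complex.continuous_ofReal.comp w.continuous)
    w.integrable.ofReal).2
  rw [integral_complex_ofReal, hw] at this
  simpa [h] using this

theorem FS_b {u : En n → En n → ℝ} (hu : LS u) {ξ : En n} (hξ : ‖ξ‖ = 1)
    (h : ∀ y, (⟪y, ξ⟫ : ℝ) = 0 → FT u y ξ = 0) (x : En n) : Jt 0 u x ξ = 0 := by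
  have hξ0 : ξ ≠ 0 := ne_zero_of_norm_one hξ
  obtain ⟨w, hw⟩ := exists_weight
  set V : En n → ℂ := fun x => (w ⟪x, ξ⟫ : ℂ) * (Jt 0 u x ξ : ℂ) with hV
  have hJc : Continuous (fun x => Jt 0 u x ξ) := by
    exact continuous_iff_continuousAt.2 fun x => (J_hasFDeriv_left hu 0 x hξ0).1.continuousAt
  have hVc : Continuous V := by
    refine (Complex.continuous_ofReal.comp (w.continuous.comp ?_)).mul (Complex.continuous_ofReal.comp hJc)
    fun_prop
  have hwc : Continuous (fun t : ℝ => (w t : ℂ)) := Complex.continuous_ofReal.comp w.continuous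
  have hwi : Integrable (fun t : ℝ => (w t : ℂ)) := w.integrable.ofReal
  have hVi : Integrable V := by
    have := (FS_key hu hξ (y := 0) (by simp) hwc hwi).1
    simpa using this
  have hF : 𝓕 V = 0 := by
    funext y
    set a : ℝ := ⟪y, ξ⟫ with ha
    set y0 : En n := y - a • ξ with hy0
    have ho : (⟪y0, ξ⟫ : ℝ) = 0 := by
      rw [hy0, inner_sub_left, inner_smul_left, real_inner_self_eq_norm_sq, hξ]; simp [ha]
    have hc : Continuous fun t : ℝ => ((Real.fourierChar (-(t * a)) : Circle) : ℂ) * (w t : ℂ) := by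
      refine (continuous_subtype_val.comp (Real.continuous_fourierChar.comp ?_)).mul hwc
      fun_prop
    have hi : Integrable fun t : ℝ => ((Real.fourierChar (-(t * a)) : Circle) : ℂ) * (w t : ℂ) := by
      refine hwi.norm.mono' hc.aestronglyMeasurable (Eventually.of_forall fun t => ?_)
      rw [norm_mul, Circle.norm_coe, one_mul]
    have := (FS_key hu hξ ho hc hi).2
    rw [h y0 ho, zero_mul] at this
    rw [Real.fourier_eq, Pi.zero_apply, this]
    congr 1; funext x
    rw [hV, Circle.smul_def, smul_eq_mul]
    have e1 : -(⟪x, y⟫ : ℝ) = -(⟪x, y0⟫ : ℝ) + -((⟪x, ξ⟫ : ℝ) * a) := by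
      rw [hy0, inner_sub_right, inner_smul_right]; ring
    rw [e1, AddChar.map_add_eq_mul, Circle.coe_mul]
    ring
  have hV0 : V = 0 := by
    have := hVc.fourierInv_fourier_eq hVi (by rw [hF]; exact integrable_zero _ _ _)
    rw [← this, hF]
    funext x
    rw [Real.fourierInv_eq]; simp
  obtain ⟨t0, ht0⟩ : ∃ t0, w t0 ≠ 0 := by
    by_contra! hcon
    simp [hcon] at hw
  have h1 := congrFun hV0 (x + (t0 - ⟪x, ξ⟫) • ξ)
  have h2 : (⟪x + (t0 - ⟪x, ξ⟫) • ξ, ξ⟫ : ℝ) = t0 := by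
    rw [inner_add_left, inner_smul_left, real_inner_self_eq_norm_sq, hξ]; simp
  rw [hV] at h1
  simp only [h2, Pi.zero_apply, mul_eq_zero, Complex.ofReal_eq_zero, ht0, false_or] at h1
  rw [← h1]
  simp only [Jt, pow_zero, one_mul]
  rw [← integral_add_right_eq_self (fun t : ℝ => u (x + t • ξ) ξ) (t0 - ⟪x, ξ⟫)]
  congr 1; funext t
  congr 1
  module

/-- `FT u` vanishes on `{ξ ≠ 0, y ⟂ ξ}`. -/
def ZV {n : ℕ} (u : En n → En n → ℝ) : Prop :=
  ∀ y ξ : En n, ξ ≠ 0 → (⟪y, ξ⟫ : ℝ) = 0 → FT u y ξ = 0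

theorem unit_smul {ξ : En n} (hξ : ξ ≠ 0) : ξ = ‖ξ‖ • (‖ξ‖⁻¹ • ξ) := by
  rw [smul_smul, mul_inv_cancel₀ (norm_ne_zero_iff.2 hξ), one_smul]

theorem unit_norm {ξ : En n} (hξ : ξ ≠ 0) : ‖‖ξ‖⁻¹ • ξ‖ = 1 := by
  rw [norm_smul, norm_inv, norm_norm, inv_mul_cancel₀ (norm_ne_zero_iff.2 hξ)]

theorem ZV_iff {u : En n → En n → ℝ} {d : ℤ} (hu : LS u) (hd : Hom d u) :
    ZV u ↔ ∀ x ξ, ξ ≠ 0 → Jt 0 u x ξ = 0 := by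
  constructor
  · intro h x ξ hξ
    have h1 := unit_norm hξ
    rw [unit_smul hξ, Jt_scale hd 0 x (ne_zero_of_norm_one h1) (norm_pos_iff.2 hξ),
      FS_b hu h1 (fun y hy => h y _ (ne_zero_of_norm_one h1) hy), mul_zero]
  · intro h y ξ hξ hy
    have h1 := unit_norm hξ
    rw [unit_smul hξ, FT_Hom hd y (ne_zero_of_norm_one h1) (norm_pos_iff.2 hξ),
      FS_a hu h1 (fun x => h x _ (ne_zero_of_norm_one h1)) y (by rw [inner_smul_right, hy, mul_zero]),
      mul_zero]

theorem exists_orth (hn : 3 ≤ n) (a b : En n) :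
    ∃ z : En n, ‖z‖ = 1 ∧ (⟪a, z⟫ : ℝ) = 0 ∧ (⟪b, z⟫ : ℝ) = 0 := by
  have h1 : Module.finrank ℝ (Submodule.span ℝ ({a, b} : Set (En n))) ≤ 2 := by
    refine (finrank_span_le_card _).trans ?_
    classical
    rw [← Set.ncard_eq_toFinset_card']
    exact (Set.ncard_insert_le a {b}).trans (by simp)
  have h2 := Submodule.finrank_add_finrank_orthogonal (Submodule.span ℝ ({a, b} : Set (En n)))
  rw [finrank_euclideanSpace_fin] at h2
  have h3 : 0 < Module.finrank ℝ (Submodule.span ℝ ({a, b} : Set (En n)))ᗮ := by omega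
  have := Module.finrank_pos_iff.1 h3
  obtain ⟨z, hz⟩ := exists_ne (0 : (Submodule.span ℝ ({a, b} : Set (En n)))ᗮ)
  have hz0 : (z : En n) ≠ 0 := fun h => hz (Subtype.ext h)
  have hz' := (Submodule.mem_orthogonal _ _).1 z.2
  refine ⟨‖(z : En n)‖⁻¹ • (z : En n), unit_norm hz0, ?_, ?_⟩
  · rw [inner_smul_right, hz' a (Submodule.subset_span (by simp)), mul_zero]
  · rw [inner_smul_right, hz' b (Submodule.subset_span (by simp)), mul_zero]

end

section
variable {n : ℕ}

theorem inner_eq_sum (a b : En n) : (⟪a, b⟫ : ℝ) = ∑ i, a i * b i := by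
  rw [PiLp.inner_apply]
  refine Finset.sum_congr rfl fun i _ => ?_
  simp [mul_comm]

theorem const_line {u : En n → En n → ℝ} (hu : LS u) (hj : ∀ i j, ZV (johnOp i j u))
    {y ξ η : En n} (hy : y ≠ 0) (h1 : (⟪y, ξ⟫ : ℝ) = 0) (h2 : (⟪y, η⟫ : ℝ) = 0)
    (hne : ∀ t : ℝ, ξ + t • η ≠ 0) (t : ℝ) : FT u y (ξ + t • η) = FT u y ξ := by
  have hperp : ∀ t : ℝ, (⟪y, ξ + t • η⟫ : ℝ) = 0 := by
    intro t; rw [inner_add_right, inner_smul_right, h1, h2]; simp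
  have hder : ∀ t : ℝ, HasDerivAt (fun t : ℝ => FT u y (ξ + t • η)) 0 t := by
    intro t
    obtain ⟨L, hL, hLj⟩ := FT_deriv_xi hu y (hne t)
    have hl : HasDerivAt (fun t : ℝ => ξ + t • η) η t := by
      simpa using ((hasDerivAt_id t).smul_const η).const_add ξ
    have hc := hL.comp_hasDerivAt t hl
    have : L η = 0 := by
      rw [clm_eq_sum]
      simp only [hLj, Complex.real_smul]
      set F : Fin n → ℂ := fun j => FT (pdxi j u) y (ξ + t • η) with hF
      have hsym : ∀ i j, (y i : ℂ) * F j = y j * F i := by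
        intro i j
        have h := FT_john hu i j y (hne t)
        rw [hj i j y _ (hne t) (hperp t)] at h
        have hpi : (2 * Real.pi * Complex.I : ℂ) ≠ 0 := Complex.two_pi_I_ne_zero
        have := (mul_eq_zero.1 h.symm).resolve_left hpi
        exact sub_eq_zero.1 this
      have hyy : (∑ i, (y i : ℂ) * y i) ≠ 0 := by
        have : (⟪y, y⟫ : ℝ) ≠ 0 := by simpa using hy
        rw [inner_eq_sum] at this
        exact_mod_cast this
      have hyη : (∑ j, (y j : ℂ) * η j) = 0 := by
        have := h2
        rw [inner_eq_sum] at this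
        exact_mod_cast this
      have key : (∑ i, (y i : ℂ) * y i) * ∑ j, (η j : ℂ) * F j =
          (∑ i, (y i : ℂ) * F i) * ∑ j, (y j : ℂ) * η j := by
        simp only [Finset.sum_mul_sum]
        refine Finset.sum_congr rfl fun i _ => Finset.sum_congr rfl fun j _ => ?_
        linear_combination (y i : ℂ) * η j * hsym i j
      rw [hyη, mul_zero] at key
      exact (mul_eq_zero.1 key).resolve_left hyy
    rw [this] at hc
    exact hc
  have := is_const_of_deriv_eq_zero (fun t => (hder t).differentiableAt) (fun t => (hder t).deriv) t 0
  simpa using this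

theorem FT_lim_zero {u : En n → En n → ℝ} (hu : LS u) {ξ : En n} (hξ : ξ ≠ 0) (z : En n) :
    Tendsto (fun s : ℝ => FT u (s • z) ξ) (𝓝[≠] 0) (𝓝 (FT u 0 ξ)) := by
  obtain ⟨s, hs⟩ := hu.FTslice hξ
  simp only [← hs]
  have : Continuous fun t : ℝ => s (t • z) := s.continuous.comp (by fun_prop)
  have h := this.tendsto 0
  simp only [zero_smul] at h
  exact h.mono_left nhdsWithin_le_nhds

theorem line_ne {ξ η : En n} (hξ : ξ ≠ 0) (h : (⟪ξ, η⟫ : ℝ) = 0) (t : ℝ) : ξ + t • η ≠ 0 := by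
  intro h0
  have := congrArg (fun z => (⟪ξ, z⟫ : ℝ)) h0
  simp only [inner_add_right, inner_smul_right, h, inner_zero_right, mul_zero, add_zero] at this
  exact hξ (inner_self_eq_zero.1 this)

theorem FT_tendsto {u : En n → En n → ℝ} (hu : LS u) (y : En n) {η : En n} (hη : η ≠ 0)
    {g : ℝ → En n} {l : Filter ℝ} (hg : Tendsto g l (𝓝 η)) :
    Tendsto (fun t => FT u y (g t)) l (𝓝 (FT u y η)) := by
  obtain ⟨L, hL, -⟩ := FT_deriv_xi hu y hη
  have h := hL.continuousAt.tendsto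
  exact Tendsto.comp (g := fun ξ => FT u y ξ) h hg

theorem ofReal_tendsto_zero {g : ℝ → ℝ} (h : Tendsto g atTop (𝓝 0)) :
    Tendsto (fun t => (g t : ℂ)) atTop (𝓝 0) := by
  have := (Complex.continuous_ofReal.tendsto 0).comp h
  rwa [Complex.ofReal_zero] at this

theorem Cneg (hn : 3 ≤ n) (N : ℕ) : ∀ {e : ℤ} (_ : e < 0) {u : En n → En n → ℝ} (_ : LS u)
    (_ : Hom e u) (_ : ∀ l : List (Fin n × Fin n), l.length = N → ZV (johnIter l u)), ZV u := by
  induction N with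
  | zero => intro e he u hu hd h; exact h [] rfl
  | succ N ih =>
    intro e he u hu hd h
    have hj : ∀ i j, ZV (johnOp i j u) := by
      intro i j
      refine ih (e := e - 1) (by omega) (hu.john i j) (hd.john hu i j) ?_
      intro l hl
      rw [← johnIter_append l (i, j) u]
      exact h _ (by simp [hl])
    have hmain : ∀ y ξ : En n, y ≠ 0 → ξ ≠ 0 → (⟪y, ξ⟫ : ℝ) = 0 → FT u y ξ = 0 := by
      intro y ξ hy hξ hp
      obtain ⟨η, hη1, hη2, hη3⟩ := exists_orth hn y ξ
      have hη0 := ne_zero_of_norm_one hη1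
      have hT : Tendsto (fun t : ℝ => ((t ^ e : ℝ) : ℂ) * FT u y (t⁻¹ • ξ + η)) atTop (𝓝 (0 * FT u y η)) := by
        refine Tendsto.mul ?_ ?_
        · exact ofReal_tendsto_zero (tendsto_zpow_atTop_zero (𝕜 := ℝ) he)
        · refine FT_tendsto hu y hη0 ?_
          have := ((tendsto_inv_atTop_zero (𝕜 := ℝ)).smul_const ξ).add_const η
          simpa using this
      have hc : Tendsto (fun t : ℝ => ((t ^ e : ℝ) : ℂ) * FT u y (t⁻¹ • ξ + η)) atTop (𝓝 (FT u y ξ)) := by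
        refine tendsto_const_nhds.congr' ?_
        filter_upwards [eventually_gt_atTop 0] with t ht
        have hne : t⁻¹ • ξ + η ≠ 0 := by
          have := line_ne hη0 (η := ξ) (by rw [real_inner_comm]; exact hη3) t⁻¹
          rwa [add_comm] at this
        rw [← const_line hu hj hy hp hη2 (line_ne hξ hη3) t]
        have h2 := FT_Hom hd y hne ht
        rw [smul_add, smul_smul, mul_inv_cancel₀ ht.ne', one_smul] at h2
        rw [h2]; push_cast; rfl
      have := tendsto_nhds_unique hc hT
      simpa using this
    intro y ξ hξ hp
    by_cases hy : y = 0
    · subst hy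
      obtain ⟨z, hz1, hz2, -⟩ := exists_orth hn ξ ξ
      have hz0 := ne_zero_of_norm_one hz1
      refine tendsto_nhds_unique (FT_lim_zero hu hξ z) ?_
      refine tendsto_const_nhds.congr' ?_
      filter_upwards [self_mem_nhdsWithin] with s hs
      rw [hmain (s • z) ξ (smul_ne_zero hs hz0) hξ]
      rw [inner_smul_left, real_inner_comm, hz2, mul_zero]
    · exact hmain y ξ hy hξ hp

theorem E_const (hn : 3 ≤ n) {u : En n → En n → ℝ} (hu : LS u) (hj : ∀ i j, ZV (johnOp i j u))
    {y ξ η : En n} (hξ : ξ ≠ 0) (hη : η ≠ 0) (h1 : (⟪y, ξ⟫ : ℝ) = 0) (h2 : (⟪y, η⟫ : ℝ) = 0) :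
    FT u y ξ = FT u y η := by
  have hbase : ∀ y ξ η : En n, y ≠ 0 → (⟪y, ξ⟫ : ℝ) = 0 → (⟪y, η⟫ : ℝ) = 0 →
      (∀ t : ℝ, ξ + t • (η - ξ) ≠ 0) → FT u y η = FT u y ξ := by
    intro y ξ η hy h1 h2 hne
    have := const_line hu hj hy h1 (η := η - ξ) (by rw [inner_sub_right, h1, h2, sub_zero]) hne 1
    simpa using this
  have horth : ∀ y ξ ζ : En n, y ≠ 0 → ξ ≠ 0 → ζ ≠ 0 → (⟪y, ξ⟫ : ℝ) = 0 → (⟪y, ζ⟫ : ℝ) = 0 →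
      (⟪ξ, ζ⟫ : ℝ) = 0 → FT u y ζ = FT u y ξ := by
    intro y ξ ζ hy hξ hζ h1 h2 h3
    refine hbase y ξ ζ hy h1 h2 fun t h0 => ?_
    have e1 := congrArg (fun z => (⟪ξ, z⟫ : ℝ)) h0
    have e2 := congrArg (fun z => (⟪ζ, z⟫ : ℝ)) h0
    have h3' : (⟪ζ, ξ⟫ : ℝ) = 0 := by rw [real_inner_comm]; exact h3
    have p1 : (⟪ξ, ξ⟫ : ℝ) ≠ 0 := fun h => hξ (inner_self_eq_zero.1 h)
    have p2 : (⟪ζ, ζ⟫ : ℝ) ≠ 0 := fun h => hζ (inner_self_eq_zero.1 h)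
    simp only [inner_add_right, inner_smul_right, inner_sub_right, h3, h3', inner_zero_right] at e1 e2
    have q1 : (1 - t) * (⟪ξ, ξ⟫ : ℝ) = 0 := by linarith
    have q2 : t * (⟪ζ, ζ⟫ : ℝ) = 0 := by linarith
    have := (mul_eq_zero.1 q1).resolve_right p1
    have := (mul_eq_zero.1 q2).resolve_right p2
    linarith
  have hmain : ∀ y ξ η : En n, y ≠ 0 → ξ ≠ 0 → η ≠ 0 → (⟪y, ξ⟫ : ℝ) = 0 → (⟪y, η⟫ : ℝ) = 0 →
      FT u y ξ = FT u y η := by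
    intro y ξ η hy hξ hη h1 h2
    by_cases hne : ∀ t : ℝ, ξ + t • (η - ξ) ≠ 0
    · exact (hbase y ξ η hy h1 h2 hne).symm
    · push Not at hne
      obtain ⟨t, ht⟩ := hne
      obtain ⟨ζ, hζ1, hζ2, hζ3⟩ := exists_orth hn y ξ
      have hζ0 := ne_zero_of_norm_one hζ1
      have ht0 : t ≠ 0 := by
        rintro rfl
        simp at ht; exact hξ ht
      have hζ4 : (⟪η, ζ⟫ : ℝ) = 0 := by
        have := congrArg (fun z => (⟪z, ζ⟫ : ℝ)) ht
        simp only [inner_add_left, inner_smul_left, inner_sub_left, hζ3, inner_zero_left] at this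
        simp at this
        exact this.resolve_left ht0
      rw [← horth y ξ ζ hy hξ hζ0 h1 hζ2 hζ3, ← horth y η ζ hy hη hζ0 h2 hζ2 hζ4]
  by_cases hy : y = 0
  · subst hy
    obtain ⟨z, hz1, hz2, hz3⟩ := exists_orth hn ξ η
    have hz0 := ne_zero_of_norm_one hz1
    refine tendsto_nhds_unique (FT_lim_zero hu hξ z) ((FT_lim_zero hu hη z).congr' ?_)
    filter_upwards [self_mem_nhdsWithin] with s hs
    refine (hmain (s • z) ξ η (smul_ne_zero hs hz0) hξ hη ?_ ?_).symm
    · rw [inner_smul_left, real_inner_comm, hz2, mul_zero]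
    · rw [inner_smul_left, real_inner_comm, hz3, mul_zero]
  · exact hmain y ξ η hy hξ hη h1 h2

end

/-- The Fourier transform of `w` at `y` does not depend on `ξ`, for `ξ ⟂ y, v`. -/
def CV {n : ℕ} (v : En n) (w : En n → En n → ℝ) : Prop :=
  LS w ∧ ∀ y ξ η : En n, ξ ≠ 0 → η ≠ 0 → (⟪v, ξ⟫ : ℝ) = 0 → (⟪y, ξ⟫ : ℝ) = 0 →
    (⟪v, η⟫ : ℝ) = 0 → (⟪y, η⟫ : ℝ) = 0 → FT w y ξ = FT w y η

/-- A chosen unit vector orthogonal to `v` and `y`. -/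
def xsel {n : ℕ} (hn : 3 ≤ n) (v y : En n) : En n := Classical.choose (exists_orth hn v y)

/-- The common value. -/
def fsel {n : ℕ} (hn : 3 ≤ n) (v : En n) (w : En n → En n → ℝ) (y : En n) : ℂ :=
  FT w y (xsel hn v y)

section
variable {n : ℕ}

theorem xsel_spec (hn : 3 ≤ n) (v y : En n) : ‖xsel hn v y‖ = 1 ∧ (⟪v, xsel hn v y⟫ : ℝ) = 0 ∧
    (⟪y, xsel hn v y⟫ : ℝ) = 0 := Classical.choose_spec (exists_orth hn v y)

theorem CV.fsel_eq (hn : 3 ≤ n) {v : En n} {w : En n → En n → ℝ} (h : CV v w) {y ξ : En n}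
    (hξ : ξ ≠ 0) (h1 : (⟪v, ξ⟫ : ℝ) = 0) (h2 : (⟪y, ξ⟫ : ℝ) = 0) : fsel hn v w y = FT w y ξ := by
  obtain ⟨a, b, c⟩ := xsel_spec hn v y
  exact h.2 y _ ξ (ne_zero_of_norm_one a) hξ b c h1 h2

theorem CV.mul {v : En n} {w : En n → En n → ℝ} (h : CV v w) :
    CV v (fun x ξ => (⟪x, v⟫ : ℝ) * w x ξ) := by
  refine ⟨LS.mulLTemp (LTemp.inner_const v) h.1, fun y ξ η hξ hη h1 h2 h3 h4 => ?_⟩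
  obtain ⟨s, hs⟩ := h.1.FTslice hξ
  obtain ⟨r, hr⟩ := h.1.FTslice hη
  have e1 := FT_deriv_y h.1 hξ hs v y
  have e2 := FT_deriv_y h.1 hη hr v y
  have hl : HasDerivAt (fun t : ℝ => y + t • v) v 0 := by
    simpa using ((hasDerivAt_id (0 : ℝ)).smul_const v).const_add y
  have d1 : HasDerivAt (fun t : ℝ => s (y + t • v)) (fderiv ℝ s y v) 0 := by
    refine HasFDerivAt.comp_hasDerivAt (l := s) (f := fun t : ℝ => y + t • v) 0 ?_ hl
    simpa using (s.differentiableAt (x := y)).hasFDerivAt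
  have d2 : HasDerivAt (fun t : ℝ => r (y + t • v)) (fderiv ℝ r y v) 0 := by
    refine HasFDerivAt.comp_hasDerivAt (l := r) (f := fun t : ℝ => y + t • v) 0 ?_ hl
    simpa using (r.differentiableAt (x := y)).hasFDerivAt
  have hsr : (fun t : ℝ => s (y + t • v)) = fun t : ℝ => r (y + t • v) := by
    funext t
    rw [hs, hr]
    refine h.2 _ ξ η hξ hη h1 ?_ h3 ?_
    · rw [inner_add_left, inner_smul_left, h1, h2]; simp
    · rw [inner_add_left, inner_smul_left, h3, h4]; simp
  rw [hsr] at d1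
  have := d1.unique d2
  rw [e1, e2] at this
  exact mul_left_cancel₀ (neg_ne_zero.2 Complex.two_pi_I_ne_zero) this

theorem CV.lineDeriv (hn : 3 ≤ n) {v : En n} {w : En n → En n → ℝ} (h : CV v w) (y : En n) :
    HasLineDerivAt ℝ (fsel hn v w)
      (-(2 * Real.pi * Complex.I) * fsel hn v (fun x ξ => (⟪x, v⟫ : ℝ) * w x ξ) y) y v := by
  obtain ⟨a, b, c⟩ := xsel_spec hn v y
  have hξ := ne_zero_of_norm_one a
  obtain ⟨s, hs⟩ := h.1.FTslice hξ
  have e1 := FT_deriv_y h.1 hξ hs v y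
  have d1 : HasLineDerivAt ℝ s (fderiv ℝ s y v) y v :=
    ((s.differentiableAt (x := y)).hasFDerivAt).hasLineDerivAt v
  rw [e1] at d1
  have : (fun t : ℝ => fsel hn v w (y + t • v)) = fun t : ℝ => s (y + t • v) := by
    funext t
    rw [hs]
    refine h.fsel_eq hn hξ b ?_
    rw [inner_add_left, inner_smul_left, b, c]; simp
  unfold HasLineDerivAt at d1 ⊢
  rw [this]
  exact d1

theorem CV.continuous (hn : 3 ≤ n) {v : En n} {w : En n → En n → ℝ} (h : CV v w) :
    Continuous (fsel hn v w) := by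
  rw [continuous_iff_isClosed]
  intro S hS
  have hFc : Continuous (fun p : En n × Metric.sphere (0 : En n) 1 => FT w p.1 (p.2 : En n)) := by
    rw [continuous_iff_continuousAt]
    rintro ⟨y, ξ, hξ⟩
    have h0 : ξ ≠ 0 := ne_zero_of_norm_one (by simpa using hξ)
    have h1 := FT_continuousAt h.1 y h0
    have h2 : Continuous (fun p : En n × Metric.sphere (0 : En n) 1 => (p.1, (p.2 : En n))) := by
      fun_prop
    exact ContinuousAt.comp (g := fun p : En n × En n => FT w p.1 p.2)
      (f := fun p : En n × Metric.sphere (0 : En n) 1 => (p.1, (p.2 : En n)))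
      (x := (y, ⟨ξ, hξ⟩)) h1 h2.continuousAt
  set T : Set (En n × Metric.sphere (0 : En n) 1) :=
    {p | (⟪v, (p.2 : En n)⟫ : ℝ) = 0} ∩ ({p | (⟪p.1, (p.2 : En n)⟫ : ℝ) = 0} ∩
      (fun p : En n × Metric.sphere (0 : En n) 1 => FT w p.1 (p.2 : En n)) ⁻¹' S) with hT
  have hTc : IsClosed T := by
    refine (isClosed_eq (by fun_prop) continuous_const).inter
      ((isClosed_eq (by fun_prop) continuous_const).inter (hS.preimage hFc))
  have : Set.preimage (fsel hn v w) S = Set.image Prod.fst T := by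
    ext y
    constructor
    · intro hy
      obtain ⟨a, b, c⟩ := xsel_spec hn v y
      exact ⟨(y, ⟨xsel hn v y, by simpa using a⟩), ⟨b, c, hy⟩, rfl⟩
    · rintro ⟨⟨y', ξ, hξ⟩, ⟨h1, h2, h3⟩, rfl⟩
      have h0 : ξ ≠ 0 := ne_zero_of_norm_one (by simpa using hξ)
      change fsel hn v w y' ∈ S
      rw [h.fsel_eq hn h0 h1 h2]
      exact h3
  rw [this]
  exact isClosedMap_fst_of_compactSpace _ hTc

theorem CV.decay (hn : 3 ≤ n) {v : En n} {w : En n → En n → ℝ} (h : CV v w) (N : ℕ) :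
    ∃ K : ℝ, ∀ y, ‖y‖ ^ N * ‖fsel hn v w y‖ ≤ K := by
  obtain ⟨K, hK⟩ := FT_decay N h.1
  exact ⟨K, fun y => hK y _ (xsel_spec hn v y).1⟩

theorem CV.integrable_pow (hn : 3 ≤ n) {v : En n} {w : En n → En n → ℝ} (h : CV v w) (k : ℕ) :
    Integrable (fun y => ‖y‖ ^ k * ‖fsel hn v w y‖) := by
  obtain ⟨K, hK⟩ := h.decay hn 0
  obtain ⟨K', hK'⟩ := h.decay hn (k + (volume : Measure (En n)).integrablePower)
  exact integrable_of_le_of_pow_mul_le (C₁ := K) (C₂ := K') (by simpa using hK) hK'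
    (h.continuous hn).aestronglyMeasurable

theorem CV.integrable (hn : 3 ≤ n) {v : En n} {w : En n → En n → ℝ} (h : CV v w) :
    Integrable (fsel hn v w) := by
  have := h.integrable_pow hn 0
  simp only [pow_zero, one_mul] at this
  exact (integrable_norm_iff (h.continuous hn).aestronglyMeasurable).1 this

theorem CV.fourier_bound (hn : 3 ≤ n) {v : En n} {w : En n → En n → ℝ} (h : CV v w) :
    ∃ K : ℝ, ∀ x, ‖𝓕 (fsel hn v w) x‖ ≤ K := by
  refine ⟨∫ y, ‖fsel hn v w y‖, fun x => ?_⟩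
  rw [Real.fourier_eq]
  refine (norm_integral_le_integral_norm _).trans_eq ?_
  simp [Circle.norm_smul]

theorem CV.fourier_mul (hn : 3 ≤ n) {v : En n} {w : En n → En n → ℝ} (h : CV v w) (x : En n) :
    𝓕 (fsel hn v (fun x ξ => (⟪x, v⟫ : ℝ) * w x ξ)) x = -(⟪v, x⟫ : ℝ) * 𝓕 (fsel hn v w) x := by
  set g : En n → ℂ := fun y => ((Real.fourierChar (-(⟪y, x⟫ : ℝ)) : Circle) : ℂ) with hg
  have hgc : Continuous g := char_contL x
  have hgn : ∀ y, ‖g y‖ = 1 := fun y => Circle.norm_coe _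
  set f := fsel hn v w with hf
  set f1 := fsel hn v (fun x ξ => (⟪x, v⟫ : ℝ) * w x ξ) with hf1
  have hIntg : ∀ {f : En n → ℂ}, Continuous f → Integrable f → Integrable (fun y => f y * g y) := by
    intro f hc hi
    refine hi.norm.mono' (hc.mul hgc).aestronglyMeasurable (Eventually.of_forall fun y => ?_)
    rw [norm_mul, hgn, mul_one]
  have hdg : ∀ y, HasLineDerivAt ℝ g (-(2 * Real.pi * Complex.I) * (⟪v, x⟫ : ℝ) * g y) y v := by
    intro y
    have := (Real.hasFDerivAt_fourierChar_neg_bilinear_left (innerSL ℝ) y x).hasLineDerivAt v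
    convert! this using 1
    have e1 : ((innerSL ℝ) y) x = (⟪y, x⟫ : ℝ) := rfl
    have e2 : ((innerSL ℝ) x) v = (⟪v, x⟫ : ℝ) := real_inner_comm v x
    simp [hg, e1, e2]
    ring
  have i0 := hIntg (h.continuous hn) (h.integrable hn)
  have i1 := hIntg (h.mul.continuous hn) (h.mul.integrable hn)
  have key := integral_bilinear_hasLineDerivAt_right_eq_neg_left_of_integrable (μ := volume)
    (f := f) (f' := fun y => -(2 * Real.pi * Complex.I) * f1 y) (g := g)
    (g' := fun y => -(2 * Real.pi * Complex.I) * (⟪v, x⟫ : ℝ) * g y) (v := v)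
    (B := ContinuousLinearMap.mul ℝ ℂ)
    (by
      refine (i1.const_mul (-(2 * Real.pi * Complex.I))).congr (Eventually.of_forall fun y => ?_)
      simp only [ContinuousLinearMap.mul_apply']; ring)
    (by
      refine (i0.const_mul (-(2 * Real.pi * Complex.I) * (⟪v, x⟫ : ℝ))).congr
        (Eventually.of_forall fun y => ?_)
      simp only [ContinuousLinearMap.mul_apply']; ring)
    (by simpa only [ContinuousLinearMap.mul_apply'] using i0)
    (fun y _ => h.lineDeriv hn y) (fun y _ => hdg y)
  simp only [ContinuousLinearMap.mul_apply'] at key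
  have k1 : ∫ y, f y * (-(2 * Real.pi * Complex.I) * (⟪v, x⟫ : ℝ) * g y) =
      (-(2 * Real.pi * Complex.I) * (⟪v, x⟫ : ℝ)) * 𝓕 f x := by
    rw [Real.fourier_eq, ← integral_const_mul]
    congr 1; funext y
    rw [Circle.smul_def, smul_eq_mul]
    simp only [hg]
    ring
  have k2 : ∫ y, (-(2 * Real.pi * Complex.I) * f1 y) * g y =
      (-(2 * Real.pi * Complex.I)) * 𝓕 f1 x := by
    rw [Real.fourier_eq, ← integral_const_mul]
    congr 1; funext y
    rw [Circle.smul_def, smul_eq_mul]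
    simp only [hg]
    ring
  rw [k1, k2] at key
  have h0 : (2 * Real.pi * Complex.I : ℂ) ≠ 0 := Complex.two_pi_I_ne_zero
  refine mul_left_cancel₀ h0 ?_
  linear_combination (-1 : ℂ) * key

theorem CV.fourier_decay (hn : 3 ≤ n) {v : En n} (N : ℕ) : ∀ {w : En n → En n → ℝ} (_ : CV v w),
    ∃ K : ℝ, ∀ x, |(⟪v, x⟫ : ℝ)| ^ N * ‖𝓕 (fsel hn v w) x‖ ≤ K := by
  induction N with
  | zero => intro w h; simpa using h.fourier_bound hn
  | succ N ih =>
    intro w h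
    obtain ⟨K, hK⟩ := ih h.mul
    refine ⟨K, fun x => ?_⟩
    refine le_trans (le_of_eq ?_) (hK x)
    rw [h.fourier_mul hn, norm_mul, norm_neg, Complex.norm_real, Real.norm_eq_abs]
    ring

theorem CV.of_zero {u : En n → En n → ℝ} (h : CV 0 u) (v : En n) : CV v u :=
  ⟨h.1, fun y ξ η hξ hη _ h2 _ h4 => h.2 y ξ η hξ hη (by simp) h2 (by simp) h4⟩

theorem CV.fsel_zero (hn : 3 ≤ n) {u : En n → En n → ℝ} (h : CV 0 u) (v : En n) :
    fsel hn v u = fsel hn 0 u := by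
  funext y
  obtain ⟨a, b, c⟩ := xsel_spec hn v y
  exact (h.fsel_eq hn (ne_zero_of_norm_one a) (by simp) c).symm

theorem CV.decay0 (hn : 3 ≤ n) {u : En n → En n → ℝ} (h : CV 0 u) (N : ℕ) :
    ∃ K : ℝ, ∀ x, ‖x‖ ^ N * ‖𝓕 (fsel hn 0 u) x‖ ≤ K := by
  have h1 : ∀ j : Fin n, ∃ K : ℝ, ∀ x : En n, |x j| ^ N * ‖𝓕 (fsel hn 0 u) x‖ ≤ K := by
    intro j
    obtain ⟨K, hK⟩ := (h.of_zero (EuclideanSpace.single j 1)).fourier_decay hn N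
    refine ⟨K, fun x => ?_⟩
    have := hK x
    rw [h.fsel_zero hn] at this
    simpa [EuclideanSpace.inner_single_left] using this
  choose K hK using h1
  refine ⟨(n : ℝ) ^ N * ∑ j, |K j|, fun x => ?_⟩
  have : Nonempty (Fin n) := ⟨⟨0, by omega⟩⟩
  obtain ⟨j, hj⟩ := Finite.exists_max (fun j => |x j|)
  have hx : ‖x‖ ≤ n * |x j| := by
    refine (norm_le_sum_abs x).trans ((Finset.sum_le_card_nsmul _ _ _ fun i _ => hj i).trans_eq ?_)
    simp
  calc ‖x‖ ^ N * ‖𝓕 (fsel hn 0 u) x‖ ≤ (n * |x j|) ^ N * ‖𝓕 (fsel hn 0 u) x‖ := by gcongr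
    _ = (n : ℝ) ^ N * (|x j| ^ N * ‖𝓕 (fsel hn 0 u) x‖) := by ring
    _ ≤ (n : ℝ) ^ N * ∑ j, |K j| := by
        gcongr
        refine ((hK j x).trans (le_abs_self _)).trans ?_
        exact Finset.single_le_sum (f := fun j => |K j|) (fun i _ => abs_nonneg _) (Finset.mem_univ j)

theorem CV.pdx {u : En n → En n → ℝ} (h : CV 0 u) (j : Fin n) : CV 0 (fun x ξ => (-1) * pdx j u x ξ) := by
  refine ⟨(h.1.pdx j).const_mul (-1), fun y ξ η hξ hη h1 h2 h3 h4 => ?_⟩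
  rw [FT_mul (fun _ => -1), FT_mul (fun _ => -1), FT_pdx h.1 j y hξ, FT_pdx h.1 j y hη,
    h.2 y ξ η hξ hη h1 h2 h3 h4]

theorem E_base (hn : 3 ≤ n) {u : En n → En n → ℝ} (h : CV 0 u) :
    ∃ s : 𝓢(En n, ℂ), ∀ y ξ : En n, ξ ≠ 0 → (⟪y, ξ⟫ : ℝ) = 0 → s y = FT u y ξ := by
  have hA : ∀ p N : ℕ, ContDiff ℝ N (𝓕 (fsel hn 0 u)) ∧
      ∃ K : ℝ, ∀ y, ‖y‖ ^ p * ‖iteratedFDeriv ℝ N (𝓕 (fsel hn 0 u)) y‖ ≤ K := by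
    intro p N
    refine principleA {g | ∃ u : En n → En n → ℝ, CV 0 u ∧ g = 𝓕 (fsel hn 0 u)} ?_ p ?_ N _ ⟨u, h, rfl⟩
    · rintro g ⟨u, h, rfl⟩
      refine ⟨_, fun y => Real.hasFDerivAt_fourier (h.integrable hn)
        (by simpa using h.integrable_pow hn 1) y, fun j => ⟨_, h.pdx j, ?_⟩⟩
      funext x
      have hi : Integrable (VectorFourier.fourierSMulRight (innerSL ℝ) (fsel hn 0 u)) := by
        refine ((h.integrable_pow hn 1).const_mul (2 * Real.pi)).mono'
          (h.integrable hn).1.fourierSMulRight (Eventually.of_forall fun y => ?_)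
        rw [VectorFourier.norm_fourierSMulRight, innerSL_apply_norm, pow_one, mul_assoc]
      rw [Real.fourier_eq, Real.fourier_eq, ContinuousLinearMap.integral_apply]
      · congr 1; funext y
        obtain ⟨a, b, c⟩ := xsel_spec hn 0 y
        have h1 : fsel hn 0 (fun x ξ => (-1) * _root_.pdx j u x ξ) y
            = -(2 * Real.pi * Complex.I) * y j * fsel hn 0 u y := by
          unfold fsel
          rw [FT_mul (fun _ => -1), FT_pdx h.1 j y (ne_zero_of_norm_one a)]
          push_cast
          ring
        rw [h1]
        simp only [Circle.smul_def, smul_apply, VectorFourier.fourierSMulRight_apply,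
          smul_eq_mul, Complex.real_smul]
        have e3 : ((innerSL ℝ) y) (EuclideanSpace.single j 1) = y j := by
          change (⟪y, EuclideanSpace.single j 1⟫ : ℝ) = y j
          simp [EuclideanSpace.inner_single_right]
        simp [e3, mul_assoc]
      · exact (Real.fourierIntegral_convergent_iff x).2 hi
    · rintro g ⟨u, h, rfl⟩
      exact h.decay0 hn p
  let G : 𝓢(En n, ℂ) := ⟨𝓕 (fsel hn 0 u), contDiff_infty.2 fun N => (hA 0 N).1, fun p N => (hA p N).2⟩
  have hG : (G : En n → ℂ) = 𝓕 (fsel hn 0 u) := rfl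
  have hinv := (h.continuous hn).fourierInv_fourier_eq (h.integrable hn) (by rw [← hG]; exact G.integrable)
  refine ⟨𝓕⁻ G, fun y ξ hξ hy => ?_⟩
  rw [← h.fsel_eq hn hξ (by simp) hy, ← hinv, SchwartzMap.fourierInv_coe, hG]

end

/-- Radial averaging. -/
def Av {n : ℕ} (c : ℕ) (f : 𝓢(En n, ℂ)) (y : En n) : ℂ := ∫ t in (0 : ℝ)..1, t ^ c • f (t • y)

section
variable {n : ℕ}

theorem Av_cont (c : ℕ) (f : 𝓢(En n, ℂ)) (y : En n) : Continuous fun t : ℝ => t ^ c • f (t • y) := by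
  have h : Continuous fun t : ℝ => f (t • y) :=
    f.continuous.comp (f := fun t : ℝ => t • y) (by fun_prop)
  exact (continuous_pow c).smul h

theorem Av_deriv (c : ℕ) (f : 𝓢(En n, ℂ)) (y : En n) :
    ∃ L : En n →L[ℝ] ℂ, HasFDerivAt (Av c f) L y ∧ ∀ v, L v = Av (c + 1) (dS ℂ v f) y := by
  set F' : En n → ℝ → (En n →L[ℝ] ℂ) := fun y t => t ^ (c + 1) • fderiv ℝ f (t • y) with hF'
  have hcf : Continuous (fderiv ℝ f) := (f.smooth 1).continuous_fderiv (by simp)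
  have hF'c : Continuous (F' y) := by
    have h : Continuous fun t : ℝ => fderiv ℝ f (t • y) :=
      hcf.comp (f := fun t : ℝ => t • y) (by fun_prop)
    exact (continuous_pow (c + 1)).smul h
  obtain ⟨K, hK0, hK⟩ := schwartz_bound (SchwartzMap.fderivCLM ℝ _ _ f) 0
  simp only [pow_zero, one_mul, SchwartzMap.fderivCLM_apply] at hK
  have key := intervalIntegral.hasFDerivAt_integral_of_dominated_of_fderiv_le (𝕜 := ℝ) (μ := volume)
    (F := fun (y : En n) (t : ℝ) => t ^ c • f (t • y)) (F' := F') (x₀ := y) (s := Set.univ)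
    (bound := fun _ => K) (a := 0) (b := 1) univ_mem
    (Eventually.of_forall fun y => (Av_cont c f y).aestronglyMeasurable)
    ((Av_cont c f y).intervalIntegrable _ _) hF'c.aestronglyMeasurable
    (Eventually.of_forall fun t ht y _ => by
      rw [Set.uIoc_of_le zero_le_one] at ht
      rw [hF', norm_smul]
      have h1 : ‖t ^ (c + 1)‖ ≤ 1 := by
        rw [Real.norm_eq_abs, abs_of_nonneg (pow_nonneg ht.1.le _)]
        exact pow_le_one₀ ht.1.le ht.2
      calc _ ≤ 1 * K := mul_le_mul h1 (hK _) (norm_nonneg _) zero_le_one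
        _ = K := one_mul _)
    (by simp)
    (Eventually.of_forall fun t ht y _ => by
      have h1 : HasFDerivAt (fun y : En n => t • y) (t • ContinuousLinearMap.id ℝ (En n)) y :=
        (hasFDerivAt_id y).const_smul t
      have h2 : HasFDerivAt f (fderiv ℝ f (t • y)) (t • y) :=
        (f.differentiableAt (x := t • y)).hasFDerivAt
      have h3 := (HasFDerivAt.comp y h2 h1).const_smul (t ^ c)
      convert! h3 using 1
      ext v
      simp [hF', pow_succ, smul_smul, mul_assoc])
  refine ⟨_, key, fun v => ?_⟩
  rw [ContinuousLinearMap.intervalIntegral_apply (hF'c.intervalIntegrable _ _)]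
  unfold Av
  congr 1

theorem Av_bound (c : ℕ) (f : 𝓢(En n, ℂ)) : ∃ K : ℝ, ∀ y, ‖Av c f y‖ ≤ K := by
  obtain ⟨K, hK0, hK⟩ := schwartz_bound f 0
  simp only [pow_zero, one_mul] at hK
  refine ⟨K, fun y => ?_⟩
  have := intervalIntegral.norm_integral_le_of_norm_le_const (a := 0) (b := 1) (C := K)
    (f := fun t : ℝ => t ^ c • f (t • y)) (fun t ht => by
      rw [Set.uIoc_of_le zero_le_one] at ht
      rw [norm_smul]
      have h1 : ‖t ^ c‖ ≤ 1 := by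
        rw [Real.norm_eq_abs, abs_of_nonneg (pow_nonneg ht.1.le _)]
        exact pow_le_one₀ ht.1.le ht.2
      calc _ ≤ 1 * K := mul_le_mul h1 (hK _) (norm_nonneg _) zero_le_one
        _ = K := one_mul _)
  simpa [Av] using this

theorem Av_tg (c : ℕ) (f : 𝓢(En n, ℂ)) : (Av c f).HasTemperateGrowth := by
  have hA : ∀ N : ℕ, ContDiff ℝ N (Av c f) ∧
      ∃ K : ℝ, ∀ y, ‖y‖ ^ 0 * ‖iteratedFDeriv ℝ N (Av c f) y‖ ≤ K := by
    intro N
    refine principleA {g | ∃ c, ∃ f : 𝓢(En n, ℂ), g = Av c f} ?_ 0 ?_ N _ ⟨c, f, rfl⟩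
    · rintro g ⟨c, f, rfl⟩
      choose L hL hL' using Av_deriv c f
      exact ⟨L, hL, fun j => ⟨c + 1, _, funext fun y => hL' y _⟩⟩
    · rintro g ⟨c, f, rfl⟩
      simpa using Av_bound c f
  refine ⟨contDiff_infty.2 fun N => (hA N).1, fun N => ?_⟩
  obtain ⟨K, hK⟩ := (hA N).2
  exact ⟨0, K, by simpa using hK⟩

theorem Av_add (c : ℕ) (f g : 𝓢(En n, ℂ)) (y : En n) : Av c (f + g) y = Av c f y + Av c g y := by
  unfold Av
  rw [← intervalIntegral.integral_add ((Av_cont c f y).intervalIntegrable _ _)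
    ((Av_cont c g y).intervalIntegrable _ _)]
  simp [mul_add]

theorem Av_smul (c : ℕ) (a : ℝ) (f : 𝓢(En n, ℂ)) (y : En n) : Av c (a • f) y = a • Av c f y := by
  unfold Av
  rw [← intervalIntegral.integral_smul]
  congr 1; funext t
  rw [smul_apply, smul_comm]

theorem Av_sum {ι : Type*} (S : Finset ι) (c : ℕ) (f : ι → 𝓢(En n, ℂ)) (y : En n) :
    Av c (∑ i ∈ S, f i) y = ∑ i ∈ S, Av c (f i) y := by
  classical
  induction S using Finset.induction_on with
  | empty => simp [Av]
  | insert a S ha ih => rw [Finset.sum_insert ha, Finset.sum_insert ha, Av_add, ih]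

theorem Av_euler (c : ℕ) (s h : 𝓢(En n, ℂ)) (y : En n)
    (hh : ∀ t : ℝ, h (t • y) = (c + 1 : ℕ) * s (t • y) + fderiv ℝ s (t • y) (t • y)) :
    Av c h y = s y := by
  have hd : ∀ t : ℝ, HasDerivAt (fun t : ℝ => t ^ (c + 1) • s (t • y)) (t ^ c • h (t • y)) t := by
    intro t
    have hl : HasDerivAt (fun t : ℝ => t • y) y t := by
      simpa using (hasDerivAt_id t).smul_const y
    have h2 : HasFDerivAt s (fderiv ℝ s (t • y)) (t • y) :=
      (s.differentiableAt (x := t • y)).hasFDerivAt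
    have h3 : HasDerivAt (fun t : ℝ => s (t • y)) (fderiv ℝ s (t • y) y) t :=
      h2.comp_hasDerivAt t hl
    have h4 := (hasDerivAt_pow (c + 1) t).smul h3
    convert! h4 using 1
    rw [hh, (fderiv ℝ s (t • y)).map_smul]
    simp only [Complex.real_smul, Nat.add_sub_cancel]
    push_cast
    ring
  have := intervalIntegral.integral_eq_sub_of_hasDerivAt (a := 0) (b := 1) (fun t _ => hd t)
    ((Av_cont c h y).intervalIntegrable _ _)
  unfold Av
  rw [this]; simp

theorem Av_ftc (s : 𝓢(En n, ℂ)) (y : En n) :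
    ∑ i, (y i : ℂ) * Av 0 (dS ℂ (EuclideanSpace.single i 1) s) y = s y - s 0 := by
  have hd : ∀ t : ℝ, HasDerivAt (fun t : ℝ => s (t • y))
      (∑ i, (y i : ℂ) * (t ^ 0 • dS ℂ (EuclideanSpace.single i 1) s (t • y))) t := by
    intro t
    have hl : HasDerivAt (fun t : ℝ => t • y) y t := by
      simpa using (hasDerivAt_id t).smul_const y
    have h2 : HasFDerivAt s (fderiv ℝ s (t • y)) (t • y) :=
      (s.differentiableAt (x := t • y)).hasFDerivAt
    have h3 : HasDerivAt (fun t : ℝ => s (t • y)) (fderiv ℝ s (t • y) y) t :=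
      h2.comp_hasDerivAt t hl
    rw [clm_eq_sum] at h3
    simpa [dS_fderiv] using h3
  have hi : ∀ i, Continuous fun t : ℝ => (y i : ℂ) * (t ^ 0 • dS ℂ (EuclideanSpace.single i 1) s (t • y)) :=
    fun i => (Av_cont 0 _ y).const_mul _
  have := intervalIntegral.integral_eq_sub_of_hasDerivAt (a := 0) (b := 1) (fun t _ => hd t)
    ((continuous_finset_sum _ fun i _ => hi i).intervalIntegrable _ _)
  rw [intervalIntegral.integral_finset_sum (fun i _ => (hi i).intervalIntegrable _ _)] at this
  simp only [intervalIntegral.integral_const_mul] at this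
  simp only [one_smul, zero_smul] at this
  exact this

/-- The operator `f ↦ χ · Av c f`. -/
def TA (χ : 𝓢(En n, ℂ)) (c : ℕ) : 𝓢(En n, ℂ) →ₗ[ℝ] 𝓢(En n, ℂ) where
  toFun f := SchwartzMap.smulLeftCLM ℂ (Av c f) χ
  map_add' f g := by
    ext y
    rw [add_apply, SchwartzMap.smulLeftCLM_apply_apply (Av_tg c _),
      SchwartzMap.smulLeftCLM_apply_apply (Av_tg c _),
      SchwartzMap.smulLeftCLM_apply_apply (Av_tg c _), Av_add, add_smul]
  map_smul' a f := by
    ext y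
    rw [smul_apply, SchwartzMap.smulLeftCLM_apply_apply (Av_tg c _),
      SchwartzMap.smulLeftCLM_apply_apply (Av_tg c _), Av_smul]
    simp [mul_assoc]

theorem TA_apply (χ : 𝓢(En n, ℂ)) (c : ℕ) (f : 𝓢(En n, ℂ)) (y : En n) :
    TA χ c f y = Av c f y * χ y := by
  change SchwartzMap.smulLeftCLM ℂ (Av c f) χ y = _
  rw [SchwartzMap.smulLeftCLM_apply_apply (Av_tg c _), smul_eq_mul]

/-- Multiplication by `Av 0 χ`. -/
def TB (χ : 𝓢(En n, ℂ)) : 𝓢(En n, ℂ) →ₗ[ℝ] 𝓢(En n, ℂ) where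
  toFun f := SchwartzMap.smulLeftCLM ℂ (Av 0 χ) f
  map_add' f g := by rw [map_add]
  map_smul' a f := by
    ext y
    rw [smul_apply, SchwartzMap.smulLeftCLM_apply_apply (Av_tg 0 _),
      SchwartzMap.smulLeftCLM_apply_apply (Av_tg 0 _), smul_apply, RingHom.id_apply, smul_comm]

theorem TB_apply (χ f : 𝓢(En n, ℂ)) (y : En n) : TB χ f y = Av 0 χ y * f y := by
  change SchwartzMap.smulLeftCLM ℂ (Av 0 χ) f y = _
  rw [SchwartzMap.smulLeftCLM_apply_apply (Av_tg 0 _), smul_eq_mul]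

theorem exists_chi : ∃ χ : 𝓢(En n, ℂ), χ 0 = 1 := by
  let b : ContDiffBump (0 : En n) := ⟨1, 2, by norm_num, by norm_num⟩
  refine ⟨SchwartzMap.postcompCLM (𝕜 := ℝ) Complex.ofRealCLM
    (b.hasCompactSupport.toSchwartzMap b.contDiff), ?_⟩
  have : b 0 = 1 := b.one_of_mem_closedBall (by simp [b])
  simp [this]

end

section
variable {n : ℕ}

theorem key_div {ξ : En n} (hξ : ξ ≠ 0) (r : 𝓢(En n, ℂ)) (rj : Fin n → 𝓢(En n, ℂ))
    (h : Fin n → Fin n → 𝓢(En n, ℂ)) (D : ℂ)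
    (he : ∀ y, ∑ j, (ξ j : ℂ) * rj j y = D * r y)
    (ha : ∀ i j y, h i j y = - h j i y)
    (hZ : ∀ i j y, (⟪y, ξ⟫ : ℝ) = 0 → h i j y = (y i : ℂ) * rj j y - (y j : ℂ) * rj i y)
    {y : En n} (hy : (⟪y, ξ⟫ : ℝ) = 0) :
    ∑ i, ∑ j, (ξ j : ℂ) * fderiv ℝ (h i j) y (EuclideanSpace.single i 1) =
      D * (((n : ℂ) - 1) * r y + fderiv ℝ r y y) := by
  classical
  have hder : ∀ (s : 𝓢(En n, ℂ)) (v : En n), HasDerivAt (fun t : ℝ => s (y + t • v)) (fderiv ℝ s y v) 0 := by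
    intro s v
    have hl : HasDerivAt (fun t : ℝ => y + t • v) v 0 := by
      simpa using ((hasDerivAt_id (0 : ℝ)).smul_const v).const_add y
    have h2 : HasFDerivAt s (fderiv ℝ s y) (y + (0 : ℝ) • v) := by
      rw [zero_smul, add_zero]; exact (s.differentiableAt (x := y)).hasFDerivAt
    exact h2.comp_hasDerivAt (0 : ℝ) hl
  have hcoord : ∀ (v : En n) (i : Fin n),
      HasDerivAt (fun t : ℝ => (((y + t • v) i : ℝ) : ℂ)) (v i : ℂ) 0 := by
    intro v i
    have : HasDerivAt (fun t : ℝ => (y + t • v) i) (v i) 0 := by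
      simpa using ((hasDerivAt_id (0 : ℝ)).mul_const (v i)).const_add (y i)
    exact this.ofReal_comp
  set W : Fin n → Fin n → En n → ℂ := fun i j v => fderiv ℝ (h i j) y v -
    ((v i : ℂ) * rj j y + (y i : ℂ) * fderiv ℝ (rj j) y v -
      ((v j : ℂ) * rj i y + (y j : ℂ) * fderiv ℝ (rj i) y v)) with hWdef
  have hW0 : ∀ i j v, (⟪v, ξ⟫ : ℝ) = 0 → W i j v = 0 := by
    intro i j v hv
    have h1 := (hder (h i j) v).sub ((((hcoord v i).mul (hder (rj j) v))).sub
      ((hcoord v j).mul (hder (rj i) v)))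
    have h2 : HasDerivAt (fun _ : ℝ => (0 : ℂ)) 0 0 := hasDerivAt_const _ _
    have h3 := h1.unique (by
      convert! h2 using 1
      funext t
      have : (⟪y + t • v, ξ⟫ : ℝ) = 0 := by rw [inner_add_left, inner_smul_left, hy, hv]; simp
      simp only [Pi.sub_apply, Pi.mul_apply]
      rw [hZ i j _ this]; ring)
    simpa [hWdef] using h3
  have hWlin : ∀ i j a b (c : ℝ), W i j (a - c • b) = W i j a - c * W i j b := by
    intro i j a b c
    simp only [hWdef, map_sub, ContinuousLinearMap.map_smul, Complex.real_smul, PiLp.sub_apply, PiLp.smul_apply, smul_eq_mul]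
    push_cast; ring
  have hanti : ∀ i j v, W i j v = - W j i v := by
    intro i j v
    have : (h i j : En n → ℂ) = fun z => - h j i z := funext fun z => ha i j z
    simp only [hWdef]
    rw [this, fderiv_fun_neg]
    simp only [ContinuousLinearMap.neg_apply]; ring
  have hn0 : (⟪ξ, ξ⟫ : ℝ) ≠ 0 := by simpa using hξ
  have hWe : ∀ i j, W i j (EuclideanSpace.single i 1) = ((ξ i / ⟪ξ, ξ⟫ : ℝ) : ℂ) * W i j ξ := by
    intro i j
    have h1 := hW0 i j (EuclideanSpace.single i 1 - (ξ i / ⟪ξ, ξ⟫ : ℝ) • ξ) (by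
      rw [inner_sub_left, inner_smul_left]
      simp only [EuclideanSpace.inner_single_left, map_one, one_mul, conj_trivial]
      field_simp; ring)
    rw [hWlin] at h1
    exact sub_eq_zero.1 h1
  have hS : ∑ i, ∑ j, (ξ j : ℂ) * W i j (EuclideanSpace.single i 1) = 0 := by
    have e1 : ∑ i, ∑ j, (ξ j : ℂ) * W i j (EuclideanSpace.single i 1)
        = ∑ i, ∑ j, (ξ j : ℂ) * ((ξ i / ⟪ξ, ξ⟫ : ℝ) : ℂ) * W i j ξ :=
      Finset.sum_congr rfl fun i _ => Finset.sum_congr rfl fun j _ => by rw [hWe, mul_assoc]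
    have e2 : ∑ i, ∑ j, (ξ j : ℂ) * ((ξ i / ⟪ξ, ξ⟫ : ℝ) : ℂ) * W i j ξ
        = - ∑ i, ∑ j, (ξ j : ℂ) * ((ξ i / ⟪ξ, ξ⟫ : ℝ) : ℂ) * W i j ξ := by
      conv_lhs => rw [Finset.sum_comm]
      rw [← Finset.sum_neg_distrib]
      refine Finset.sum_congr rfl fun i _ => ?_
      rw [← Finset.sum_neg_distrib]
      refine Finset.sum_congr rfl fun j _ => ?_
      rw [hanti j i]; push_cast; ring
    rw [e1]
    have := self_eq_neg.1 e2
    exact this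
  have hed : ∀ v, ∑ j, (ξ j : ℂ) * fderiv ℝ (rj j) y v = D * fderiv ℝ r y v := by
    intro v
    have h1 := HasDerivAt.fun_sum (u := Finset.univ) fun j _ => (hder (rj j) v).const_mul (ξ j : ℂ)
    have h2 := (hder r v).const_mul D
    refine h1.unique (by
      convert! h2 using 1
      funext t
      exact he _)
  have hyx : ∑ j, (ξ j : ℂ) * (y j : ℂ) = 0 := by
    rw [inner_eq_sum] at hy
    rw [← Complex.ofReal_zero, ← hy]; push_cast
    exact Finset.sum_congr rfl fun j _ => by ring
  have hexp : ∀ i, ∑ j, (ξ j : ℂ) * fderiv ℝ (h i j) y (EuclideanSpace.single i 1)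
      = ∑ j, (ξ j : ℂ) * W i j (EuclideanSpace.single i 1) + D * r y
        + (y i : ℂ) * (D * fderiv ℝ r y (EuclideanSpace.single i 1)) - (ξ i : ℂ) * rj i y := by
    intro i
    have e3 : ∀ j, (ξ j : ℂ) * fderiv ℝ (h i j) y (EuclideanSpace.single i 1)
      = (ξ j : ℂ) * W i j (EuclideanSpace.single i 1) + (ξ j : ℂ) * rj j y
        + (y i : ℂ) * ((ξ j : ℂ) * fderiv ℝ (rj j) y (EuclideanSpace.single i 1))
        - (if i = j then (ξ j : ℂ) * rj i y else 0)
        - ((ξ j : ℂ) * (y j : ℂ)) * fderiv ℝ (rj i) y (EuclideanSpace.single i 1) := by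
      intro j
      have : (((EuclideanSpace.single i (1:ℝ) : En n) j : ℝ) : ℂ) = if i = j then 1 else 0 := by
        by_cases hij : i = j
        · subst hij; simp
        · simp [hij, Ne.symm hij]
      have h1i : (((EuclideanSpace.single i (1:ℝ) : En n) i : ℝ) : ℂ) = 1 := by simp
      simp only [hWdef, this, h1i]
      split_ifs <;> ring
    rw [Finset.sum_congr rfl fun j _ => e3 j]
    simp only [Finset.sum_sub_distrib, Finset.sum_add_distrib]
    rw [← Finset.sum_mul, hyx, ← Finset.mul_sum, hed, he]
    simp
  rw [Finset.sum_congr rfl fun i _ => hexp i]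
  simp only [Finset.sum_sub_distrib, Finset.sum_add_distrib]
  rw [hS, he, clm_eq_sum (fderiv ℝ r y) y]
  simp only [Complex.real_smul, Finset.sum_const, Finset.card_univ, Fintype.card_fin, nsmul_eq_mul]
  have : ∑ x, (y x : ℂ) * (D * fderiv ℝ r y (EuclideanSpace.single x 1))
     = D * ∑ x, (y x : ℂ) * fderiv ℝ r y (EuclideanSpace.single x 1) := by
    rw [Finset.mul_sum]; exact Finset.sum_congr rfl fun j _ => by ring
  rw [this]; ring

end

section
variable {n : ℕ}

/-- Multiplication by a complex constant as a real-linear map. -/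
def cm (a : ℂ) : 𝓢(En n, ℂ) →ₗ[ℝ] 𝓢(En n, ℂ) where
  toFun f := a • f
  map_add' f g := smul_add a f g
  map_smul' c f := by rw [RingHom.id_apply, smul_comm]

theorem cm_apply (a : ℂ) (f : 𝓢(En n, ℂ)) (y : En n) : cm a f y = a * f y := rfl

theorem schw_sum_apply {F : Type} [NormedAddCommGroup F] [NormedSpace ℝ F] {ι : Type*}
    (S : Finset ι) (f : ι → 𝓢(En n, F)) (y : En n) :
    (∑ i ∈ S, f i) y = ∑ i ∈ S, f i y := by
  classical
  induction S using Finset.induction_on with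
  | empty => simp
  | insert a S ha ih => rw [Finset.sum_insert ha, Finset.sum_insert ha, ← ih]; rfl

theorem four_zero (hn : 3 ≤ n) (N : ℕ) {u : En n → En n → ℝ} (hu : LS u)
    (hd : Hom 0 u) (h : ∀ l : List (Fin n × Fin n), l.length = N + 1 → ZV (johnIter l u)) :
    ∃ s : En n → 𝓢(En n, ℂ), PolF 0 s ∧ ∀ y ξ, ξ ≠ 0 → (⟪y, ξ⟫ : ℝ) = 0 → s ξ y = FT u y ξ := by
  have hj : ∀ i j, ZV (johnOp i j u) := by
    intro i j
    refine Cneg hn N (e := 0 - 1) (by omega) (hu.john i j) (hd.john hu i j) ?_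
    intro l hl
    have := h (l ++ [(i, j)]) (by simp [hl])
    rwa [johnIter_append] at this
  obtain ⟨s, hs⟩ := E_base hn (u := u)
    ⟨hu, fun y ξ η hξ hη _ h1 _ h2 => E_const hn hu hj hξ hη h1 h2⟩
  exact ⟨fun _ => s, PolF.base s, fun y ξ hξ hy => hs y ξ hξ hy⟩

theorem four (hn : 3 ≤ n) (d : ℕ) : ∀ (N : ℕ) (_ : d + 1 ≤ N) {u : En n → En n → ℝ} (_ : LS u)
    (_ : Hom d u) (_ : ∀ l : List (Fin n × Fin n), l.length = N → ZV (johnIter l u)),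
    ∃ s : En n → 𝓢(En n, ℂ), PolF d s ∧ ∀ y ξ, ξ ≠ 0 → (⟪y, ξ⟫ : ℝ) = 0 → s ξ y = FT u y ξ := by
  induction d with
  | zero =>
    intro N hN u hu hd h
    obtain ⟨N, rfl⟩ : ∃ M, N = M + 1 := ⟨N - 1, by omega⟩
    exact four_zero hn N hu (by simpa using hd) h
  | succ d ih =>
    intro N hN u hu hd h
    obtain ⟨N, rfl⟩ : ∃ M, N = M + 1 := ⟨N - 1, by omega⟩
    have hP : ∀ i j, ∃ s : En n → 𝓢(En n, ℂ), PolF d s ∧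
        ∀ y ξ, ξ ≠ 0 → (⟪y, ξ⟫ : ℝ) = 0 → s ξ y = FT (johnOp i j u) y ξ := by
      intro i j
      refine ih N (by omega) (hu.john i j) ?_ ?_
      · have := hd.john hu i j
        have e : (((d + 1 : ℕ) : ℤ) - 1) = (d : ℤ) := by push_cast; ring
        rwa [e] at this
      · intro l hl
        have := h (l ++ [(i, j)]) (by simp [hl])
        rwa [johnIter_append] at this
    choose P hPp hPz using hP
    obtain ⟨χ, hχ⟩ := exists_chi (n := n)
    set D : ℂ := ((d + 1 : ℕ) : ℂ) with hD
    have hD0 : D ≠ 0 := Nat.cast_ne_zero.2 (by omega)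
    set e : Fin n → En n := fun i => EuclideanSpace.single i 1 with he
    set a : ℂ := (2 * (2 * Real.pi * Complex.I))⁻¹ with ha
    set H : Fin n → Fin n → En n → 𝓢(En n, ℂ) := fun i j ξ => cm a (P i j ξ - P j i ξ) with hH
    have hHp : ∀ i j, PolF d (H i j) := fun i j => ((hPp i j).sub (hPp j i)).map (cm a)
    set c : En n → 𝓢(En n, ℂ) := fun ξ => cm D⁻¹ (∑ i, ∑ j, ξ j •
      (TA χ (n - 2) (dS ℂ (e i) (H i j ξ)) - TB (dS ℂ (e i) χ) (H i j ξ))) with hc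
    refine ⟨c, ?_, ?_⟩
    · have h1 : ∀ i j, PolF (d + 1) (fun ξ : En n => ξ j •
          (TA χ (n - 2) (dS ℂ (e i) (H i j ξ)) - TB (dS ℂ (e i) χ) (H i j ξ))) := fun i j =>
        PolF.mul j ((((hHp i j).map (dS ℂ (e i))).map (TA χ (n - 2))).sub
          ((hHp i j).map (TB (dS ℂ (e i) χ))))
      have h2 := PolF.sum Finset.univ fun i => PolF.sum Finset.univ fun j => h1 i j
      exact h2.map (cm D⁻¹)
    · intro y ξ hξ hy
      obtain ⟨r, hr⟩ := hu.FTslice hξ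
      have hrj : ∀ j, ∃ s : 𝓢(En n, ℂ), ∀ y, s y = FT (pdxi j u) y ξ := fun j =>
        (hu.pdxi j).FTslice hξ
      choose rj hrj using hrj
      have hEu : ∀ y, ∑ j, (ξ j : ℂ) * rj j y = D * r y := by
        intro y
        simp only [hrj, hr]
        rw [FT_euler hu hd y hξ]; simp [hD]
      have hanti : ∀ i j y, H i j ξ y = - H j i ξ y := by
        intro i j y
        simp only [hH, cm_apply, sub_apply]; ring
      have hZ : ∀ i j y, (⟪y, ξ⟫ : ℝ) = 0 →
          H i j ξ y = (y i : ℂ) * rj j y - (y j : ℂ) * rj i y := by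
        intro i j y hy
        simp only [hH, cm_apply, sub_apply]
        rw [hPz i j y ξ hξ hy, hPz j i y ξ hξ hy, FT_john hu i j y hξ, FT_john hu j i y hξ,
          ← hrj, ← hrj, ha]
        have := Complex.two_pi_I_ne_zero
        field_simp
        ring
      have hA : ∑ i, ∑ j, (ξ j : ℂ) * Av (n - 2) (dS ℂ (e i) (H i j ξ)) y = D * r y := by
        have h1 := Av_euler (n - 2) r (cm D⁻¹ (∑ i, ∑ j, ξ j • dS ℂ (e i) (H i j ξ))) y (by
          intro t
          have ht : (⟪t • y, ξ⟫ : ℝ) = 0 := by rw [inner_smul_left, hy]; simp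
          have hk := key_div hξ r rj (fun i j => H i j ξ) D hEu hanti hZ ht
          rw [cm_apply, schw_sum_apply]
          simp only [schw_sum_apply, smul_apply, dS_fderiv, Complex.real_smul]
          rw [hk]
          have e2 : ((n - 2 + 1 : ℕ) : ℂ) = (n : ℂ) - 1 := by
            have : n - 2 + 1 = n - 1 := by omega
            rw [this, Nat.cast_sub (by omega)]; simp
          rw [e2]
          field_simp)
        have h2 : Av (n - 2) (cm D⁻¹ (∑ i, ∑ j, ξ j • dS ℂ (e i) (H i j ξ))) y =
            D⁻¹ * ∑ i, ∑ j, (ξ j : ℂ) * Av (n - 2) (dS ℂ (e i) (H i j ξ)) y := by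
          have h3 : ∀ f : 𝓢(En n, ℂ), Av (n - 2) (cm D⁻¹ f) y = D⁻¹ * Av (n - 2) f y := by
            intro f
            unfold Av
            rw [← intervalIntegral.integral_const_mul]
            congr 1; funext t
            rw [cm_apply]; simp only [Complex.real_smul]; ring
          rw [h3, Av_sum]
          simp only [Av_sum, Av_smul, Complex.real_smul]
        rw [h2] at h1
        rw [← h1]; field_simp
      have hyx : ∑ j, (ξ j : ℂ) * (y j : ℂ) = 0 := by
        rw [inner_eq_sum] at hy
        rw [← Complex.ofReal_zero, ← hy]; push_cast
        exact Finset.sum_congr rfl fun j _ => by ring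
      have hB : ∀ i, ∑ j, (ξ j : ℂ) * H i j ξ y = (y i : ℂ) * (D * r y) := by
        intro i
        have : ∀ j, (ξ j : ℂ) * H i j ξ y = (y i : ℂ) * ((ξ j : ℂ) * rj j y) -
            ((ξ j : ℂ) * (y j : ℂ)) * rj i y := by
          intro j; rw [hZ i j y hy]; ring
        rw [Finset.sum_congr rfl fun j _ => this j, Finset.sum_sub_distrib, ← Finset.mul_sum,
          ← Finset.sum_mul, hyx, hEu]; ring
      have hC := Av_ftc χ y
      rw [hχ] at hC
      have hval : c ξ y = D⁻¹ * ((∑ i, ∑ j, (ξ j : ℂ) * Av (n - 2) (dS ℂ (e i) (H i j ξ)) y) * χ y -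
          ∑ i, Av 0 (dS ℂ (e i) χ) y * ∑ j, (ξ j : ℂ) * H i j ξ y) := by
        simp only [hc, cm_apply, schw_sum_apply, smul_apply, sub_apply, TA_apply, TB_apply,
          Complex.real_smul, Finset.sum_mul, Finset.mul_sum, ← Finset.sum_sub_distrib]
        refine Finset.sum_congr rfl fun i _ => Finset.sum_congr rfl fun j _ => by ring
      have hB' : ∑ i, Av 0 (dS ℂ (e i) χ) y * ∑ j, (ξ j : ℂ) * H i j ξ y
          = (χ y - 1) * (D * r y) := by
        rw [← hC, Finset.sum_mul]
        exact Finset.sum_congr rfl fun i _ => by rw [hB]; simp only [he]; ring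
      rw [hval, hA, hB', ← hr]
      field_simp
      ring

end

section
variable {n : ℕ}

/-- Real part of the inverse Fourier transform, as a real-linear map. -/
def invRe : 𝓢(En n, ℂ) →ₗ[ℝ] 𝓢(En n, ℝ) where
  toFun f := SchwartzMap.postcompCLM (𝕜 := ℝ) Complex.reCLM (𝓕⁻ f)
  map_add' f g := by rw [FourierTransform.fourierInv_add, map_add]
  map_smul' c f := by rw [FourierTransform.fourierInv_smul, map_smul, RingHom.id_apply]

theorem invRe_apply (f : 𝓢(En n, ℂ)) (x : En n) : invRe f x = ((𝓕⁻ f : 𝓢(En n, ℂ)) x).re := rfl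

theorem fourier_re (f : 𝓢(En n, ℂ)) (y : En n) :
    𝓕 (fun x => ((f x).re : ℂ)) y = (1 / 2) * ((𝓕 f) y + (starRingEnd ℂ) ((𝓕 f) (-y))) := by
  have hi : ∀ y : En n, Integrable (fun x => Real.fourierChar (-(⟪x, y⟫ : ℝ)) • f x) := fun y =>
    (Real.fourierIntegral_convergent_iff y).2 f.integrable
  have hc : (starRingEnd ℂ) ((𝓕 f) (-y)) =
      ∫ x, Real.fourierChar (-(⟪x, y⟫ : ℝ)) • (starRingEnd ℂ) (f x) := by
    rw [SchwartzMap.fourier_coe, Real.fourier_eq, ← integral_conj]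
    congr 1; funext x
    simp only [Circle.smul_def, smul_eq_mul, map_mul, inner_neg_right]
    congr 1
    rw [← Circle.coe_inv_eq_conj, ← AddChar.map_neg_eq_inv, neg_neg]
  have hi2 : Integrable (fun x => Real.fourierChar (-(⟪x, y⟫ : ℝ)) • (starRingEnd ℂ) (f x)) :=
    (Real.fourierIntegral_convergent_iff y).2
      (Complex.conjCLE.toContinuousLinearMap.integrable_comp f.integrable)
  rw [hc, SchwartzMap.fourier_coe, Real.fourier_eq, Real.fourier_eq, ← integral_add (hi y) hi2,
    ← integral_const_mul]
  congr 1; funext x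
  rw [← smul_add, Complex.add_conj]
  simp only [Circle.smul_def, smul_eq_mul]
  push_cast; ring

theorem FT_conj {u : En n → En n → ℝ} (hu : LS u) {ξ : En n} (hξ : ξ ≠ 0) (y : En n) :
    (starRingEnd ℂ) (FT u (-y) ξ) = FT u y ξ := by
  obtain ⟨s, hs⟩ := hu.cslice hξ
  have h := fourier_re s y
  have : (fun x => ((s x).re : ℂ)) = s := by funext x; rw [hs]; simp
  rw [this, ← SchwartzMap.fourier_coe] at h
  rw [FT_slice hs, FT_slice hs]
  linear_combination -2 * h

theorem FT_invRe (s : En n → 𝓢(En n, ℂ)) (y ξ : En n) :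
    FT (ev fun ξ => invRe (s ξ)) y ξ = (1 / 2) * (s ξ y + (starRingEnd ℂ) (s ξ (-y))) := by
  have := fourier_re (𝓕⁻ (s ξ)) y
  rw [FourierTransform.fourier_fourierInv_eq] at this
  exact this

theorem Hom_johnIter {u : En n → En n → ℝ} {d : ℤ} (hu : LS u) (hd : Hom d u)
    (l : List (Fin n × Fin n)) : Hom (d - l.length) (johnIter l u) := by
  induction l with
  | nil => simpa [johnIter] using hd
  | cons a l ih =>
    have := ih.john (hu.johnIter l) a.1 a.2
    have e : (d - (l.length : ℤ) - 1) = d - ((a :: l).length : ℤ) := by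
      rw [List.length_cons]; push_cast; ring
    rw [e] at this
    exact this

theorem range_zero (hn : 3 ≤ n) {d N : ℕ} (hN : d + 1 ≤ N) {v : En n → En n → ℝ} (hv : LS v)
    (hd : Hom d v) (h : ∀ l : List (Fin n × Fin n), l.length = N →
      ∀ x ξ, ξ ≠ 0 → Jt 0 (johnIter l v) x ξ = 0) :
    ∃ p : En n → 𝓢(En n, ℝ), PolF d p ∧ ∀ x ξ, ξ ≠ 0 → Jt 0 (ev p) x ξ = Jt 0 v x ξ := by
  obtain ⟨s, hs, hsz⟩ := four hn d N hN hv hd fun l hl =>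
    (ZV_iff (hv.johnIter l) (Hom_johnIter hv hd l)).2 (h l hl)
  have hp := hs.map (invRe (n := n))
  refine ⟨fun ξ => invRe (s ξ), hp, ?_⟩
  have hz : ZV (fun x ξ => ev (fun ξ => invRe (s ξ)) x ξ - v x ξ) := by
    intro y ξ hξ hy
    rw [FT_sub hp.LS hv y hξ, FT_invRe, hsz y ξ hξ hy, hsz (-y) ξ hξ (by rw [inner_neg_left, hy, neg_zero]),
      FT_conj hv hξ]
    ring
  have := (ZV_iff (hp.LS.sub hv) (hp.Hom.sub hd)).1 hz
  intro x ξ hξ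
  have h1 := this x ξ hξ
  rw [Jt_sub hp.LS hv 0 x hξ] at h1
  exact sub_eq_zero.1 h1

theorem johnIter_sub_of {u v : En n → En n → ℝ} (hu : LS u) (hv : LS v)
    (l : List (Fin n × Fin n)) : ∀ (x : En n) (ξ : En n), ξ ≠ 0 →
    johnIter l (fun x ξ => u x ξ - v x ξ) x ξ = johnIter l u x ξ - johnIter l v x ξ := by
  induction l with
  | nil => exact fun _ _ _ => rfl
  | cons a l ih =>
    intro x ξ hξ
    refine (johnOp_congr ih a.1 a.2 x hξ).trans ?_
    have key : ∀ (i j : Fin n) {u v : En n → En n → ℝ}, LS u → LS v →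
        ∀ x ξ, ξ ≠ 0 → pdx i (pdxi j fun x ξ => u x ξ - v x ξ) x ξ
          = pdx i (pdxi j u) x ξ - pdx i (pdxi j v) x ξ := by
      intro i j u v hu hv x ξ hξ
      have e1 : ∀ x, pdxi j (fun x ξ => u x ξ - v x ξ) x ξ = pdxi j u x ξ - pdxi j v x ξ := by
        intro x
        unfold pdxi
        rw [fderiv_fun_sub (hu.diff_right hξ x) (hv.diff_right hξ x)]; rfl
      unfold pdx
      simp_rw [e1]
      rw [fderiv_fun_sub ((hu.pdxi j).diff_left hξ x) ((hv.pdxi j).diff_left hξ x)]; rfl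
    change _ = johnOp a.1 a.2 (johnIter l u) x ξ - johnOp a.1 a.2 (johnIter l v) x ξ
    simp only [johnOp]
    rw [key a.1 a.2 (hu.johnIter l) (hv.johnIter l) x ξ hξ,
      key a.2 a.1 (hu.johnIter l) (hv.johnIter l) x ξ hξ]
    ring

end

section
variable {n : ℕ}

theorem Jt_congr_slice {u v : En n → En n → ℝ} (q : ℕ) (x ξ : En n) (h : ∀ x, u x ξ = v x ξ) :
    Jt q u x ξ = Jt q v x ξ := by
  unfold Jt; simp only [h]

theorem approx (hn : 3 ≤ n) {m k : ℕ} (hkm : k ≤ m) {U : En n → En n → ℝ} (hU : LS U)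
    (hUd : Hom m U) (hJ : ∀ l : List (Fin n × Fin n), l.length = m + 1 →
      ∀ r ≤ k, ∀ x ξ, ξ ≠ 0 → Jt r (johnIter l U) x ξ = 0) (ℓ : ℕ) (hℓ : ℓ ≤ k + 1) :
    ∃ P : En n → 𝓢(En n, ℝ), PolF m P ∧
      ∀ r < ℓ, ∀ x ξ, ξ ≠ 0 → Jt r U x ξ = Jt r (ev P) x ξ := by
  induction ℓ with
  | zero => exact ⟨fun _ => 0, PolF.zero m, by simp⟩
  | succ ℓ ih =>
    obtain ⟨P, hP, hPr⟩ := ih (by omega)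
    set g : En n → En n → ℝ := fun x ξ => U x ξ - ev P x ξ with hg
    have hgL : LS g := hU.sub hP.LS
    have hgH : Hom m g := hUd.sub hP.Hom
    have hg0 : ∀ r < ℓ, ∀ x ξ, ξ ≠ 0 → Jt r g x ξ = 0 := by
      intro r hr x ξ hξ
      rw [hg, Jt_sub hU hP.LS r x hξ, hPr r hr x ξ hξ, sub_self]
    have hw : ∀ x ξ, ξ ≠ 0 → Jt 0 (wt ℓ g) x ξ = Jt ℓ g x ξ := by
      intro x ξ hξ
      rw [J_wt g ℓ x hξ, Jt_shift hgL ℓ x hξ, Finset.sum_range_succ, Finset.sum_eq_zero]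
      · simp
      · intro r hr
        rw [hg0 r (Finset.mem_range.1 hr) x ξ hξ, mul_zero]
    have hwH : Hom ((m - ℓ : ℕ) : ℤ) (wt ℓ g) := by
      have := wt_Hom hgH ℓ
      rwa [← Nat.cast_sub (by omega)] at this
    have hwL := wt_LS hgL ℓ
    obtain ⟨p, hp, hpJ⟩ := range_zero hn (d := m - ℓ) (N := m + 1) (by omega) hwL hwH (by
      intro l hl x ξ hξ
      rw [← johnIter_J hwL 0 l x ξ hξ, johnIter_congr hw l x ξ hξ, johnIter_J hgL ℓ l x ξ hξ]
      rw [Jt_congr_slice (v := johnIter l U) ℓ x ξ fun x => by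
        rw [johnIter_sub_of hU hP.LS l x ξ hξ, hP.johnIter l (by omega), sub_zero]]
      exact hJ l hl ℓ (by omega) x ξ hξ)
    set c : ℝ := (-1) ^ ℓ / (ℓ.factorial : ℝ) with hc
    have hp' := hp.smul c
    obtain ⟨s, hs, hsD⟩ := hp'.Dx_iter ℓ
    rw [Nat.sub_add_cancel (by omega)] at hs
    refine ⟨fun ξ => P ξ + s ξ, hP.add hs, ?_⟩
    intro r hr x ξ hξ
    have e1 : Jt r (ev fun ξ => P ξ + s ξ) x ξ = Jt r (ev P) x ξ + Jt r (ev s) x ξ :=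
      Jt_add hP.LS hs.LS r x hξ
    rw [e1, ← hsD, (J_Dx_iter hp'.LS ℓ r x hξ).2]
    rcases Nat.lt_or_ge r ℓ with hrl | hrl
    · rw [hPr r hrl x ξ hξ, Nat.descFactorial_of_lt hrl]; simp
    · obtain rfl : r = ℓ := by omega
      have e2 : Jt 0 (ev fun ξ => c • p ξ) x ξ = c * Jt 0 (ev p) x ξ :=
        Jt_const_mul (ev p) c 0 x ξ
      rw [Nat.descFactorial_self, Nat.sub_self, e2, hpJ x ξ hξ, hw x ξ hξ, hg,
        Jt_sub hU hP.LS r x hξ, hc]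
      have e : ((-1 : ℝ) ^ r) * (-1) ^ r = 1 := by rw [← mul_pow]; simp
      have : (r.factorial : ℝ) ≠ 0 := by positivity
      field_simp
      linear_combination -(Jt r U x ξ - Jt r (ev P) x ξ) * e

theorem exists_field {m : ℕ} {P : En n → 𝓢(En n, ℝ)} (hP : PolF m P) :
    ∃ f : (Fin m → Fin n) → En n → ℝ, IsSchwartzField f ∧ IsSymField f ∧
      ∀ q x ξ, momRT q f x ξ = Jt q (ev P) x ξ := by
  obtain ⟨a, ha⟩ := hP.array
  set F : (Fin m → Fin n) → 𝓢(En n, ℝ) := fun I =>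
    ((m.factorial : ℝ))⁻¹ • ∑ π : Equiv.Perm (Fin m), a (I ∘ π) with hF
  have hFa : ∀ I x, F I x = ((m.factorial : ℝ))⁻¹ * ∑ π : Equiv.Perm (Fin m), a (I ∘ π) x := by
    intro I x
    simp only [hF, smul_apply, schw_sum_apply, smul_eq_mul]
  refine ⟨fun I => F I, fun I => ⟨F I, rfl⟩, ?_, ?_⟩
  · intro σ I
    funext x
    change F (I ∘ σ) x = F I x
    rw [hFa, hFa]
    congr 1
    exact Equiv.sum_comp (Equiv.mulLeft σ) (fun π : Equiv.Perm (Fin m) => a (I ∘ π) x)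
  · intro q x ξ
    unfold momRT Jt
    congr 1; funext t
    congr 1
    simp only [ev, ha, schw_sum_apply, smul_apply, smul_eq_mul, hFa]
    have h1 : ∀ (π : Equiv.Perm (Fin m)) (z : En n), ∑ I : Fin m → Fin n, a (I ∘ π) z * ∏ r, ξ (I r)
        = ∑ I : Fin m → Fin n, (∏ r, ξ (I r)) * a I z := by
      intro π z
      rw [← Equiv.sum_comp (Equiv.arrowCongr π.symm (Equiv.refl (Fin n)))
        (fun I : Fin m → Fin n => (∏ r, ξ (I r)) * a I z)]
      refine Finset.sum_congr rfl fun I _ => ?_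
      have h2 : (Equiv.arrowCongr π.symm (Equiv.refl (Fin n))) I = I ∘ π := by
        funext r; simp [Equiv.arrowCongr]
      rw [h2, mul_comm]
      congr 1
      exact (Equiv.prod_comp π (fun r => ξ (I r))).symm
    simp only [Finset.mul_sum, Finset.sum_mul]
    rw [Finset.sum_comm]
    have h3 : ∀ π : Equiv.Perm (Fin m), ∑ I : Fin m → Fin n,
        ((m.factorial : ℝ))⁻¹ * a (I ∘ π) (x + t • ξ) * ∏ r, ξ (I r)
        = ((m.factorial : ℝ))⁻¹ * ∑ I : Fin m → Fin n, (∏ r, ξ (I r)) * a I (x + t • ξ) := by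
      intro π
      rw [← h1 π, Finset.mul_sum]
      exact Finset.sum_congr rfl fun I _ => by ring
    rw [Finset.sum_congr rfl fun π _ => h3 π, Finset.sum_const, Finset.card_univ,
      Fintype.card_perm, Fintype.card_fin, nsmul_eq_mul, ← mul_assoc,
      mul_inv_cancel₀ (by positivity), one_mul]

theorem sufficiency {m k : ℕ} (hn : 3 ≤ n) (hkm : k ≤ m)
    (φ : ℕ → En n → En n → ℝ) (hφ : ∀ ℓ, ℓ ≤ k → IsSchwartzOnTS (φ ℓ))
    (h : ∀ idx jdx : Fin (m + 1) → Fin n, ∀ x ξ : En n, ξ ≠ 0 →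
        johnIter ((List.finRange (m + 1)).map (fun s => (idx s, jdx s)))
          (fun x' ξ' => ‖ξ'‖ ^ ((m : ℤ) - 2 * k - 1) *
            ∑ r ∈ Finset.range (k + 1),
              (-1 : ℝ) ^ (k - r) * (k.choose r) * ‖ξ'‖ ^ r * (⟪ξ', x'⟫ : ℝ) ^ (k - r) *
                φ r (x' - ((⟪x', ξ'⟫ : ℝ) / ‖ξ'‖ ^ 2) • ξ') (‖ξ'‖⁻¹ • ξ'))
          x ξ = 0) :
    ∃ f : (Fin m → Fin n) → En n → ℝ, IsSchwartzField f ∧ IsSymField f ∧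
      ∀ ℓ, ℓ ≤ k → ∀ x ξ : En n, ‖ξ‖ = 1 → (⟪x, ξ⟫ : ℝ) = 0 → φ ℓ x ξ = momRT ℓ f x ξ := by
  obtain ⟨U, hU, hUd, hUr⟩ := exists_lift m φ (k + 1) fun ℓ hℓ => hφ ℓ (by omega)
  have hψ := psi_eq hU hUd k φ fun r hr => hUr r (by omega)
  have hJ : ∀ l : List (Fin n × Fin n), l.length = m + 1 →
      ∀ r ≤ k, ∀ x ξ, ξ ≠ 0 → Jt r (johnIter l U) x ξ = 0 := by
    intro l hl
    refine J_zero_descend (hU.johnIter l) k ?_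
    intro x ξ hξ
    have hl' : (List.finRange (m + 1)).map
        (fun s => ((l.get (s.cast hl.symm)).1, (l.get (s.cast hl.symm)).2)) = l := by
      apply List.ext_get
      · simp [hl]
      · intro i h1 h2; simp
    have h1 := h (fun s => (l.get (s.cast hl.symm)).1) (fun s => (l.get (s.cast hl.symm)).2) x ξ hξ
    rw [hl', johnIter_congr hψ l x ξ hξ, johnIter_J hU k l x ξ hξ] at h1
    exact h1
  obtain ⟨P, hP, hPr⟩ := approx hn hkm hU hUd hJ (k + 1) le_rfl
  obtain ⟨f, hf1, hf2, hf3⟩ := exists_field hP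
  refine ⟨f, hf1, hf2, fun ℓ hℓ x ξ h1 h2 => ?_⟩
  rw [hUr ℓ (by omega) x ξ h1 h2, hPr ℓ (by omega) x ξ (ne_zero_of_norm_one h1), hf3]

end

end

/-- range characterization of `𝓘^k = (I^0,…,I^k)` on Schwartz
symmetric `m`-tensor fields (n ≥ 3, 1 ≤ k ≤ m).  A tuple
`(φ⁰,…,φ^k) ∈ 𝒮(TSⁿ⁻¹)^{k+1}` (encoded as `φ : ℕ → …` used for indices `≤ k`)
is in the range iff (1) the parity conditions hold, and (2) the function `ψ^k`
built from the tuple satisfies the iterated John equations. -/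
theorem momRT_range_characterization
    (n m k : ℕ) (hn : 3 ≤ n) (hk1 : 1 ≤ k) (hkm : k ≤ m)
    (φ : ℕ → En n → En n → ℝ) (hφ : ∀ ℓ, ℓ ≤ k → IsSchwartzOnTS (φ ℓ)) :
    (∃ f : (Fin m → Fin n) → En n → ℝ, IsSchwartzField f ∧ IsSymField f ∧
      ∀ ℓ, ℓ ≤ k → ∀ x ξ : En n, ‖ξ‖ = 1 → ⟪x, ξ⟫ = 0 → φ ℓ x ξ = momRT ℓ f x ξ) ↔
    ((∀ ℓ, ℓ ≤ k → ∀ x ξ : En n, ‖ξ‖ = 1 → ⟪x, ξ⟫ = 0 →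
        φ ℓ x (-ξ) = (-1 : ℝ) ^ (m - ℓ) * φ ℓ x ξ) ∧
      (∀ idx jdx : Fin (m + 1) → Fin n, ∀ x ξ : En n, ξ ≠ 0 →
        johnIter ((List.finRange (m + 1)).map (fun s => (idx s, jdx s)))
          (fun x' ξ' => ‖ξ'‖ ^ ((m : ℤ) - 2 * k - 1) *
            ∑ r ∈ Finset.range (k + 1),
              (-1 : ℝ) ^ (k - r) * (k.choose r) * ‖ξ'‖ ^ r * (⟪ξ', x'⟫ : ℝ) ^ (k - r) *
                φ r (x' - ((⟪x', ξ'⟫ : ℝ) / ‖ξ'‖ ^ 2) • ξ') (‖ξ'‖⁻¹ • ξ'))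
          x ξ = 0)) := by
  constructor
  · rintro ⟨f, hf, _, h⟩
    exact necessity hkm φ f hf h
  · rintro ⟨_, h⟩
    exact sufficiency hn hkm φ hφ h
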